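/- arXiv:2503.05903 — 3 statements merged into one kernel-verified Lean document; each statement's English description precedes it below -/
import Mathlib

section
/- Let n∈ℕ, p∈(1,∞) and s∈(0,1) with sp/(p−1)>1, and let Ω⊆ℝⁿ be a bounded open set. Let u:ℝⁿ→ℝ be a local weak solution of (−Δ_p)^s u = f in Ω with f∈L^{p/(p−1)}_loc(Ω), and assume in addition that u is continuously differentiable on Ω. Then there exists a constant c = c(n,p,s) such that for every ball B_{2R}(x_o) whose closure is contained in Ω, writing p' = p/(p−1), one has ‖∇u‖_{L^p(B_R(x_o))} ≤ (c/R)[ R^s [u]_{W^{s,p}(B_{2R}(x_o))} + R^{n/p} Tail(u−(u)_{B_{2R}(x_o)}; B_{2R}(x_o)) + R^{sp'} (∫_{B_{2R}(x_o)} |f|^{p'} dx)^{1/(p(p−1)/p') · 0 + 1/(p'(p−1))} ], where the last factor is ‖f‖_{L^{p'}(B_{2R}(x_o))}^{1/(p−1)}. -/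
open MeasureTheory Metric Set
open scoped ENNReal

noncomputable section

/-- Double Gagliardo integral `∬_{D×D} |u(x)-u(y)|^p / |x-y|^{n+sp} dx dy` in `ℝ≥0∞`. -/
def gagliardoE (n : ℕ) (s p : ℝ) (D : Set (EuclideanSpace ℝ (Fin n)))
    (u : EuclideanSpace ℝ (Fin n) → ℝ) : ℝ≥0∞ :=
  ∫⁻ x in D, ∫⁻ y in D, ENNReal.ofReal (|u x - u y| ^ p / dist x y ^ ((n : ℝ) + s * p))

/-- Nonlocal tail `Tail(u; B_R(x₀))` in `ℝ≥0∞`. -/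
def tailE (n : ℕ) (s p : ℝ) (u : EuclideanSpace ℝ (Fin n) → ℝ)
    (x₀ : EuclideanSpace ℝ (Fin n)) (R : ℝ) : ℝ≥0∞ :=
  (ENNReal.ofReal (R ^ (s * p)) *
      ∫⁻ x in (ball x₀ R)ᶜ,
        ENNReal.ofReal (|u x| ^ (p - 1) / dist x x₀ ^ ((n : ℝ) + s * p))) ^ (1 / (p - 1))

/-- `f ∈ L^q_loc(D)`. -/
def MemLploc (n : ℕ) (q : ℝ) (D : Set (EuclideanSpace ℝ (Fin n)))
    (f : EuclideanSpace ℝ (Fin n) → ℝ) : Prop :=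
  Measurable f ∧
    ∀ K : Set (EuclideanSpace ℝ (Fin n)), K ⊆ D → IsCompact K →
      (∫⁻ x in K, ENNReal.ofReal (|f x| ^ q)) < ⊤

/-- `u` is a local weak solution of `(-Δ_p)^s u = f` in `D`. -/
def IsLocalWeakSolution (n : ℕ) (p s : ℝ) (D : Set (EuclideanSpace ℝ (Fin n)))
    (f u : EuclideanSpace ℝ (Fin n) → ℝ) : Prop :=
  Measurable u ∧
  (∀ K : Set (EuclideanSpace ℝ (Fin n)), K ⊆ D → IsCompact K →
      (∫⁻ x in K, ENNReal.ofReal (|u x| ^ p)) < ⊤ ∧ gagliardoE n s p K u < ⊤) ∧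
  (∫⁻ x, ENNReal.ofReal (|u x| ^ (p - 1) / (1 + ‖x‖) ^ ((n : ℝ) + s * p))) < ⊤ ∧
  ∀ φ : EuclideanSpace ℝ (Fin n) → ℝ, Measurable φ →
    (∃ K : Set (EuclideanSpace ℝ (Fin n)), IsCompact K ∧ K ⊆ D ∧
      ∀ᵐ x, x ∉ K → φ x = 0) →
    (∫⁻ x, ENNReal.ofReal (|φ x| ^ p)) < ⊤ →
    gagliardoE n s p Set.univ φ < ⊤ →
    (∫ x, ∫ y,
        |u x - u y| ^ (p - 2) * (u x - u y) * (φ x - φ y) / dist x y ^ ((n : ℝ) + s * p)) =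
      ∫ x in D, f x * φ x

/-- The signed `γ`-power `𝐚^γ = |a|^{γ-1} a`. -/
def sgnPow (γ a : ℝ) : ℝ := |a| ^ (γ - 1) * a

section
open MeasureTheory Metric Set
open scoped ENNReal NNReal


/-- Euclidean space. -/
abbrev EE (n : ℕ) := EuclideanSpace ℝ (Fin n)

/-- The monotone map `a ↦ |a|^(p-2) a`. -/
def Jp (p a : ℝ) : ℝ := |a| ^ (p - 2) * a

lemma Jp_abs {p : ℝ} (hp : 1 < p) (a : ℝ) : |Jp p a| = |a| ^ (p - 1) := by
  unfold Jp
  rw [abs_mul, abs_of_nonneg (Real.rpow_nonneg (abs_nonneg a) _)]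
  by_cases h : a = 0
  · subst h; simp [Real.zero_rpow (by linarith : p - 1 ≠ 0)]
  · have : 0 < |a| := abs_pos.mpr h
    nth_rewrite 2 [← Real.rpow_one |a|]
    rw [← Real.rpow_add this]; ring_nf

lemma Jp_neg (p a : ℝ) : Jp p (-a) = - Jp p a := by simp [Jp]

lemma Jp_of_nonneg {p : ℝ} (hp : 1 < p) {a : ℝ} (ha : 0 ≤ a) : Jp p a = a ^ (p - 1) := by
  have := Jp_abs hp a
  rwa [abs_of_nonneg, abs_of_nonneg ha] at this
  unfold Jp; positivity

lemma Jp_measurable (p : ℝ) : Measurable (Jp p) := by unfold Jp; fun_prop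

/-- The inequality in the case `|b| ≤ a`. -/
lemma mono_aux {p : ℝ} (hp : 1 < p) {a b τ : ℝ} (hb : |b| ≤ a) (hτ : 0 < τ) (hτ1 : τ ≤ 1) :
    0 ≤ (Jp p a - Jp p b) * (a - b) ∧
    |a - b| ^ p ≤ (2 ^ p + 1 / (p - 1)) *
      (τ⁻¹ * ((Jp p a - Jp p b) * (a - b)) + τ * (|a| + |b|) ^ p) := by
  have ha : 0 ≤ a := (abs_nonneg b).trans hb
  have hba : b ≤ a := (le_abs_self b).trans hb
  have hab : 0 ≤ a - b := by linarith
  have h2p : (1:ℝ) ≤ 2 ^ p := Real.one_le_rpow (by norm_num) (by linarith)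
  have hp1 : 0 < p - 1 := by linarith
  have hC1 : 2 ^ p ≤ (2:ℝ) ^ p + 1 / (p - 1) := by have := one_div_pos.mpr hp1; linarith
  have hC2 : 1 / (p - 1) ≤ (2:ℝ) ^ p + 1 / (p - 1) := by linarith
  have hC3 : 1 ≤ (2:ℝ) ^ p + 1 / (p - 1) := by linarith
  have hτi : 1 ≤ τ⁻¹ := (one_le_inv₀ hτ).mpr hτ1
  rw [abs_of_nonneg hab, abs_of_nonneg ha]
  have hS : 0 ≤ τ * (a + |b|) ^ p := by positivity
  -- a reduction
  have red : ∀ X c : ℝ, 0 ≤ X → 0 ≤ c → c ≤ (2:ℝ) ^ p + 1 / (p - 1) → (a - b) ^ p ≤ c * X →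
      (a - b) ^ p ≤ (2 ^ p + 1 / (p - 1)) * (τ⁻¹ * X + τ * (a + |b|) ^ p) := by
    intro X c hX hc hcC h
    refine h.trans ?_
    have : X ≤ τ⁻¹ * X + τ * (a + |b|) ^ p := by nlinarith
    exact mul_le_mul hcC this hX (by linarith)
  rw [Jp_of_nonneg hp ha]
  have hsplit : (a - b) ^ p = (a - b) ^ (p - 1) * (a - b) := by
    by_cases h0 : a - b = 0
    · rw [h0, Real.zero_rpow (by linarith)]; simp
    · have : 0 < a - b := lt_of_le_of_ne hab (Ne.symm h0)
      nth_rewrite 3 [← Real.rpow_one (a - b)]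
      rw [← Real.rpow_add this]; ring_nf
  rcases le_total b 0 with hb0 | hb0
  · have hJ : Jp p b ≤ 0 := by
      unfold Jp; exact mul_nonpos_of_nonneg_of_nonpos (by positivity) hb0
    have hX : a ^ (p - 1) * (a - b) ≤ (a ^ (p - 1) - Jp p b) * (a - b) :=
      mul_le_mul_of_nonneg_right (by linarith) hab
    have hX0 : 0 ≤ a ^ (p - 1) * (a - b) := by positivity
    refine ⟨hX0.trans hX, red _ (2 ^ p) (hX0.trans hX) (by positivity) hC1 ?_⟩
    rw [hsplit]
    have h1 : (a - b) ^ (p - 1) ≤ (2 * a) ^ (p - 1) :=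
      Real.rpow_le_rpow hab (by rw [abs_of_nonpos hb0] at hb; linarith) hp1.le
    rw [Real.mul_rpow (by norm_num) ha] at h1
    have h2 : (2:ℝ) ^ (p - 1) ≤ 2 ^ p := Real.rpow_le_rpow_of_exponent_le (by norm_num) (by linarith)
    have h3 : 0 ≤ a ^ (p - 1) := by positivity
    calc (a - b) ^ (p - 1) * (a - b) ≤ (2 ^ p * a ^ (p - 1)) * (a - b) := by
          apply mul_le_mul_of_nonneg_right _ hab; nlinarith
      _ = 2 ^ p * (a ^ (p - 1) * (a - b)) := by ring
      _ ≤ _ := by gcongr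
  · rw [Jp_of_nonneg hp hb0]
    have hX0 : 0 ≤ (a ^ (p - 1) - b ^ (p - 1)) * (a - b) :=
      mul_nonneg (sub_nonneg.mpr (Real.rpow_le_rpow hb0 hba hp1.le)) hab
    refine ⟨hX0, ?_⟩
    rcases le_total 2 p with h2 | h2
    · apply red _ 1 hX0 zero_le_one hC3
      rw [hsplit, one_mul]
      apply mul_le_mul_of_nonneg_right _ hab
      have := Real.add_rpow_le_rpow_add hab hb0 (by linarith : 1 ≤ p - 1)
      simp only [sub_add_cancel] at this
      linarith
    · rcases eq_or_lt_of_le ha with ha0 | ha0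
      · have : b = 0 := by linarith
        subst this; rw [← ha0]; simp only [sub_self]; rw [Real.zero_rpow (by linarith)]
        positivity
      · -- concavity
        set t := (a - b) / a with ht
        have ht0 : 0 ≤ t := by positivity
        have ht1 : t ≤ 1 := by rw [ht, div_le_one ha0]; linarith
        have hbt : b = a * (1 - t) := by rw [ht]; field_simp; ring
        have habt : a - b = a * t := by rw [ht]; field_simp
        have hcon : (1 - t) ^ (p - 1) ≤ 1 - (p - 1) * t := by
          have := rpow_one_add_le_one_add_mul_self (s := -t) (by linarith) hp1.le (by linarith : p - 1 ≤ 1)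
          have h' : (1 + -t) = 1 - t := by ring
          rw [h'] at this; linarith
        have hap : 0 < a ^ p := by positivity
        have haa : a ^ (p - 1) * a = a ^ p := by
          nth_rewrite 2 [← Real.rpow_one a]
          rw [← Real.rpow_add ha0]; ring_nf
        have hXl : (p - 1) * t ^ 2 * a ^ p ≤ (a ^ (p - 1) - b ^ (p - 1)) * (a - b) := by
          rw [habt, hbt, Real.mul_rpow ha (by linarith), ← haa]
          have h3 : 0 ≤ a ^ (p - 1) := by positivity
          have h4 : a ^ (p - 1) * ((p - 1) * t) ≤ a ^ (p - 1) * (1 - (1 - t) ^ (p - 1)) :=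
            mul_le_mul_of_nonneg_left (by linarith) h3
          calc _ = a ^ (p - 1) * ((p - 1) * t) * (a * t) := by ring
            _ ≤ a ^ (p - 1) * (1 - (1 - t) ^ (p - 1)) * (a * t) := by
                apply mul_le_mul_of_nonneg_right h4; positivity
            _ = _ := by ring
        have htp : t ^ p ≤ t := by
          have := Real.rpow_le_rpow_of_exponent_ge' ht0 ht1 zero_le_one hp.le
          simpa using this
        have hSa : a ^ p ≤ (a + |b|) ^ p :=
          Real.rpow_le_rpow ha (by have := abs_nonneg b; linarith) (by linarith)
        rw [show (a - b) ^ p = t ^ p * a ^ p by rw [habt, Real.mul_rpow ha ht0]; ring]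
        set X := (a ^ (p - 1) - b ^ (p - 1)) * (a - b)
        have hτX : 0 ≤ τ⁻¹ * X := by positivity
        rcases le_total t τ with h | h
        · calc t ^ p * a ^ p ≤ τ * (a + |b|) ^ p :=
              mul_le_mul (htp.trans h) hSa hap.le hτ.le
            _ ≤ 1 * (τ⁻¹ * X + τ * (a + |b|) ^ p) := by linarith
            _ ≤ _ := by apply mul_le_mul_of_nonneg_right hC3; positivity
        · have h5 : t ≤ τ⁻¹ * t ^ 2 := by
            rw [inv_mul_eq_div, le_div_iff₀ hτ]; nlinarith
          calc t ^ p * a ^ p ≤ (τ⁻¹ * t ^ 2) * a ^ p := by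
                apply mul_le_mul_of_nonneg_right (htp.trans h5) hap.le
            _ = 1 / (p - 1) * (τ⁻¹ * ((p - 1) * t ^ 2 * a ^ p)) := by field_simp
            _ ≤ 1 / (p - 1) * (τ⁻¹ * X) := by gcongr
            _ ≤ (2 ^ p + 1 / (p - 1)) * (τ⁻¹ * X + τ * (a + |b|) ^ p) := by
                apply mul_le_mul hC2 _ hτX (by linarith)
                linarith

lemma mono_ineq {p : ℝ} (hp : 1 < p) (a b : ℝ) {τ : ℝ} (hτ : 0 < τ) (hτ1 : τ ≤ 1) :
    0 ≤ (Jp p a - Jp p b) * (a - b) ∧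
    |a - b| ^ p ≤ (2 ^ p + 1 / (p - 1)) *
      (τ⁻¹ * ((Jp p a - Jp p b) * (a - b)) + τ * (|a| + |b|) ^ p) := by
  have key : ∀ a b : ℝ, |b| ≤ |a| → 0 ≤ (Jp p a - Jp p b) * (a - b) ∧
    |a - b| ^ p ≤ (2 ^ p + 1 / (p - 1)) *
      (τ⁻¹ * ((Jp p a - Jp p b) * (a - b)) + τ * (|a| + |b|) ^ p) := by
    intro a b hab
    rcases le_total 0 a with h | h
    · rw [abs_of_nonneg h] at hab
      exact mono_aux hp hab hτ hτ1
    · rw [abs_of_nonpos h, ← abs_neg b] at hab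
      have := mono_aux hp hab hτ hτ1
      rw [Jp_neg, Jp_neg, abs_neg, abs_neg] at this
      have e : (-Jp p a - -Jp p b) * (-a - -b) = (Jp p a - Jp p b) * (a - b) := by ring
      have e2 : |-a - -b| = |a - b| := by rw [← abs_neg]; congr 1; ring
      rwa [e, e2] at this
  rcases le_total |b| |a| with h | h
  · exact key a b h
  · have := key b a h
    rw [abs_sub_comm, add_comm |b|] at this
    have e : (Jp p b - Jp p a) * (b - a) = (Jp p a - Jp p b) * (a - b) := by ring
    rwa [e] at this

/-- Weighted Young type inequality. -/
lemma young_aux {p z M L : ℝ} (hp : 1 < p) (hz : 0 ≤ z) (hM : 0 ≤ M) (hL : 0 ≤ L) :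
    L * z * M ^ (p - 1) ≤ z ^ p + L ^ (p / (p - 1)) * M ^ p := by
  have hp1 : 0 < p - 1 := by linarith
  have split : ∀ x : ℝ, 0 ≤ x → x ^ p = x ^ (p - 1) * x := by
    intro x hx
    rcases eq_or_lt_of_le hx with h0 | h0
    · rw [← h0, Real.zero_rpow (by linarith)]; simp
    · nth_rewrite 3 [← Real.rpow_one x]
      rw [← Real.rpow_add h0]; ring_nf
  rcases le_total (L * M ^ (p - 1)) (z ^ (p - 1)) with h | h
  · have : L * z * M ^ (p - 1) ≤ z ^ p := by
      rw [split z hz]; nlinarith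
    have : 0 ≤ L ^ (p / (p - 1)) * M ^ p := by positivity
    linarith
  · have h1 : z ≤ L ^ (1 / (p - 1)) * M := by
      have := Real.rpow_le_rpow (by positivity) h (by positivity : 0 ≤ 1 / (p - 1))
      rw [Real.mul_rpow hL (by positivity), ← Real.rpow_mul hz, ← Real.rpow_mul hM] at this
      rw [mul_one_div_cancel hp1.ne', Real.rpow_one, Real.rpow_one] at this
      exact this
    have h2 : L * z * M ^ (p - 1) ≤ L * (L ^ (1 / (p - 1)) * M) * M ^ (p - 1) := by gcongr
    have h3 : L ^ (p / (p - 1)) = L ^ (1 / (p - 1)) * L := by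
      rcases eq_or_lt_of_le hL with h0 | h0
      · rw [← h0, Real.zero_rpow (by positivity)]; simp
      · nth_rewrite 3 [← Real.rpow_one L]
        rw [← Real.rpow_add h0]; congr 1; field_simp; ring
    rw [h3, split M hM]
    have : 0 ≤ z ^ p := by positivity
    nlinarith

/-- Affine change of variables for lower integrals. -/
lemma lint_affine {n : ℕ} (x₀ : EE n) {R : ℝ} (hR : 0 < R) (g : EE n → ℝ≥0∞) :
    ENNReal.ofReal (R ^ (n:ℝ)) * ∫⁻ x, g (x₀ + R • x) = ∫⁻ x, g x := by
  have h0 : ∫⁻ x, g x = ∫⁻ x, g (x₀ + x) := (lintegral_add_left_eq_self g x₀).symm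
  have h1 : ∫⁻ x, g (x₀ + R • x) = ∫⁻ y, g (x₀ + y) ∂(volume.map (fun y : EE n => R • y)) :=
    (lintegral_map_equiv (fun y => g (x₀ + y))
      (Homeomorph.smulOfNeZero R hR.ne').toMeasurableEquiv).symm
  rw [h0, h1, Measure.map_addHaar_smul volume hR.ne', lintegral_smul_measure, smul_eq_mul,
    ← mul_assoc, ← ENNReal.ofReal_mul (by positivity)]
  have : R ^ (n:ℝ) * |(R ^ Module.finrank ℝ (EE n))⁻¹| = 1 := by
    rw [Real.rpow_natCast, finrank_euclideanSpace_fin, abs_of_pos (by positivity)]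
    field_simp
  rw [this]; simp

/-- The singular kernel. -/
def KK {n : ℕ} (a : ℝ) (z : EE n) : ℝ≥0∞ := ENNReal.ofReal (‖z‖ ^ (-a))

lemma KK_measurable {n : ℕ} (a : ℝ) : Measurable (KK a : EE n → ℝ≥0∞) := by
  unfold KK; fun_prop

lemma KK_neg {n : ℕ} (a : ℝ) (z : EE n) : KK a (-z) = KK a z := by simp [KK]

lemma KK_comm {n : ℕ} (a : ℝ) (x y : EE n) : KK a (x - y) = KK a (y - x) := by
  rw [← KK_neg, neg_sub]

lemma kernel_near {n : ℕ} (hn : 1 ≤ n) {q : ℝ} (hq : 0 < q) :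
    ∃ C : ℝ≥0, ∀ t : ℝ, 0 < t →
      ∫⁻ z in ball (0 : EE n) t, KK (n - q) z ≤ C * ENNReal.ofReal (t ^ q) := by
  have hfin : ∫⁻ z in ball (0 : EE n) 1, KK (n - q) z < ⊤ := by
    have : IntegrableOn (fun z : EE n => ‖z‖ ^ (-((n:ℝ) - q))) (ball 0 1) volume := by
      refine integrableOn_ball_of_norm_le_rpow (C := 1) (α := (n:ℝ) - q) ?_ ?_ ?_ ?_
      · simpa using hn
      · simpa using hq
      · filter_upwards with x
        rw [one_mul, Real.norm_of_nonneg (by positivity)]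
      · exact (by fun_prop : Measurable (fun z : EE n => ‖z‖ ^ (-((n:ℝ) - q)))).aestronglyMeasurable
    have := this.lintegral_lt_top
    exact this
  refine ⟨(∫⁻ z in ball (0 : EE n) 1, KK (n - q) z).toNNReal, fun t ht => ?_⟩
  rw [ENNReal.coe_toNNReal hfin.ne, ← lintegral_indicator measurableSet_ball,
    ← lint_affine 0 ht, ← lintegral_indicator measurableSet_ball,
    ← lintegral_const_mul' _ _ (by simp), ← lintegral_mul_const' _ _ (by simp)]
  apply lintegral_mono
  intro z
  have hmem : (0 + t • z ∈ ball (0 : EE n) t) ↔ z ∈ ball (0 : EE n) 1 := by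
    simp only [zero_add, mem_ball_zero_iff, norm_smul, Real.norm_eq_abs, abs_of_pos ht]
    constructor
    · intro h; nlinarith
    · intro h; nlinarith
  by_cases hz : z ∈ ball (0 : EE n) 1
  · simp only [indicator_of_mem hz, indicator_of_mem (hmem.mpr hz), KK]
    rw [← ENNReal.ofReal_mul (by positivity), ← ENNReal.ofReal_mul (by positivity)]
    apply ENNReal.ofReal_le_ofReal
    rw [zero_add, norm_smul, Real.norm_eq_abs, abs_of_pos ht, Real.mul_rpow ht.le (norm_nonneg _),
      ← mul_assoc, ← Real.rpow_add ht]
    apply le_of_eq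
    rw [mul_comm]; congr 2; ring
  · beta_reduce; rw [indicator_of_notMem (fun h => hz (hmem.mp h))]; simp

lemma kernel_far {n : ℕ} {a : ℝ} (ha : (n:ℝ) < a) :
    ∃ C : ℝ≥0, ∫⁻ z in (ball (0 : EE n) (1/2))ᶜ, KK a z ≤ C := by
  have h := finite_integral_one_add_norm (E := EE n) (μ := volume) (r := a) (by simpa using ha)
  have ha0 : 0 < a := lt_of_le_of_lt (by positivity) ha
  have hle : ∫⁻ z in (ball (0 : EE n) (1/2))ᶜ, KK a z ≤
      ENNReal.ofReal (3 ^ a) * ∫⁻ x : EE n, ENNReal.ofReal ((1 + ‖x‖) ^ (-a)) := by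
    rw [← lintegral_const_mul' _ _ (by simp), ← lintegral_indicator measurableSet_ball.compl]
    apply lintegral_mono
    intro z
    by_cases hz : z ∈ (ball (0 : EE n) (1/2))ᶜ
    · simp only [indicator_of_mem hz, KK]
      simp only [mem_compl_iff, mem_ball_zero_iff, not_lt] at hz
      rw [← ENNReal.ofReal_mul (by positivity)]
      apply ENNReal.ofReal_le_ofReal
      have hz0 : 0 < ‖z‖ := by linarith
      rw [Real.rpow_neg (by positivity), Real.rpow_neg (by positivity), ← div_eq_mul_inv,
        ← Real.div_rpow (by norm_num) (by positivity), ← Real.inv_rpow (by positivity)]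
      apply Real.rpow_le_rpow (by positivity) _ ha0.le
      rw [inv_le_comm₀ hz0 (by positivity), inv_div, div_le_iff₀ (by norm_num)]
      linarith
    · rw [indicator_of_notMem hz]; simp
  refine ⟨(∫⁻ z in (ball (0 : EE n) (1/2))ᶜ, KK a z).toNNReal, ?_⟩
  rw [ENNReal.coe_toNNReal]
  exact (hle.trans_lt (ENNReal.mul_lt_top (by simp) h)).ne

end

section
open MeasureTheory Metric Set
open scoped ENNReal NNReal


lemma jensen_lint {α : Type*} [MeasurableSpace α] (μ : Measure α) {p : ℝ} (hp : 1 < p)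
    {g : α → ℝ≥0∞} (hg : AEMeasurable g μ) :
    (∫⁻ x, g x ∂μ) ^ p ≤ μ univ ^ (p - 1) * ∫⁻ x, g x ^ p ∂μ := by
  have hpq := Real.HolderConjugate.conjExponent hp
  have h := ENNReal.lintegral_mul_le_Lp_mul_Lq μ hpq hg (aemeasurable_const (b := (1:ℝ≥0∞)))
  simp only [Pi.mul_apply, mul_one, ENNReal.one_rpow, lintegral_one] at h
  have h2 := ENNReal.rpow_le_rpow h (by linarith : 0 ≤ p)
  rw [ENNReal.mul_rpow_of_nonneg _ _ (by linarith), ← ENNReal.rpow_mul, ← ENNReal.rpow_mul,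
    one_div_mul_cancel (by linarith), ENNReal.rpow_one] at h2
  rw [mul_comm]
  convert h2 using 3
  unfold Real.conjExponent
  field_simp

lemma shift_le {n : ℕ} {S S' : Set (EE n)} (hS : MeasurableSet S) (hS' : MeasurableSet S')
    {h : EE n} (hh : ∀ x ∈ S, x + h ∈ S') (g : EE n → ℝ≥0∞) :
    ∫⁻ x in S, g (x + h) ≤ ∫⁻ x in S', g x := by
  rw [← lintegral_indicator hS, ← lintegral_indicator hS',
    ← lintegral_add_right_eq_self (S'.indicator g) h]
  apply lintegral_mono
  intro x
  by_cases hx : x ∈ S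
  · simp [indicator_of_mem hx, indicator_of_mem (hh x hx)]
  · beta_reduce; rw [indicator_of_notMem hx]; simp

lemma enorm_grad_measurable {n : ℕ} (u : EE n → ℝ) : Measurable (fun x => ‖gradient u x‖ₑ) := by
  unfold gradient
  simp only [LinearIsometryEquiv.enorm_map]
  exact (measurable_fderiv ℝ u).enorm

lemma diff_quot {n : ℕ} {Ω : Set (EE n)} {u : EE n → ℝ} (hΩ : IsOpen Ω)
    (hu : ContDiffOn ℝ 1 u Ω) {p r ρ : ℝ} (hp : 1 < p) {h : EE n} (hρ : ball 0 ρ ⊆ Ω)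
    (hr : r + ‖h‖ ≤ ρ) :
    ∫⁻ x in ball (0 : EE n) r, ‖u (x + h) - u x‖ₑ ^ p ≤
      ‖h‖ₑ ^ p * ∫⁻ x in ball (0 : EE n) ρ, ‖gradient u x‖ₑ ^ p := by
  have hd : ∀ y ∈ Ω, HasFDerivAt u (fderiv ℝ u y) y := fun y hy =>
    ((hu.differentiableOn one_ne_zero).differentiableAt (hΩ.mem_nhds hy)).hasFDerivAt
  have hc : ContinuousOn (fderiv ℝ u) Ω := hu.continuousOn_fderiv_of_isOpen hΩ le_rfl
  have hmg := enorm_grad_measurable u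
  have hmem : ∀ x ∈ ball (0 : EE n) r, ∀ t ∈ Icc (0:ℝ) 1, x + t • h ∈ ball (0 : EE n) ρ := by
    intro x hx t ht
    rw [mem_ball_zero_iff] at *
    calc ‖x + t • h‖ ≤ ‖x‖ + ‖t • h‖ := norm_add_le _ _
      _ ≤ ‖x‖ + ‖h‖ := by
        rw [norm_smul, Real.norm_of_nonneg ht.1]; gcongr
        exact mul_le_of_le_one_left (norm_nonneg _) ht.2
      _ < ρ := by linarith
  have hpt : ∀ x ∈ ball (0 : EE n) r, ‖u (x + h) - u x‖ₑ ^ p ≤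
      ∫⁻ t in Ioc (0:ℝ) 1, ‖h‖ₑ ^ p * ‖gradient u (x + t • h)‖ₑ ^ p := by
    intro x hx
    have hγ : Continuous (fun t : ℝ => x + t • h) := by fun_prop
    have hFTC : ∫ t in (0:ℝ)..1, fderiv ℝ u (x + t • h) h = u (x + h) - u x := by
      have := intervalIntegral.integral_eq_sub_of_hasDerivAt (a := 0) (b := 1)
        (f := fun t : ℝ => u (x + t • h)) (f' := fun t : ℝ => fderiv ℝ u (x + t • h) h) ?_ ?_
      · simpa using this
      · intro t ht
        rw [uIcc_of_le zero_le_one] at ht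
        have h1 := hd _ (hρ (hmem x hx t ht))
        have h2 : HasDerivAt (fun t : ℝ => x + t • h) h t := by
          simpa using ((hasDerivAt_id t).smul_const h).const_add x
        exact h1.comp_hasDerivAt t h2
      · apply ContinuousOn.intervalIntegrable
        rw [uIcc_of_le zero_le_one]
        have : ContinuousOn (fun t : ℝ => fderiv ℝ u (x + t • h)) (Icc 0 1) :=
          hc.comp hγ.continuousOn (fun t ht => hρ (hmem x hx t ht))
        exact this.clm_apply continuousOn_const
    have h1 : ‖u (x + h) - u x‖ₑ ≤ ∫⁻ t in Ioc (0:ℝ) 1, ‖h‖ₑ * ‖gradient u (x + t • h)‖ₑ := by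
      rw [← hFTC, intervalIntegral.integral_of_le zero_le_one]
      refine (enorm_integral_le_lintegral_enorm _).trans ?_
      apply lintegral_mono
      intro t
      beta_reduce
      rw [mul_comm]
      have : ‖gradient u (x + t • h)‖ₑ = ‖fderiv ℝ u (x + t • h)‖ₑ := by
        unfold gradient; simp
      rw [this]
      exact ContinuousLinearMap.le_opENorm _ _
    have hmt : Measurable (fun t : ℝ => ‖h‖ₑ * ‖gradient u (x + t • h)‖ₑ) :=
      (hmg.comp hγ.measurable).const_mul _
    have h2 := jensen_lint (volume.restrict (Ioc (0:ℝ) 1)) hp hmt.aemeasurable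
    simp only [MeasurableSet.univ, Measure.restrict_apply, univ_inter, Real.volume_Ioc, sub_zero,
      ENNReal.ofReal_one, ENNReal.one_rpow, one_mul] at h2
    refine (ENNReal.rpow_le_rpow h1 (by linarith)).trans (h2.trans (le_of_eq ?_))
    congr 1; ext t
    rw [ENNReal.mul_rpow_of_nonneg _ _ (by linarith)]
  calc ∫⁻ x in ball (0 : EE n) r, ‖u (x + h) - u x‖ₑ ^ p
      ≤ ∫⁻ x in ball (0 : EE n) r, ∫⁻ t in Ioc (0:ℝ) 1, ‖h‖ₑ ^ p * ‖gradient u (x + t • h)‖ₑ ^ p :=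
        setLIntegral_mono' measurableSet_ball hpt
    _ = ∫⁻ t in Ioc (0:ℝ) 1, ∫⁻ x in ball (0 : EE n) r, ‖h‖ₑ ^ p * ‖gradient u (x + t • h)‖ₑ ^ p := by
        apply lintegral_lintegral_swap
        apply Measurable.aemeasurable
        have : Measurable (fun q : EE n × ℝ => ‖gradient u (q.1 + q.2 • h)‖ₑ) :=
          hmg.comp (by fun_prop)
        exact (this.pow_const p).const_mul _
    _ ≤ ∫⁻ t in Ioc (0:ℝ) 1, ‖h‖ₑ ^ p * ∫⁻ x in ball (0 : EE n) ρ, ‖gradient u x‖ₑ ^ p := by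
        apply setLIntegral_mono' measurableSet_Ioc
        intro t ht
        rw [lintegral_const_mul' _ _ (by simp [ENNReal.rpow_eq_top_iff]; intros; linarith)]
        refine mul_le_mul' le_rfl ?_
        exact shift_le measurableSet_ball measurableSet_ball
          (fun x hx => hmem x hx t ⟨ht.1.le, ht.2⟩) (fun y => ‖gradient u y‖ₑ ^ p)
    _ = _ := by simp

lemma second_diff {n : ℕ} {s p : ℝ} (hp : 1 < p) (hs : 0 < s) :
    ∃ C : ℝ≥0, ∀ (δ : EE n → ℝ), Measurable δ → ∀ (h : EE n), h ≠ 0 → ∀ r : ℝ,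
      ∫⁻ x in ball (0 : EE n) r, ‖δ (x + h) - δ x‖ₑ ^ p ≤
        C * ENNReal.ofReal (‖h‖ ^ (s * p)) * ∫⁻ x in ball (0 : EE n) (r + ‖h‖),
          ∫⁻ ξ in ball (0 : EE n) ‖h‖, ‖δ x - δ (x + ξ)‖ₑ ^ p * KK (n + s * p) ξ := by
  set v := (volume (ball (0 : EE n) (1/2))).toNNReal with hv
  have hvt : volume (ball (0 : EE n) (1/2)) ≠ ⊤ := measure_ball_lt_top.ne
  have hv0 : v ≠ 0 := by
    rw [hv, Ne, ENNReal.toNNReal_eq_zero_iff, not_or]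
    exact ⟨(measure_ball_pos _ _ (by norm_num)).ne', hvt⟩
  refine ⟨v⁻¹ * (2 ^ (p - 1) * 2), fun δ hδ h hh r => ?_⟩
  have hh0 : 0 < ‖h‖ := norm_pos_iff.mpr hh
  set a := (n:ℝ) + s * p with ha
  have ha0 : 0 < a := by positivity
  set H : EE n → ℝ≥0∞ := fun x => ∫⁻ ξ in ball (0 : EE n) ‖h‖, ‖δ x - δ (x + ξ)‖ₑ ^ p * KK a ξ with hH
  have hHm : Measurable H := by
    apply Measurable.lintegral_prod_right'
      (f := fun q : EE n × EE n => ‖δ q.1 - δ (q.1 + q.2)‖ₑ ^ p * KK a q.2)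
    have := KK_measurable (n := n) a
    fun_prop
  -- kernel lower bound
  have hker : ∀ x ξ : EE n, ξ ∈ ball (0 : EE n) ‖h‖ →
      ‖δ x - δ (x + ξ)‖ₑ ^ p ≤ ENNReal.ofReal (‖h‖ ^ a) * (‖δ x - δ (x + ξ)‖ₑ ^ p * KK a ξ) := by
    intro x ξ hξ
    rw [mem_ball_zero_iff] at hξ
    by_cases h0 : ξ = 0
    · subst h0; simp [ENNReal.zero_rpow_of_pos (by linarith : 0 < p)]
    · have hξ0 : 0 < ‖ξ‖ := norm_pos_iff.mpr h0
      have : 1 ≤ ENNReal.ofReal (‖h‖ ^ a) * KK a ξ := by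
        unfold KK
        rw [← ENNReal.ofReal_mul (by positivity), ← ENNReal.ofReal_one]
        apply ENNReal.ofReal_le_ofReal
        rw [Real.rpow_neg hξ0.le, ← div_eq_mul_inv, one_le_div (by positivity)]
        exact Real.rpow_le_rpow hξ0.le hξ.le ha0.le
      calc ‖δ x - δ (x + ξ)‖ₑ ^ p = ‖δ x - δ (x + ξ)‖ₑ ^ p * 1 := by rw [mul_one]
        _ ≤ ‖δ x - δ (x + ξ)‖ₑ ^ p * (ENNReal.ofReal (‖h‖ ^ a) * KK a ξ) := by gcongr
        _ = _ := by ring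
  have hH1 : ∀ x : EE n, ∫⁻ ξ in ball (0 : EE n) ‖h‖, ‖δ x - δ (x + ξ)‖ₑ ^ p ≤
      ENNReal.ofReal (‖h‖ ^ a) * H x := by
    intro x
    rw [hH, ← lintegral_const_mul' _ _ (by simp)]
    exact setLIntegral_mono' measurableSet_ball (fun ξ hξ => hker x ξ hξ)
  -- volume of small ball
  have hvol : volume (ball (0 : EE n) (‖h‖ / 2)) = ENNReal.ofReal (‖h‖ ^ (n:ℝ)) * v := by
    have := Measure.addHaar_ball_mul_of_pos volume (0 : EE n) hh0 (1/2)
    rw [hv, ENNReal.coe_toNNReal hvt, Real.rpow_natCast]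
    simpa [div_eq_mul_inv] using this
  have hpt : ∀ x : EE n, ENNReal.ofReal (‖h‖ ^ (n:ℝ)) * v * ‖δ (x + h) - δ x‖ₑ ^ p ≤
      2 ^ (p - 1) * (ENNReal.ofReal (‖h‖ ^ a) * H (x + h) + ENNReal.ofReal (‖h‖ ^ a) * H x) := by
    intro x
    have hsum : ∀ ζ : EE n, ‖δ (x + h) - δ x‖ₑ ^ p ≤ 2 ^ (p - 1) *
        (‖δ (x + h) - δ ((x + h) + (ζ + -((1/2:ℝ) • h)))‖ₑ ^ p +
          ‖δ x - δ (x + (ζ + (1/2:ℝ) • h))‖ₑ ^ p) := by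
      intro ζ
      refine le_trans (ENNReal.rpow_le_rpow ?_ (by linarith))
        (ENNReal.rpow_add_le_mul_rpow_add_rpow _ _ hp.le)
      have e : (x + h) + (ζ + -((1/2:ℝ) • h)) = x + (ζ + (1/2:ℝ) • h) := by
        have : h = (1/2:ℝ) • h + (1/2:ℝ) • h := by rw [← add_smul]; norm_num
        nth_rewrite 1 [this]; abel
      rw [e]
      set b := δ (x + (ζ + (1/2:ℝ) • h))
      have : δ (x + h) - δ x = (δ (x + h) - b) + -(δ x - b) := by ring
      rw [this]
      refine (enorm_add_le _ _).trans ?_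
      rw [enorm_neg]
    have hin : ∀ e : EE n, ‖e‖ ≤ ‖h‖ / 2 → ∀ ζ ∈ ball (0 : EE n) (‖h‖ / 2), ζ + e ∈ ball (0 : EE n) ‖h‖ := by
      intro e he ζ hζ
      rw [mem_ball_zero_iff] at *
      have := norm_add_le ζ e
      linarith
    have hhalf : ‖(1/2:ℝ) • h‖ ≤ ‖h‖ / 2 := by rw [norm_smul]; norm_num; linarith
    calc ENNReal.ofReal (‖h‖ ^ (n:ℝ)) * v * ‖δ (x + h) - δ x‖ₑ ^ p
        = ∫⁻ ζ in ball (0 : EE n) (‖h‖ / 2), ‖δ (x + h) - δ x‖ₑ ^ p := by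
          rw [setLIntegral_const, hvol, mul_comm]
      _ ≤ ∫⁻ ζ in ball (0 : EE n) (‖h‖ / 2), 2 ^ (p - 1) *
        (‖δ (x + h) - δ ((x + h) + (ζ + -((1/2:ℝ) • h)))‖ₑ ^ p +
          ‖δ x - δ (x + (ζ + (1/2:ℝ) • h))‖ₑ ^ p) := lintegral_mono (fun ζ => hsum ζ)
      _ = 2 ^ (p - 1) * ((∫⁻ ζ in ball (0 : EE n) (‖h‖ / 2), ‖δ (x + h) - δ ((x + h) + (ζ + -((1/2:ℝ) • h)))‖ₑ ^ p) +
          ∫⁻ ζ in ball (0 : EE n) (‖h‖ / 2), ‖δ x - δ (x + (ζ + (1/2:ℝ) • h))‖ₑ ^ p) := by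
          rw [lintegral_const_mul' _ _ (ENNReal.rpow_ne_top_of_nonneg (by linarith) (by simp)),
            lintegral_add_left (by fun_prop)]
      _ ≤ _ := by
          refine mul_le_mul' le_rfl (add_le_add ?_ ?_)
          · refine le_trans ?_ (hH1 (x + h))
            exact shift_le measurableSet_ball measurableSet_ball
              (hin _ (by rw [norm_neg]; exact hhalf)) (fun ξ => ‖δ (x + h) - δ ((x + h) + ξ)‖ₑ ^ p)
          · refine le_trans ?_ (hH1 x)
            exact shift_le measurableSet_ball measurableSet_ball
              (hin _ hhalf) (fun ξ => ‖δ x - δ (x + ξ)‖ₑ ^ p)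
  -- integrate
  have hInt2 : ENNReal.ofReal (‖h‖ ^ (n:ℝ)) * v * ∫⁻ x in ball (0 : EE n) r, ‖δ (x + h) - δ x‖ₑ ^ p ≤
      2 ^ (p - 1) * 2 * ENNReal.ofReal (‖h‖ ^ a) * ∫⁻ x in ball (0 : EE n) (r + ‖h‖), H x := by
    rw [← lintegral_const_mul' _ _ (ENNReal.mul_ne_top (by simp) (by simp))]
    refine (lintegral_mono (fun x => hpt x)).trans ?_
    rw [lintegral_const_mul' _ _ (ENNReal.rpow_ne_top_of_nonneg (by linarith) (by simp)),
      lintegral_add_right _ (by fun_prop), lintegral_const_mul' _ _ (by simp),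
      lintegral_const_mul' _ _ (by simp)]
    have h1 : ∫⁻ x in ball (0 : EE n) r, H (x + h) ≤ ∫⁻ x in ball (0 : EE n) (r + ‖h‖), H x := by
      apply shift_le measurableSet_ball measurableSet_ball
      intro x hx
      rw [mem_ball_zero_iff] at *
      have := norm_add_le x h
      linarith
    have h2 : ∫⁻ x in ball (0 : EE n) r, H x ≤ ∫⁻ x in ball (0 : EE n) (r + ‖h‖), H x :=
      lintegral_mono_set (ball_subset_ball (by linarith))
    calc _ ≤ 2 ^ (p - 1) * (ENNReal.ofReal (‖h‖ ^ a) * (∫⁻ x in ball (0 : EE n) (r + ‖h‖), H x) +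
            ENNReal.ofReal (‖h‖ ^ a) * ∫⁻ x in ball (0 : EE n) (r + ‖h‖), H x) := by gcongr
      _ = _ := by ring
  have hvc : (v:ℝ≥0∞) ≠ 0 := by simpa using hv0
  have hN0 : ENNReal.ofReal (‖h‖ ^ (n:ℝ)) ≠ 0 := by
    rw [Ne, ENNReal.ofReal_eq_zero, not_le]; positivity
  set I := ∫⁻ x in ball (0 : EE n) (r + ‖h‖), H x with hI
  have hsplit : ENNReal.ofReal (‖h‖ ^ a) = ENNReal.ofReal (‖h‖ ^ (n:ℝ)) * ENNReal.ofReal (‖h‖ ^ (s * p)) := by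
    rw [← ENNReal.ofReal_mul (by positivity), ← Real.rpow_add hh0]
  have e2 : ((2 ^ (p - 1) : ℝ≥0) : ℝ≥0∞) = 2 ^ (p - 1) := by
    rw [ENNReal.coe_rpow_of_nonneg _ (by linarith)]; rfl
  have hfinal : ENNReal.ofReal (‖h‖ ^ (n:ℝ)) * v * ∫⁻ x in ball (0 : EE n) r, ‖δ (x + h) - δ x‖ₑ ^ p ≤
     ENNReal.ofReal (‖h‖ ^ (n:ℝ)) * v * ((v⁻¹ * (2 ^ (p - 1) * 2) : ℝ≥0) * ENNReal.ofReal (‖h‖ ^ (s * p)) * I) := by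
    refine hInt2.trans (le_of_eq ?_)
    rw [hsplit, ENNReal.coe_mul, ENNReal.coe_mul, e2, ENNReal.coe_inv hv0]
    have : (v:ℝ≥0∞) * (v:ℝ≥0∞)⁻¹ = 1 := ENNReal.mul_inv_cancel hvc (by simp)
    calc _ = 1 * (2 ^ (p - 1) * 2 * (ENNReal.ofReal (‖h‖ ^ (n:ℝ)) * ENNReal.ofReal (‖h‖ ^ (s * p))) * I) := by rw [one_mul]
      _ = _ := by rw [← this]; push_cast; ring
  exact (ENNReal.mul_le_mul_iff_right (mul_ne_zero hN0 hvc) (ENNReal.mul_ne_top (by simp) (by simp))).mp hfinal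

end

section
open MeasureTheory Metric Set
open scoped ENNReal NNReal


/-- Normalized data on the ball of radius `2`. -/
structure Dat {n : ℕ} (p s : ℝ) (u f : EE n → ℝ) (m : ℝ) (M : ℝ≥0) : Prop where
  um : Measurable u
  fm : Measurable f
  G : ∫⁻ x in ball (0 : EE n) 2, ∫⁻ y in ball (0 : EE n) 2,
    ‖u x - u y‖ₑ ^ p * KK (n + s * p) (x - y) ≤ (M : ℝ≥0∞) ^ p
  U : ∫⁻ x in ball (0 : EE n) 2, ‖u x - m‖ₑ ^ p ≤ (M : ℝ≥0∞) ^ p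
  T : ∫⁻ x in (ball (0 : EE n) (1/2))ᶜ, ‖u x - m‖ₑ ^ (p - 1) * KK (n + s * p) x
    ≤ (M : ℝ≥0∞) ^ (p - 1)
  F : ∫⁻ x in ball (0 : EE n) 2, ‖f x‖ₑ ^ (p / (p - 1)) ≤ (M : ℝ≥0∞) ^ p
  eq : ∀ w : EE n → ℝ, (∃ L, LipschitzWith L w) → (∃ t < 2, ∀ x, t < ‖x‖ → w x = 0) →
    ∫ x, ∫ y, Jp p (u x - u y) * (w x - w y) / dist x y ^ ((n:ℝ) + s * p) = ∫ x, f x * w x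

/-- Admissible functions relative to the ball of radius `t`. -/
structure Adm {n : ℕ} (p s : ℝ) (v : EE n → ℝ) (m : ℝ) (M : ℝ≥0) (t : ℝ) : Prop where
  vm : Measurable v
  G : ∫⁻ x in ball (0 : EE n) t, ∫⁻ y in ball (0 : EE n) t,
    ‖v x - v y‖ₑ ^ p * KK (n + s * p) (x - y) ≤ (M : ℝ≥0∞) ^ p
  U : ∫⁻ x in ball (0 : EE n) t, ‖v x - m‖ₑ ^ p ≤ (M : ℝ≥0∞) ^ p
  T : ∫⁻ x in (ball (0 : EE n) t)ᶜ, ‖v x - m‖ₑ ^ (p - 1) * KK (n + s * p) x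
    ≤ ENNReal.ofReal (2 ^ ((n:ℝ) + s * p)) * (M : ℝ≥0∞) ^ (p - 1)

lemma Dat.adm {n : ℕ} {p s : ℝ} (hp : 1 < p) (hs : 0 < s) {u f : EE n → ℝ} {m : ℝ} {M : ℝ≥0}
    (D : Dat p s u f m M) {t : ℝ} (ht : 1 ≤ t) {h : EE n} (hh : ‖h‖ ≤ 1/2) (hth : t + ‖h‖ ≤ 2) :
    Adm p s (fun x => u (x + h)) m M t := by
  have um := D.um
  have hmem : ∀ x ∈ ball (0 : EE n) t, x + h ∈ ball (0 : EE n) 2 := by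
    intro x hx
    rw [mem_ball_zero_iff] at *
    have := norm_add_le x h
    linarith
  refine ⟨by fun_prop, ?_, ?_, ?_⟩
  · refine le_trans ?_ D.G
    refine le_trans (lintegral_mono (fun x => ?_)) (shift_le measurableSet_ball measurableSet_ball hmem
      (fun x => ∫⁻ y in ball (0 : EE n) 2, ‖u x - u y‖ₑ ^ p * KK (n + s * p) (x - y)))
    refine le_trans (le_of_eq ?_) (shift_le measurableSet_ball measurableSet_ball hmem
      (fun y => ‖u (x + h) - u y‖ₑ ^ p * KK (n + s * p) (x + h - y)))
    simp
  · exact (shift_le measurableSet_ball measurableSet_ball hmem (fun x => ‖u x - m‖ₑ ^ p)).trans D.U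
  · have hmem2 : ∀ x ∈ (ball (0 : EE n) t)ᶜ, x + h ∈ (ball (0 : EE n) (1/2))ᶜ := by
      intro x hx
      rw [mem_compl_iff, mem_ball_zero_iff] at *
      have := norm_sub_le (x + h) h
      rw [add_sub_cancel_right] at this
      linarith
    calc _ ≤ ∫⁻ x in (ball (0 : EE n) t)ᶜ, ENNReal.ofReal (2 ^ ((n:ℝ) + s * p)) *
          (‖u (x + h) - m‖ₑ ^ (p - 1) * KK (n + s * p) (x + h)) := by
          apply setLIntegral_mono' measurableSet_ball.compl
          intro x hx
          rw [mem_compl_iff, mem_ball_zero_iff, not_lt] at hx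
          rw [mul_left_comm]
          gcongr
          unfold KK
          rw [← ENNReal.ofReal_mul (by positivity)]
          apply ENNReal.ofReal_le_ofReal
          have h1 : ‖x + h‖ ≤ 2 * ‖x‖ := by
            have := norm_add_le x h
            linarith
          have h2 : 0 < ‖x + h‖ := by
            have := norm_sub_le (x + h) h
            rw [add_sub_cancel_right] at this
            linarith
          have hx0 : 0 < ‖x‖ := by linarith
          have ha0 : 0 < (n:ℝ) + s * p := by positivity
          rw [Real.rpow_neg (by positivity), Real.rpow_neg (by positivity), ← div_eq_mul_inv,
            ← Real.div_rpow (by norm_num) (by positivity), ← Real.inv_rpow (by positivity)]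
          apply Real.rpow_le_rpow (by positivity) _ ha0.le
          rw [inv_le_comm₀ hx0 (by positivity), inv_div, div_le_iff₀ (by norm_num)]
          linarith
      _ ≤ _ := by
          rw [lintegral_const_mul' _ _ (by simp)]
          refine mul_le_mul' le_rfl (le_trans ?_ D.T)
          exact shift_le measurableSet_ball.compl measurableSet_ball.compl hmem2
            (fun x => ‖u x - m‖ₑ ^ (p - 1) * KK (n + s * p) x)

lemma enorm_Jp {p : ℝ} (hp : 1 < p) (a : ℝ) : ‖Jp p a‖ₑ = ‖a‖ₑ ^ (p - 1) := by
  rw [Real.enorm_eq_ofReal_abs, Jp_abs hp, Real.enorm_eq_ofReal_abs,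
    ENNReal.ofReal_rpow_of_nonneg (abs_nonneg a) (by linarith)]

lemma add_rpow_le_two {q : ℝ} (hq : 0 ≤ q) (x y : ℝ≥0∞) :
    (x + y) ^ q ≤ 2 ^ q * (x ^ q + y ^ q) := by
  rcases le_total x y with h | h
  · calc (x + y) ^ q ≤ (2 * y) ^ q := by
          apply ENNReal.rpow_le_rpow _ hq; rw [two_mul]; gcongr
      _ = 2 ^ q * y ^ q := ENNReal.mul_rpow_of_nonneg _ _ hq
      _ ≤ _ := by gcongr; exact le_add_self
  · calc (x + y) ^ q ≤ (2 * x) ^ q := by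
          apply ENNReal.rpow_le_rpow _ hq; rw [two_mul]; gcongr
      _ = 2 ^ q * x ^ q := ENNReal.mul_rpow_of_nonneg _ _ hq
      _ ≤ _ := by gcongr; exact le_self_add

/-- Hölder with exponents `p` and `q = p/(p-1)` where the second function is a `(p-1)` power. -/
lemma holder_pow {α : Type*} [MeasurableSpace α] (μ : Measure α) {p : ℝ} (hp : 1 < p)
    {g k : α → ℝ≥0∞} (hg : AEMeasurable g μ) (hk : AEMeasurable k μ) {M : ℝ≥0∞}
    (hM : ∫⁻ x, k x ^ p ∂μ ≤ M ^ p) :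
    ∫⁻ x, g x * k x ^ (p - 1) ∂μ ≤ (∫⁻ x, g x ^ p ∂μ) ^ (1 / p) * M ^ (p - 1) := by
  have hp1 : 0 < p - 1 := by linarith
  have hpq := Real.HolderConjugate.conjExponent hp
  refine (ENNReal.lintegral_mul_le_Lp_mul_Lq μ hpq hg (hk.pow_const (p - 1))).trans ?_
  refine mul_le_mul' le_rfl ?_
  have e : ∀ x, (k x ^ (p - 1)) ^ p.conjExponent = k x ^ p := by
    intro x
    rw [← ENNReal.rpow_mul]; congr 1; unfold Real.conjExponent; field_simp
  simp only [e]
  calc _ ≤ (M ^ p) ^ (1 / p.conjExponent) := ENNReal.rpow_le_rpow hM (by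
            unfold Real.conjExponent; positivity)
    _ = _ := by rw [← ENNReal.rpow_mul]; congr 1; unfold Real.conjExponent; field_simp

lemma far_est {n : ℕ} {p s : ℝ} (hp : 1 < p) (hs : 0 < s) :
    ∃ C : ℝ≥0, ∀ (v w : EE n → ℝ) (m : ℝ) (M : ℝ≥0) (t e : ℝ), Measurable w →
      Adm p s v m M t → 1 ≤ t → t ≤ 2 → 0 < e → (∀ x, t - e < ‖x‖ → w x = 0) →
      ∫⁻ x in ball (0 : EE n) t, ∫⁻ y in (ball (0 : EE n) t)ᶜ,
        ‖Jp p (v x - v y)‖ₑ * ‖w x‖ₑ * KK (n + s * p) (x - y) ≤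
      C * ENNReal.ofReal ((2 / e) ^ (n + s * p)) *
        ((∫⁻ x in ball (0 : EE n) t, ‖w x‖ₑ ^ p) ^ (1 / p) * (M : ℝ≥0∞) ^ (p - 1)) := by
  have hp1 : 0 < p - 1 := by linarith
  set a := (n:ℝ) + s * p with ha
  have ha0 : 0 < a := by positivity
  obtain ⟨C2, hC2⟩ := kernel_far (n := n) (a := a) (by rw [ha]; nlinarith)
  set V := (volume (ball (0 : EE n) 2)) ^ ((p - 1) / p) with hV
  have hVt : V ≠ ⊤ := ENNReal.rpow_ne_top_of_nonneg (by positivity) measure_ball_lt_top.ne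
  have h2t : (2:ℝ≥0∞) ^ (p - 1) ≠ ⊤ := ENNReal.rpow_ne_top_of_nonneg (by linarith) (by simp)
  set C : ℝ≥0∞ := 2 ^ (p - 1) * (C2 + ENNReal.ofReal (2 ^ a) * V) with hC
  have hCt : C ≠ ⊤ := ENNReal.mul_ne_top h2t
    (ENNReal.add_ne_top.mpr ⟨by simp, ENNReal.mul_ne_top (by simp) hVt⟩)
  refine ⟨C.toNNReal, fun v w m M t e hw A ht1 ht2 he hw0 => ?_⟩
  rw [ENNReal.coe_toNNReal hCt]
  have vm := A.vm
  set Λ := ENNReal.ofReal ((2 / e) ^ a) with hΛ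
  have hΛt : Λ ≠ ⊤ := by simp [hΛ]
  -- pointwise
  have hpt : ∀ x : EE n, ∀ y ∈ (ball (0 : EE n) t)ᶜ,
      ‖Jp p (v x - v y)‖ₑ * ‖w x‖ₑ * KK a (x - y) ≤
      2 ^ (p - 1) * Λ * ‖w x‖ₑ * (‖v x - m‖ₑ ^ (p - 1) * KK a y + ‖v y - m‖ₑ ^ (p - 1) * KK a y) := by
    intro x y hy
    rw [mem_compl_iff, mem_ball_zero_iff, not_lt] at hy
    by_cases hx : t - e < ‖x‖
    · simp [hw0 x hx]
    · push Not at hx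
      have hy0 : 0 < ‖y‖ := by linarith
      have hK : KK a (x - y) ≤ Λ * KK a y := by
        unfold KK
        rw [hΛ, ← ENNReal.ofReal_mul (by positivity)]
        apply ENNReal.ofReal_le_ofReal
        have h1 : ‖y‖ * (e / 2) ≤ ‖x - y‖ := by
          have h2 : ‖y‖ ≤ ‖x‖ + ‖x - y‖ := by
            have := norm_sub_le x (x - y)
            rwa [sub_sub_cancel] at this
          have h4 : ‖x‖ ≥ 0 := norm_nonneg x
          nlinarith
        have hxy : 0 < ‖x - y‖ := lt_of_lt_of_le (by positivity) h1
        rw [Real.rpow_neg (by positivity), Real.rpow_neg (by positivity), ← div_eq_mul_inv,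
          ← Real.div_rpow (by positivity) (by positivity), ← Real.inv_rpow (by positivity)]
        apply Real.rpow_le_rpow (by positivity) _ ha0.le
        rw [inv_le_comm₀ hxy (by positivity), inv_div]
        calc ‖y‖ / (2 / e) = ‖y‖ * (e / 2) := by field_simp
          _ ≤ _ := h1
      have hJ : ‖Jp p (v x - v y)‖ₑ ≤ 2 ^ (p - 1) * (‖v x - m‖ₑ ^ (p - 1) + ‖v y - m‖ₑ ^ (p - 1)) := by
        rw [enorm_Jp hp]
        refine le_trans (ENNReal.rpow_le_rpow ?_ hp1.le) (add_rpow_le_two hp1.le _ _)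
        have : v x - v y = (v x - m) - (v y - m) := by ring
        rw [this]
        exact enorm_sub_le
      calc _ ≤ (2 ^ (p - 1) * (‖v x - m‖ₑ ^ (p - 1) + ‖v y - m‖ₑ ^ (p - 1))) * ‖w x‖ₑ * (Λ * KK a y) := by
            gcongr
        _ = _ := by ring
  have hKm := KK_measurable (n := n) a
  have hwt : ∀ x, 2 ^ (p - 1) * Λ * ‖w x‖ₑ ≠ ⊤ := fun x =>
    ENNReal.mul_ne_top (ENNReal.mul_ne_top h2t hΛt) (by simp)
  have hin : ∀ x : EE n, ∫⁻ y in (ball (0 : EE n) t)ᶜ,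
      ‖Jp p (v x - v y)‖ₑ * ‖w x‖ₑ * KK a (x - y) ≤
      2 ^ (p - 1) * Λ * (C2 * (‖w x‖ₑ * ‖v x - m‖ₑ ^ (p - 1)) +
        ENNReal.ofReal (2 ^ a) * (M : ℝ≥0∞) ^ (p - 1) * ‖w x‖ₑ) := by
    intro x
    refine (setLIntegral_mono' measurableSet_ball.compl (hpt x)).trans ?_
    rw [lintegral_const_mul' _ _ (hwt x), lintegral_add_left (by fun_prop),
      lintegral_const_mul' _ _ (ENNReal.rpow_ne_top_of_nonneg hp1.le (by simp))]
    have h1 : ∫⁻ y in (ball (0 : EE n) t)ᶜ, KK a y ≤ C2 :=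
      (lintegral_mono_set (compl_subset_compl.mpr (ball_subset_ball (by linarith)))).trans hC2
    calc _ ≤ 2 ^ (p - 1) * Λ * ‖w x‖ₑ * (‖v x - m‖ₑ ^ (p - 1) * C2 +
          ENNReal.ofReal (2 ^ a) * (M : ℝ≥0∞) ^ (p - 1)) := by
          refine mul_le_mul' le_rfl (add_le_add (mul_le_mul' le_rfl h1) A.T)
      _ = _ := by ring
  refine (lintegral_mono (fun x => hin x)).trans ?_
  rw [lintegral_const_mul' _ _ (ENNReal.mul_ne_top h2t hΛt), lintegral_add_left (by fun_prop),
    lintegral_const_mul' _ _ (by simp), lintegral_const_mul' _ _ (ENNReal.mul_ne_top (by simp)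
      (ENNReal.rpow_ne_top_of_nonneg hp1.le (by simp)))]
  set W := (∫⁻ x in ball (0 : EE n) t, ‖w x‖ₑ ^ p) ^ (1 / p) with hW
  have hH1 : ∫⁻ x in ball (0 : EE n) t, ‖w x‖ₑ * ‖v x - m‖ₑ ^ (p - 1) ≤ W * (M : ℝ≥0∞) ^ (p - 1) :=
    holder_pow _ hp (by fun_prop) (by fun_prop) A.U
  have hH2 : ∫⁻ x in ball (0 : EE n) t, ‖w x‖ₑ ≤ V * W := by
    have := jensen_lint (volume.restrict (ball (0 : EE n) t)) hp (g := fun x => ‖w x‖ₑ) (by fun_prop)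
    have h2 := ENNReal.rpow_le_rpow this (by positivity : 0 ≤ 1 / p)
    rw [← ENNReal.rpow_mul, mul_one_div_cancel (by linarith), ENNReal.rpow_one,
      ENNReal.mul_rpow_of_nonneg _ _ (by positivity), ← ENNReal.rpow_mul, mul_one_div] at h2
    refine h2.trans (mul_le_mul' ?_ le_rfl)
    apply ENNReal.rpow_le_rpow _ (by positivity)
    rw [Measure.restrict_apply MeasurableSet.univ, univ_inter]
    exact measure_mono (ball_subset_ball ht2)
  calc _ ≤ 2 ^ (p - 1) * Λ * (C2 * (W * (M : ℝ≥0∞) ^ (p - 1)) +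
        ENNReal.ofReal (2 ^ a) * (M : ℝ≥0∞) ^ (p - 1) * (V * W)) := by gcongr
    _ = _ := by rw [hC]; ring

end

section
open MeasureTheory Metric Set
open scoped ENNReal NNReal


lemma pow_mul_KK {n : ℕ} {p a : ℝ} (hp : 0 < p) (z : EE n) :
    ‖z‖ₑ ^ p * KK a z ≤ KK (a - p) z := by
  by_cases hz : z = 0
  · subst hz; simp [hp]
  · have h0 : 0 < ‖z‖ := norm_pos_iff.mpr hz
    unfold KK
    rw [← ofReal_norm, ENNReal.ofReal_rpow_of_nonneg h0.le hp.le, ← ENNReal.ofReal_mul (by positivity),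
      ← Real.rpow_add h0]
    apply le_of_eq; congr 2; ring

lemma lip_ker {n : ℕ} (hn : 1 ≤ n) {p s : ℝ} (hp : 1 < p) (hs1 : s < 1) :
    ∃ C : ℝ≥0, ∀ y ∈ ball (0 : EE n) 2, 
      ∫⁻ x in ball (0 : EE n) 2, ‖x - y‖ₑ ^ p * KK (n + s * p) (x - y) ≤ C := by
  have hq : 0 < p - s * p := by nlinarith
  obtain ⟨C, hC⟩ := kernel_near hn hq
  refine ⟨C * (4 ^ (p - s * p) : ℝ).toNNReal, fun y hy => ?_⟩
  have h := hC 4 (by norm_num)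
  rw [mem_ball_zero_iff] at hy
  have hm : ∀ x ∈ ball (0 : EE n) 2, x + (-y) ∈ ball (0 : EE n) 4 := by
    intro x hx
    rw [mem_ball_zero_iff] at *
    have := norm_add_le x (-y)
    rw [norm_neg] at this
    linarith
  calc _ ≤ ∫⁻ x in ball (0 : EE n) 2, KK (n - (p - s * p)) (x + (-y)) := by
        apply lintegral_mono; intro x
        refine (pow_mul_KK (by linarith) _).trans (le_of_eq ?_)
        rw [sub_eq_add_neg x y]; congr 1; ring
    _ ≤ _ := shift_le measurableSet_ball measurableSet_ball hm _
    _ ≤ _ := h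
    _ = _ := by push_cast; rfl

lemma near_hol {n : ℕ} {p s : ℝ} (hp : 1 < p) {v : EE n → ℝ} {m : ℝ} {M : ℝ≥0} {t : ℝ}
    (A : Adm p s v m M t) {X : EE n → EE n → ℝ≥0∞} (hX : Measurable (Function.uncurry X)) :
    ∫⁻ x in ball (0 : EE n) t, ∫⁻ y in ball (0 : EE n) t,
        ‖Jp p (v x - v y)‖ₑ * X x y * KK (n + s * p) (x - y) ≤
      (∫⁻ x in ball (0 : EE n) t, ∫⁻ y in ball (0 : EE n) t,
        X x y ^ p * KK (n + s * p) (x - y)) ^ (1 / p) * (M : ℝ≥0∞) ^ (p - 1) := by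
  have hp0 : 0 < p := by linarith
  have hp1 : 0 < p - 1 := by linarith
  set a := (n:ℝ) + s * p with ha
  have hKm := KK_measurable (n := n) a
  have hJm := Jp_measurable p
  have vm := A.vm
  have hX' : Measurable (fun z : EE n × EE n => X z.1 z.2) := hX
  have hK2 : Measurable (fun z : EE n × EE n => KK a (z.1 - z.2)) := hKm.comp (by fun_prop)
  have e : ∀ (c k : ℝ≥0∞), (c * k ^ (1/p)) ^ p = c ^ p * k := by
    intro c k
    rw [ENNReal.mul_rpow_of_nonneg _ _ hp0.le, ← ENNReal.rpow_mul, one_div_mul_cancel hp0.ne',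
      ENNReal.rpow_one]
  have hMG : ∫⁻ z, (‖v z.1 - v z.2‖ₑ * KK a (z.1 - z.2) ^ (1/p)) ^ p
      ∂((volume.restrict (ball (0 : EE n) t)).prod (volume.restrict (ball (0 : EE n) t)))
      ≤ (M : ℝ≥0∞) ^ p := by
    rw [lintegral_prod _ (by fun_prop)]
    simp only [e]
    exact A.G
  have := holder_pow ((volume.restrict (ball (0 : EE n) t)).prod (volume.restrict (ball (0 : EE n) t)))
    hp (g := fun z => X z.1 z.2 * KK a (z.1 - z.2) ^ (1/p)) (by fun_prop) (by fun_prop) hMG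
  rw [lintegral_prod _ (by fun_prop), lintegral_prod _ (by fun_prop)] at this
  simp only [e] at this
  refine le_trans (le_of_eq ?_) this
  congr 1; funext x; congr 1; funext y
  rw [enorm_Jp hp, ENNReal.mul_rpow_of_nonneg _ _ hp1.le, ← ENNReal.rpow_mul]
  have : KK a (x - y) = KK a (x - y) ^ (1/p) * KK a (x - y) ^ (1 / p * (p - 1)) := by
    rw [← ENNReal.rpow_add_of_nonneg _ _ (by positivity) (by positivity)]
    have : 1 / p + 1 / p * (p - 1) = 1 := by field_simp; ring
    rw [this, ENNReal.rpow_one]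
  nth_rw 1 [this]
  ring

lemma near_est {n : ℕ} (hn : 1 ≤ n) {p s : ℝ} (hp : 1 < p) (hs1 : s < 1) :
    ∃ C : ℝ≥0, ∀ (v η δ : EE n → ℝ) (m : ℝ) (M L : ℝ≥0) (t : ℝ), Adm p s v m M t → t ≤ 2 →
      LipschitzWith L η → Measurable δ → 
    ∫⁻ x in ball (0 : EE n) t, ∫⁻ y in ball (0 : EE n) t,
        ‖Jp p (v x - v y)‖ₑ * (‖η x - η y‖ₑ * ‖δ y‖ₑ) * KK (n + s * p) (x - y) ≤
      C * L * ((∫⁻ x in ball (0 : EE n) t, ‖δ x‖ₑ ^ p) ^ (1 / p) * (M : ℝ≥0∞) ^ (p - 1)) := by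
  obtain ⟨C, hC⟩ := lip_ker hn hp hs1
  have hp0 : 0 < p := by linarith
  refine ⟨C ^ (1 / p), fun v η δ m M L t A ht hη hδ => ?_⟩
  have hηm : Measurable η := hη.continuous.measurable
  have hKm := KK_measurable (n := n) (n + s * p)
  have hK2 : Measurable (fun z : EE n × EE n => KK (n + s * p) (z.1 - z.2)) := hKm.comp (by fun_prop)
  refine (near_hol hp A (X := fun x y => ‖η x - η y‖ₑ * ‖δ y‖ₑ) (by fun_prop)).trans ?_
  rw [← mul_assoc]
  refine mul_le_mul' ?_ le_rfl
  have : ∫⁻ x in ball (0 : EE n) t, ∫⁻ y in ball (0 : EE n) t,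
        (‖η x - η y‖ₑ * ‖δ y‖ₑ) ^ p * KK (n + s * p) (x - y) ≤
        (L : ℝ≥0∞) ^ p * C * ∫⁻ y in ball (0 : EE n) t, ‖δ y‖ₑ ^ p := by
    rw [lintegral_lintegral_swap (by fun_prop)]
    rw [← lintegral_const_mul' _ _ (ENNReal.mul_ne_top (ENNReal.rpow_ne_top_of_nonneg hp0.le (by simp))
      (by simp))]
    apply setLIntegral_mono' measurableSet_ball
    intro y hy
    calc _ ≤ ∫⁻ x in ball (0 : EE n) t, ((L : ℝ≥0∞) ^ p * ‖δ y‖ₑ ^ p) *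
          (‖x - y‖ₑ ^ p * KK (n + s * p) (x - y)) := by
          apply lintegral_mono; intro x
          have h1 : ‖η x - η y‖ₑ ≤ L * ‖x - y‖ₑ := by
            have := hη x y
            rwa [edist_eq_enorm_sub, edist_eq_enorm_sub] at this
          calc (‖η x - η y‖ₑ * ‖δ y‖ₑ) ^ p * KK (n + s * p) (x - y)
              ≤ ((L * ‖x - y‖ₑ) * ‖δ y‖ₑ) ^ p * KK (n + s * p) (x - y) := by gcongr
            _ = _ := by
              rw [ENNReal.mul_rpow_of_nonneg _ _ hp0.le, ENNReal.mul_rpow_of_nonneg _ _ hp0.le]; ring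
      _ = ((L : ℝ≥0∞) ^ p * ‖δ y‖ₑ ^ p) * ∫⁻ x in ball (0 : EE n) t, 
          (‖x - y‖ₑ ^ p * KK (n + s * p) (x - y)) := by
          rw [lintegral_const_mul' _ _ (ENNReal.mul_ne_top (ENNReal.rpow_ne_top_of_nonneg hp0.le (by simp))
            (ENNReal.rpow_ne_top_of_nonneg hp0.le (by simp)))]
      _ ≤ ((L : ℝ≥0∞) ^ p * ‖δ y‖ₑ ^ p) * C := by
          refine mul_le_mul' le_rfl (le_trans (lintegral_mono_set (ball_subset_ball ht)) 
            (hC y (ball_subset_ball ht hy)))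
      _ = _ := by ring
  refine (ENNReal.rpow_le_rpow this (by positivity : 0 ≤ 1 / p)).trans (le_of_eq ?_)
  rw [ENNReal.mul_rpow_of_nonneg _ _ (by positivity), ENNReal.mul_rpow_of_nonneg _ _ (by positivity),
    ← ENNReal.rpow_mul, mul_one_div_cancel hp0.ne', ENNReal.rpow_one,
    ENNReal.coe_rpow_of_nonneg _ (by positivity)]
  ring

/-- The integrand of the weak formulation. -/
def FF {n : ℕ} (p s : ℝ) (v w : EE n → ℝ) (z : EE n × EE n) : ℝ :=
  Jp p (v z.1 - v z.2) * (w z.1 - w z.2) / dist z.1 z.2 ^ ((n:ℝ) + s * p)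

lemma FF_meas {n : ℕ} {p s : ℝ} {v w : EE n → ℝ} (hv : Measurable v) (hw : Measurable w) :
    Measurable (FF p s v w) := by
  have hJm := Jp_measurable p
  unfold FF
  fun_prop

lemma enorm_div_dist {n : ℕ} {a : ℝ} (x y : EE n) (c : ℝ) :
    ‖c / dist x y ^ a‖ₑ = ‖c‖ₑ * KK a (x - y) := by
  rw [div_eq_mul_inv, enorm_mul]
  congr 1
  unfold KK
  rw [dist_eq_norm, ← Real.rpow_neg (norm_nonneg _), Real.enorm_eq_ofReal (by positivity)]

lemma FF_enorm {n : ℕ} {p s : ℝ} (v w : EE n → ℝ) (x y : EE n) :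
    ‖FF p s v w (x, y)‖ₑ = ‖Jp p (v x - v y)‖ₑ * ‖w x - w y‖ₑ * KK (n + s * p) (x - y) := by
  unfold FF
  rw [enorm_div_dist, enorm_mul]

lemma FF_far {n : ℕ} {p s : ℝ} (hp : 1 < p) (hs : 0 < s) :
    ∃ C : ℝ≥0, ∀ (v w : EE n → ℝ) (m : ℝ) (M : ℝ≥0) (t e : ℝ), Measurable w →
      Adm p s v m M t → 1 ≤ t → t ≤ 2 → 0 < e → (∀ x, t - e < ‖x‖ → w x = 0) →
      ∫⁻ z in (ball (0 : EE n) t ×ˢ ball (0 : EE n) t)ᶜ, ‖FF p s v w z‖ₑ ∂(volume.prod volume) ≤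
      C * ENNReal.ofReal ((2 / e) ^ (n + s * p)) *
        ((∫⁻ x in ball (0 : EE n) t, ‖w x‖ₑ ^ p) ^ (1 / p) * (M : ℝ≥0∞) ^ (p - 1)) := by
  obtain ⟨C, hC⟩ := far_est (n := n) hp hs
  refine ⟨2 * C, fun v w m M t e hw A ht1 ht2 he hw0 => ?_⟩
  have h := hC v w m M t e hw A ht1 ht2 he hw0
  have hFm := FF_meas (p := p) (s := s) A.vm hw
  have hFm' : Measurable (fun z : EE n × EE n => ‖FF p s v w z‖ₑ) := hFm.enorm
  set B := ball (0 : EE n) t with hB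
  have hw1 : ∀ x ∈ Bᶜ, w x = 0 := by
    intro x hx
    rw [hB, mem_compl_iff, mem_ball_zero_iff, not_lt] at hx
    exact hw0 x (by linarith)
  have hsub : (B ×ˢ B)ᶜ ⊆ (B ×ˢ Bᶜ ∪ Bᶜ ×ˢ B) ∪ Bᶜ ×ˢ Bᶜ := by
    rintro ⟨x, y⟩ hz
    simp only [mem_compl_iff, mem_prod, mem_union] at *
    tauto
  have hprod : ∀ S T : Set (EE n), ∫⁻ z in S ×ˢ T, ‖FF p s v w z‖ₑ ∂(volume.prod volume) =
      ∫⁻ x in S, ∫⁻ y in T, ‖FF p s v w (x, y)‖ₑ := by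
    intro S T
    rw [← Measure.prod_restrict, lintegral_prod _ (by fun_prop)]
  have h1 : ∫⁻ z in B ×ˢ Bᶜ, ‖FF p s v w z‖ₑ ∂(volume.prod volume) ≤ 
      C * ENNReal.ofReal ((2 / e) ^ (n + s * p)) *
        ((∫⁻ x in ball (0 : EE n) t, ‖w x‖ₑ ^ p) ^ (1 / p) * (M : ℝ≥0∞) ^ (p - 1)) := by
    rw [hprod]
    refine le_trans (lintegral_mono (fun x => setLIntegral_mono' measurableSet_ball.compl ?_)) h
    intro y hy
    rw [FF_enorm, hw1 y hy, sub_zero]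
  have h2 : ∫⁻ z in Bᶜ ×ˢ B, ‖FF p s v w z‖ₑ ∂(volume.prod volume) ≤ 
      C * ENNReal.ofReal ((2 / e) ^ (n + s * p)) *
        ((∫⁻ x in ball (0 : EE n) t, ‖w x‖ₑ ^ p) ^ (1 / p) * (M : ℝ≥0∞) ^ (p - 1)) := by
    rw [hprod, lintegral_lintegral_swap (by
      exact hFm'.aemeasurable)]
    refine le_trans (lintegral_mono (fun x => setLIntegral_mono' measurableSet_ball.compl ?_)) h
    intro y hy
    rw [FF_enorm, hw1 y hy, zero_sub, enorm_neg, KK_comm, enorm_Jp hp, enorm_Jp hp, enorm_sub_rev]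
  have h3 : ∫⁻ z in Bᶜ ×ˢ Bᶜ, ‖FF p s v w z‖ₑ ∂(volume.prod volume) ≤ 0 := by
    rw [hprod]
    refine le_trans (setLIntegral_mono' measurableSet_ball.compl (fun x hx => 
      setLIntegral_mono' (g := fun _ => 0) measurableSet_ball.compl (fun y hy => ?_))) (by simp)
    rw [FF_enorm, hw1 x hx, hw1 y hy]; simp
  refine (lintegral_mono_set hsub).trans ?_
  refine (lintegral_union_le _ _ _).trans ?_
  refine (add_le_add (lintegral_union_le _ _ _) h3).trans ?_
  refine (add_le_add (add_le_add h1 h2) le_rfl).trans (le_of_eq ?_)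
  push_cast; ring

lemma FF_integrable {n : ℕ} (hn : 1 ≤ n) {p s : ℝ} (hp : 1 < p) (hs : 0 < s) (hs1 : s < 1)
    {v w : EE n → ℝ} {m : ℝ} {M L : ℝ≥0} {t e : ℝ} (hw : LipschitzWith L w)
    (A : Adm p s v m M t) (ht1 : 1 ≤ t) (ht2 : t ≤ 2) (he : 0 < e)
    (hw0 : ∀ x, t - e < ‖x‖ → w x = 0) :
    Integrable (FF p s v w) (volume.prod volume) := by
  have hp0 : 0 < p := by linarith
  have hwm : Measurable w := hw.continuous.measurable
  have hFm := FF_meas (p := p) (s := s) A.vm hwm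
  have hFm' : Measurable (fun z : EE n × EE n => ‖FF p s v w z‖ₑ) := hFm.enorm
  have hMt : (M : ℝ≥0∞) ^ (p - 1) ≠ ⊤ := ENNReal.rpow_ne_top_of_nonneg (by linarith) (by simp)
  obtain ⟨C, hC⟩ := near_est (n := n) hn hp hs1
  obtain ⟨C', hC'⟩ := FF_far (n := n) hp hs
  refine ⟨hFm.aestronglyMeasurable, ?_⟩
  rw [HasFiniteIntegral, ← lintegral_add_compl _ (measurableSet_ball.prod measurableSet_ball :
    MeasurableSet (ball (0 : EE n) t ×ˢ ball (0 : EE n) t))]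
  have hwb : ∫⁻ x in ball (0 : EE n) t, ‖w x‖ₑ ^ p < ⊤ := by
    have : ∃ c, ∀ x ∈ ball (0 : EE n) t, ‖w x‖ ≤ c := by
      obtain ⟨c, hc⟩ := (isCompact_closedBall (0 : EE n) t).exists_bound_of_continuousOn
        hw.continuous.continuousOn
      exact ⟨c, fun x hx => hc x (ball_subset_closedBall hx)⟩
    obtain ⟨c, hc⟩ := this
    calc _ ≤ ∫⁻ x in ball (0 : EE n) t, ENNReal.ofReal c ^ p := by
          apply setLIntegral_mono' measurableSet_ball
          intro x hx
          apply ENNReal.rpow_le_rpow _ hp0.le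
          rw [← ofReal_norm]
          exact ENNReal.ofReal_le_ofReal (hc x hx)
      _ < ⊤ := by
          rw [setLIntegral_const]
          exact ENNReal.mul_lt_top (ENNReal.rpow_lt_top_of_nonneg hp0.le (by simp)) measure_ball_lt_top
  refine ENNReal.add_lt_top.mpr ⟨?_, ?_⟩
  · rw [← Measure.prod_restrict, lintegral_prod _ (by fun_prop)]
    simp only [FF_enorm]
    have := hC v w (fun _ => 1) m M L t A ht2 hw measurable_const
    simp only [enorm_one, mul_one] at this
    refine lt_of_le_of_lt this ?_
    refine ENNReal.mul_lt_top (by finiteness) (ENNReal.mul_lt_top ?_ hMt.lt_top)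
    apply ENNReal.rpow_lt_top_of_nonneg (by positivity)
    rw [setLIntegral_const]
    simpa using measure_ball_lt_top.ne
  · refine lt_of_le_of_lt (hC' v w m M t e hwm A ht1 ht2 he hw0) ?_
    refine ENNReal.mul_lt_top (by finiteness) (ENNReal.mul_lt_top ?_ hMt.lt_top)
    exact ENNReal.rpow_lt_top_of_nonneg (by positivity) hwb.ne

end

section
open MeasureTheory Metric Set
open scoped ENNReal NNReal


lemma int_aux {α : Type*} [MeasurableSpace α] {μ : Measure α} {Ψ I E : α → ℝ}
    (hΨ : Integrable Ψ μ) {S : Set α} (hS : MeasurableSet S) (hI : ∀ z, 0 ≤ I z)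
    (hIE : ∀ z ∈ S, I z = Ψ z - E z) (hE : Measurable E) :
    ∫⁻ z in S, ENNReal.ofReal (I z) ∂μ ≤
      ENNReal.ofReal (∫ z, Ψ z ∂μ) + ∫⁻ z in Sᶜ, ‖Ψ z‖ₑ ∂μ + ∫⁻ z in S, ‖E z‖ₑ ∂μ := by
  by_cases hT : ∫⁻ z in S, ‖E z‖ₑ ∂μ = ⊤
  · rw [hT]; simp
  have hEi : IntegrableOn E S μ := ⟨hE.aestronglyMeasurable, lt_top_iff_ne_top.mpr hT⟩
  have h1 : IntegrableOn (fun z => Ψ z - E z) S μ := hΨ.integrableOn.sub hEi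
  have e1 : ∫⁻ z in S, ENNReal.ofReal (I z) ∂μ = ENNReal.ofReal (∫ z in S, (Ψ z - E z) ∂μ) := by
    rw [ofReal_integral_eq_lintegral_ofReal h1]
    · exact setLIntegral_congr_fun hS (fun z hz => by rw [hIE z hz])
    · filter_upwards [ae_restrict_mem hS] with z hz
      rw [← hIE z hz]; exact hI z
  rw [e1, integral_sub hΨ.integrableOn hEi]
  have e2 := integral_add_compl hS hΨ
  have e3 : ∫ z in S, Ψ z ∂μ = ∫ z, Ψ z ∂μ - ∫ z in Sᶜ, Ψ z ∂μ := by linarith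
  rw [e3]
  have i1 : ENNReal.ofReal (-∫ z in Sᶜ, Ψ z ∂μ) ≤ ∫⁻ z in Sᶜ, ‖Ψ z‖ₑ ∂μ := by
    refine le_trans ?_ (enorm_integral_le_lintegral_enorm _)
    rw [Real.enorm_eq_ofReal_abs]; exact ENNReal.ofReal_le_ofReal (neg_le_abs _)
  have i2 : ENNReal.ofReal (-∫ z in S, E z ∂μ) ≤ ∫⁻ z in S, ‖E z‖ₑ ∂μ := by
    refine le_trans ?_ (enorm_integral_le_lintegral_enorm _)
    rw [Real.enorm_eq_ofReal_abs]; exact ENNReal.ofReal_le_ofReal (neg_le_abs _)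
  rw [sub_eq_add_neg, sub_eq_add_neg]
  refine ENNReal.ofReal_add_le.trans (add_le_add (ENNReal.ofReal_add_le.trans (add_le_add le_rfl i1)) i2)

lemma f_term {n : ℕ} {p s : ℝ} (hp : 1 < p) {u f : EE n → ℝ} {m : ℝ} {M : ℝ≥0}
    (D : Dat p s u f m M) {w : EE n → ℝ} (hw : Measurable w) (hw0 : ∀ x ∉ ball (0 : EE n) 2, w x = 0) :
    ‖∫ x, f x * w x‖ₑ ≤ (∫⁻ x, ‖w x‖ₑ ^ p) ^ (1 / p) * (M : ℝ≥0∞) ^ (p - 1) := by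
  have fm := D.fm
  have hp1 : 0 < p - 1 := by linarith
  refine (enorm_integral_le_lintegral_enorm _).trans ?_
  have e1 : ∫⁻ x, ‖f x * w x‖ₑ = ∫⁻ x in ball (0 : EE n) 2, ‖f x * w x‖ₑ := by
    rw [setLIntegral_eq_of_support_subset]
    intro x hx
    by_contra hc
    exact hx (by simp [hw0 x hc])
  rw [e1]
  have hk : ∫⁻ x in ball (0 : EE n) 2, (‖f x‖ₑ ^ (1 / (p - 1))) ^ p ≤ (M : ℝ≥0∞) ^ p := by
    simp only [← ENNReal.rpow_mul]
    have : 1 / (p - 1) * p = p / (p - 1) := by ring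
    rw [this]; exact D.F
  have := holder_pow (volume.restrict (ball (0 : EE n) 2)) hp (g := fun x => ‖w x‖ₑ)
    (by fun_prop) (by fun_prop) hk
  refine le_trans (le_of_eq ?_) (this.trans (mul_le_mul' (ENNReal.rpow_le_rpow 
    (setLIntegral_le_lintegral _ _) (by positivity)) le_rfl))
  congr 1; funext x
  rw [← ENNReal.rpow_mul, one_div_mul_cancel hp1.ne', ENNReal.rpow_one, enorm_mul, mul_comm]

lemma lip_prod {n : ℕ} {η δ : EE n → ℝ} {Lη Ld K : ℝ≥0} {t : ℝ} (hη : LipschitzWith Lη η)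
    (hη1 : ∀ x, |η x| ≤ 1) (hη0 : ∀ x, t < ‖x‖ → η x = 0)
    (hδ : ∀ x y, ‖x‖ ≤ t → ‖y‖ ≤ t → |δ x - δ y| ≤ Ld * ‖x - y‖)
    (hK : ∀ x, ‖x‖ ≤ t → |δ x| ≤ K) : LipschitzWith (Ld + Lη * K) (fun x => η x * δ x) := by
  have hηl : ∀ x y, |η x - η y| ≤ Lη * ‖x - y‖ := by
    intro x y
    have := hη.dist_le_mul x y
    rwa [Real.dist_eq, dist_eq_norm] at this
  have key : ∀ x y, ‖y‖ ≤ t → |η x * δ x - η y * δ y| ≤ (Ld + Lη * K) * ‖x - y‖ := by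
    intro x y hy
    have h2 : |(η x - η y) * δ y| ≤ Lη * K * ‖x - y‖ := by
      rw [abs_mul]
      calc _ ≤ (Lη * ‖x - y‖) * K := mul_le_mul (hηl x y) (hK y hy) (abs_nonneg _) (by positivity)
        _ = _ := by ring
    have h0 : 0 ≤ (Ld : ℝ) * ‖x - y‖ := by positivity
    by_cases hx : ‖x‖ ≤ t
    · have h1 : |η x * (δ x - δ y)| ≤ Ld * ‖x - y‖ := by
        rw [abs_mul]
        calc _ ≤ 1 * (Ld * ‖x - y‖) := mul_le_mul (hη1 x) (hδ x y hx hy) (abs_nonneg _) (by norm_num)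
          _ = _ := by ring
      have : η x * δ x - η y * δ y = η x * (δ x - δ y) + (η x - η y) * δ y := by ring
      rw [this]
      refine (abs_add_le _ _).trans ?_
      linarith
    · push Not at hx
      have : η x * δ x - η y * δ y = (η x - η y) * δ y := by rw [hη0 x hx]; ring
      rw [this]; linarith
  apply LipschitzWith.of_dist_le_mul
  intro x y
  rw [Real.dist_eq, dist_eq_norm]
  push_cast
  by_cases hy : ‖y‖ ≤ t
  · exact key x y hy
  · by_cases hx : ‖x‖ ≤ t
    · rw [abs_sub_comm, norm_sub_rev]; exact key y x hx
    · push Not at hx hy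
      rw [hη0 x hx, hη0 y hy]; simp; positivity

lemma energy {n : ℕ} (hn : 1 ≤ n) {p s : ℝ} (hp : 1 < p) (hs : 0 < s) (hs1 : s < 1) :
    ∃ C : ℝ≥0, ∀ (u f : EE n → ℝ) (m : ℝ) (M Lu : ℝ≥0), Dat p s u f m M →
      LipschitzOnWith Lu u (closedBall 0 2) →
      ∀ (h : EE n) (η : EE n → ℝ) (Lη : ℝ≥0) (t e : ℝ), 1 ≤ t → t ≤ 3/2 → 0 < e → ‖h‖ ≤ 1/2 →
      LipschitzWith Lη η → (∀ x, 0 ≤ η x) → (∀ x, η x ≤ 1) → (∀ x, t - e < ‖x‖ → η x = 0) →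
      ∫⁻ x in ball (0 : EE n) t, ∫⁻ y in ball (0 : EE n) t,
        ENNReal.ofReal (η x * ((Jp p (u (x + h) - u (y + h)) - Jp p (u x - u y)) *
          ((u (x + h) - u (y + h)) - (u x - u y)))) * KK (n + s * p) (x - y) ≤
      C * (1 + Lη + ENNReal.ofReal ((2 / e) ^ (n + s * p))) *
        ((∫⁻ x in ball (0 : EE n) t, ‖u (x + h) - u x‖ₑ ^ p) ^ (1 / p) * (M : ℝ≥0∞) ^ (p - 1)) := by
  obtain ⟨C1, hC1⟩ := near_est hn hp hs1
  obtain ⟨C2, hC2⟩ := FF_far (n := n) hp hs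
  refine ⟨2 + 2 * C2 + 2 * C1, fun u f m M Lu D hLu h η Lη t e ht1 ht2 he hh hη hη0 hη1 hηs => ?_⟩
  have hp0 : 0 < p := by linarith
  have um := D.um
  have hηm : Measurable η := hη.continuous.measurable
  have hJm := Jp_measurable p
  set a := (n:ℝ) + s * p with ha
  have ha0 : 0 < a := by positivity
  set B := ball (0 : EE n) t with hB
  set δ : EE n → ℝ := fun x => u (x + h) - u x with hδd
  have hδm : Measurable δ := by fun_prop
  set w : EE n → ℝ := fun x => η x * δ x with hwd
  have Ah := D.adm hp hs ht1 hh (by linarith)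
  have A0 : Adm p s u m M t := by
    have := D.adm hp hs ht1 (h := (0 : EE n)) (by simp) (by simp; linarith)
    simpa using this
  have hul : ∀ x y, ‖x‖ ≤ 2 → ‖y‖ ≤ 2 → |u x - u y| ≤ Lu * ‖x - y‖ := by
    intro x y hx hy
    have := hLu.dist_le_mul x (by simpa using hx) y (by simpa using hy)
    rwa [Real.dist_eq, dist_eq_norm] at this
  have hnh : ∀ x, ‖x‖ ≤ t → ‖x + h‖ ≤ 2 := fun x hx => (norm_add_le x h).trans (by linarith)
  have hwl : LipschitzWith (2 * Lu + Lη * Lu) w := by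
    apply lip_prod (t := t) hη
    · intro x; rw [abs_of_nonneg (hη0 x)]; exact hη1 x
    · intro x hx; exact hηs x (by linarith)
    · intro x y hx hy
      have h1 := hul (x + h) (y + h) (hnh x hx) (hnh y hy)
      have h2 := hul x y (by linarith) (by linarith)
      rw [add_sub_add_right_eq_sub] at h1
      have : δ x - δ y = (u (x + h) - u (y + h)) - (u x - u y) := by simp only [hδd]; ring
      rw [this]
      refine (abs_sub _ _).trans ?_
      push_cast; linarith
    · intro x hx
      have h1 := hul (x + h) x (hnh x hx) (by linarith)
      rw [add_sub_cancel_left] at h1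
      refine h1.trans ?_
      have : (0:ℝ) ≤ Lu := by positivity
      nlinarith
  have hwm : Measurable w := hwl.continuous.measurable
  have hws : ∀ x, t - e < ‖x‖ → w x = 0 := fun x hx => by simp [hwd, hηs x hx]
  have hF0 := FF_integrable hn hp hs hs1 hwl A0 ht1 (by linarith) he hws
  have hFh := FF_integrable hn hp hs hs1 hwl Ah ht1 (by linarith) he hws
  set uh : EE n → ℝ := fun x => u (x + h) with huh
  -- tested equations
  have E0 : ∫ z, FF p s u w z ∂(volume.prod volume) = ∫ x, f x * w x := by
    rw [integral_prod _ hF0, ← D.eq w ⟨_, hwl⟩ ⟨t - e, by linarith, hws⟩]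
    rfl
  have hwl' : LipschitzWith (2 * Lu + Lη * Lu) (fun x => w (x - h)) := by
    apply LipschitzWith.of_dist_le_mul
    intro x y
    have := hwl.dist_le_mul (x - h) (y - h)
    rwa [dist_sub_right] at this
  have hws' : ∀ x, t - e + ‖h‖ < ‖x‖ → w (x - h) = 0 := by
    intro x hx
    apply hws
    have := norm_add_le (x - h) h
    rw [sub_add_cancel] at this
    linarith
  have Eh : ∫ z, FF p s uh w z ∂(volume.prod volume) = ∫ x, f x * w (x - h) := by
    rw [integral_prod _ hFh, ← D.eq (fun x => w (x - h)) ⟨_, hwl'⟩ ⟨t - e + ‖h‖, by linarith, hws'⟩]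
    symm
    rw [← integral_add_right_eq_self _ h]
    congr 1; funext x
    rw [← integral_add_right_eq_self _ h]
    congr 1; funext y
    simp [FF, huh]
  set N := (∫⁻ x in B, ‖δ x‖ₑ ^ p) ^ (1 / p) with hN
  have hwB : ∫⁻ x, ‖w x‖ₑ ^ p = ∫⁻ x in B, ‖w x‖ₑ ^ p := by
    rw [setLIntegral_eq_of_support_subset]
    intro x hx
    by_contra hc
    rw [hB, mem_ball_zero_iff, not_lt] at hc
    exact hx (by simp [hws x (by linarith), hp0])
  have hwN : (∫⁻ x in B, ‖w x‖ₑ ^ p) ^ (1 / p) ≤ N := by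
    apply ENNReal.rpow_le_rpow _ (by positivity)
    apply lintegral_mono; intro x
    apply ENNReal.rpow_le_rpow _ hp0.le
    simp only [hwd]
    rw [enorm_mul]
    calc _ ≤ 1 * ‖δ x‖ₑ := by
          gcongr
          rw [Real.enorm_eq_ofReal (hη0 x)]
          simpa using hη1 x
      _ = _ := one_mul _
  set Q := N * (M : ℝ≥0∞) ^ (p - 1) with hQ
  have F0 : ‖∫ x, f x * w x‖ₑ ≤ Q := by
    refine (f_term hp D hwm ?_).trans ?_
    · intro x hx; rw [mem_ball_zero_iff, not_lt] at hx; exact hws x (by linarith)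
    · rw [hwB, hQ]; gcongr
  have Fh : ‖∫ x, f x * w (x - h)‖ₑ ≤ Q := by
    refine (f_term hp D (w := fun x => w (x - h)) (by fun_prop) ?_).trans ?_
    · intro x hx; rw [mem_ball_zero_iff, not_lt] at hx; exact hws' x (by linarith)
    · rw [lintegral_sub_right_eq_self (fun x => ‖w x‖ₑ ^ p) h, hwB, hQ]; gcongr
  have G0 := hC2 u w m M t e hwm A0 ht1 (by linarith) he hws
  have Gh := hC2 uh w m M t e hwm Ah ht1 (by linarith) he hws
  have N0 := hC1 u η δ m M Lη t A0 (by linarith) hη hδm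
  have Nh := hC1 uh η δ m M Lη t Ah (by linarith) hη hδm
  rw [← hB, ← hN, ← hQ] at N0 Nh
  set Λ := ENNReal.ofReal ((2 / e) ^ a) with hΛ
  have hGQ : ∀ {X : ℝ≥0∞}, X ≤ C2 * Λ * ((∫⁻ x in B, ‖w x‖ₑ ^ p) ^ (1 / p) * (M : ℝ≥0∞) ^ (p - 1))
      → X ≤ C2 * Λ * Q := fun hX => hX.trans (by rw [hQ]; gcongr)
  have G0' := hGQ G0
  have Gh' := hGQ Gh
  -- the functions
  set Ψ : EE n × EE n → ℝ := fun z => FF p s uh w z - FF p s u w z with hΨ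
  set I : EE n × EE n → ℝ := fun z => η z.1 * ((Jp p (uh z.1 - uh z.2) - Jp p (u z.1 - u z.2)) *
          ((uh z.1 - uh z.2) - (u z.1 - u z.2))) / dist z.1 z.2 ^ a with hI
  set E : EE n × EE n → ℝ := fun z => (Jp p (uh z.1 - uh z.2) - Jp p (u z.1 - u z.2)) *
          ((η z.1 - η z.2) * δ z.2) / dist z.1 z.2 ^ a with hE
  have uhm : Measurable uh := Ah.vm
  have hEm : Measurable E := by rw [hE]; fun_prop
  have hmon : ∀ x y, 0 ≤ (Jp p (uh x - uh y) - Jp p (u x - u y)) *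
          ((uh x - uh y) - (u x - u y)) := fun x y =>
    (mono_ineq hp (uh x - uh y) (u x - u y) (τ := 1) one_pos le_rfl).1
  have main := int_aux (μ := (volume : Measure (EE n)).prod volume) (Ψ := Ψ) (I := I) (E := E)
    (hFh.sub hF0) (S := B ×ˢ B) (measurableSet_ball.prod measurableSet_ball)
    (fun z => div_nonneg (mul_nonneg (hη0 _) (hmon _ _)) (by positivity))
    (fun z _ => by
      simp only [hI, hΨ, hE, FF, ← ha, hwd, hδd, huh]
      ring) hEm
  have e1 : ∫⁻ z in B ×ˢ B, ENNReal.ofReal (I z) ∂(volume.prod volume) = 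
    ∫⁻ x in B, ∫⁻ y in B, ENNReal.ofReal (η x * ((Jp p (u (x + h) - u (y + h)) - Jp p (u x - u y)) *
          ((u (x + h) - u (y + h)) - (u x - u y)))) * KK a (x - y) := by
    rw [← Measure.prod_restrict, lintegral_prod _ (by rw [hI]; fun_prop)]
    congr 1; funext x; congr 1; funext y
    have h1 := mul_nonneg (hη0 x) (hmon x y)
    rw [← Real.enorm_eq_ofReal (div_nonneg h1 (by positivity)), enorm_div_dist,
      Real.enorm_eq_ofReal h1]
  rw [← e1]
  refine main.trans ?_
  have b1 : ENNReal.ofReal (∫ z, Ψ z ∂(volume.prod volume)) ≤ 2 * Q := by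
    rw [hΨ, integral_sub hFh hF0, E0, Eh]
    refine le_trans ?_ (le_trans (enorm_sub_le.trans (add_le_add Fh F0)) (le_of_eq (two_mul Q).symm))
    rw [Real.enorm_eq_ofReal_abs]; exact ENNReal.ofReal_le_ofReal (le_abs_self _)
  have b2 : ∫⁻ z in (B ×ˢ B)ᶜ, ‖Ψ z‖ₑ ∂(volume.prod volume) ≤ 2 * (C2 * Λ * Q) := by
    refine le_trans (lintegral_mono (fun z => enorm_sub_le)) ?_
    rw [lintegral_add_left (FF_meas uhm hwm).enorm, two_mul]
    exact add_le_add Gh' G0'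
  have b3 : ∫⁻ z in B ×ˢ B, ‖E z‖ₑ ∂(volume.prod volume) ≤ 2 * (C1 * Lη * Q) := by
    have hK2 : Measurable (fun z : EE n × EE n => KK a (z.1 - z.2)) := 
      (KK_measurable (n := n) a).comp (by fun_prop)
    have hpt : ∀ z, ‖E z‖ₑ ≤ 
      ‖Jp p (uh z.1 - uh z.2)‖ₑ * (‖η z.1 - η z.2‖ₑ * ‖δ z.2‖ₑ) * KK a (z.1 - z.2) +
      ‖Jp p (u z.1 - u z.2)‖ₑ * (‖η z.1 - η z.2‖ₑ * ‖δ z.2‖ₑ) * KK a (z.1 - z.2) := by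
      intro z
      simp only [hE]
      rw [enorm_div_dist, enorm_mul, enorm_mul, ← add_mul, ← add_mul]
      gcongr
      exact enorm_sub_le
    refine le_trans (lintegral_mono hpt) ?_
    rw [lintegral_add_left (by fun_prop), ← Measure.prod_restrict, lintegral_prod _ (by fun_prop),
      lintegral_prod _ (by fun_prop), two_mul]
    exact add_le_add Nh N0
  refine (add_le_add (add_le_add b1 b2) b3).trans ?_
  push_cast
  have : 2 * Q + 2 * (C2 * Λ * Q) + 2 * (C1 * Lη * Q) + (2 * (Lη + Λ) * Q + 2 * C2 * (1 + Lη) * Q 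
    + 2 * C1 * (1 + Λ) * Q) = (2 + 2 * C2 + 2 * C1) * (1 + Lη + Λ) * Q := by ring
  rw [← this]
  exact le_self_add

end

section
open MeasureTheory Metric Set
open scoped ENNReal NNReal


lemma mono_enn {p : ℝ} (hp : 1 < p) (a b : ℝ) {τ : ℝ} (hτ : 0 < τ) (hτ1 : τ ≤ 1) :
    ‖a - b‖ₑ ^ p ≤ ENNReal.ofReal (2 ^ p + 1 / (p - 1)) *
      (ENNReal.ofReal τ⁻¹ * ENNReal.ofReal ((Jp p a - Jp p b) * (a - b)) +
        ENNReal.ofReal τ * (2 ^ p * (‖a‖ₑ ^ p + ‖b‖ₑ ^ p))) := by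
  have hp0 : 0 < p := by linarith
  have hp1 : 0 < p - 1 := by linarith
  obtain ⟨h0, h1⟩ := mono_ineq hp a b hτ hτ1
  generalize (Jp p a - Jp p b) * (a - b) = W at h0 h1 ⊢
  have h2 : ENNReal.ofReal ((|a| + |b|) ^ p) ≤ 2 ^ p * (‖a‖ₑ ^ p + ‖b‖ₑ ^ p) := by
    refine le_trans (le_of_eq ?_) (add_rpow_le_two hp0.le _ _)
    rw [← ENNReal.ofReal_rpow_of_nonneg (by positivity) hp0.le, ENNReal.ofReal_add (abs_nonneg _)
      (abs_nonneg _), Real.enorm_eq_ofReal_abs, Real.enorm_eq_ofReal_abs]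
  rw [Real.enorm_eq_ofReal_abs, ENNReal.ofReal_rpow_of_nonneg (abs_nonneg _) hp0.le]
  refine (ENNReal.ofReal_le_ofReal h1).trans ?_
  rw [ENNReal.ofReal_mul (by positivity)]
  refine mul_le_mul' le_rfl ?_
  rw [ENNReal.ofReal_add (by positivity) (by positivity),
    ENNReal.ofReal_mul (by positivity), ENNReal.ofReal_mul hτ.le]
  gcongr

lemma frac_term {n : ℕ} (hn : 1 ≤ n) {p s : ℝ} (hp : 1 < p) (hs1 : s < 1) :
    ∃ C : ℝ≥0, ∀ (Ω : Set (EE n)) (u : EE n → ℝ), IsOpen Ω → ContDiffOn ℝ 1 u Ω → Measurable u →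
      ∀ (R σ ρ : ℝ), 0 < σ → R + σ ≤ ρ → ball 0 ρ ⊆ Ω →
      ∫⁻ x in ball (0 : EE n) R, ∫⁻ ξ in ball (0 : EE n) σ,
        ‖u x - u (x + ξ)‖ₑ ^ p * KK (n + s * p) ξ ≤
      C * ENNReal.ofReal (σ ^ (p - s * p)) * ∫⁻ x in ball (0 : EE n) ρ, ‖gradient u x‖ₑ ^ p := by
  have hq : 0 < p - s * p := by nlinarith
  obtain ⟨C, hC⟩ := kernel_near hn hq
  refine ⟨C, fun Ω u hΩ hu um R σ ρ hσ hR hρ => ?_⟩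
  have hKm := KK_measurable (n := n) (n + s * p)
  have hKm' := KK_measurable (n := n) (n - (p - s * p))
  rw [lintegral_lintegral_swap (by fun_prop)]
  set Z := ∫⁻ x in ball (0 : EE n) ρ, ‖gradient u x‖ₑ ^ p with hZ
  calc _ ≤ ∫⁻ ξ in ball (0 : EE n) σ, KK (n - (p - s * p)) ξ * Z := by
        apply setLIntegral_mono' measurableSet_ball
        intro ξ hξ
        rw [mem_ball_zero_iff] at hξ
        rw [lintegral_mul_const' _ _ (by simp [KK])]
        simp only [enorm_sub_rev (u _) (u (_ + ξ))]
        refine (mul_le_mul' (diff_quot hΩ hu hp hρ (by linarith)) le_rfl).trans ?_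
        rw [mul_right_comm]
        refine mul_le_mul' ((pow_mul_KK (by linarith) ξ).trans (le_of_eq ?_)) le_rfl
        congr 1; ring
    _ = (∫⁻ ξ in ball (0 : EE n) σ, KK (n - (p - s * p)) ξ) * Z := lintegral_mul_const _ hKm'
    _ ≤ _ := mul_le_mul' (hC σ hσ) le_rfl

lemma cutoff {n : ℕ} {r d : ℝ} (hd : 0 < d) : ∃ η : EE n → ℝ, 
    LipschitzWith (Real.toNNReal (4 / d)) η ∧ (∀ x, 0 ≤ η x) ∧ (∀ x, η x ≤ 1) ∧ 
    (∀ x, r + d / 2 < ‖x‖ → η x = 0) ∧ (∀ x, ‖x‖ ≤ r + d / 4 → η x = 1) := by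
  refine ⟨fun x => min 1 (max 0 ((r + d / 2 - ‖x‖) * (4 / d))), ?_, ?_, ?_, ?_, ?_⟩
  · have h1 : LipschitzWith (Real.toNNReal (4 / d)) (fun x : EE n => (r + d / 2 - ‖x‖) * (4 / d)) := by
      apply LipschitzWith.of_dist_le_mul
      intro x y
      rw [Real.dist_eq, dist_eq_norm, Real.coe_toNNReal _ (by positivity), ← sub_mul, abs_mul,
        abs_of_pos (by positivity : 0 < 4 / d), mul_comm]
      gcongr
      have : r + d / 2 - ‖x‖ - (r + d / 2 - ‖y‖) = ‖y‖ - ‖x‖ := by ring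
      rw [this, norm_sub_rev]
      exact abs_norm_sub_norm_le y x
    exact (h1.const_max 0).const_min 1
  · intro x; exact le_min (by norm_num) (le_max_left _ _)
  · intro x; exact min_le_left _ _
  · intro x hx
    have : (r + d / 2 - ‖x‖) * (4 / d) ≤ 0 := mul_nonpos_of_nonpos_of_nonneg (by linarith) (by positivity)
    simp [max_eq_left this]
  · intro x hx
    have : 1 ≤ (r + d / 2 - ‖x‖) * (4 / d) := by
      rw [mul_div_assoc', le_div_iff₀ hd]; linarith
    refine min_eq_left ?_
    exact this.trans (le_max_right _ _)

lemma key1 {n : ℕ} (hn : 1 ≤ n) {p s : ℝ} (hp : 1 < p) (hs : 0 < s) (hs1 : s < 1) :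
    ∃ C : ℝ≥0, ∀ (Ω : Set (EE n)) (u f : EE n → ℝ) (m : ℝ) (M Lu : ℝ≥0), Dat p s u f m M →
      IsOpen Ω → ContDiffOn ℝ 1 u Ω → closedBall 0 2 ⊆ Ω →
      LipschitzOnWith Lu u (closedBall 0 2) →
      ∀ (r ρ τ : ℝ) (h : EE n), 1 ≤ r → r < ρ → ρ ≤ 3/2 → h ≠ 0 → ‖h‖ ≤ (ρ - r) / 8 →
      0 < τ → τ ≤ 1 →
      ∫⁻ x in ball (0 : EE n) r, ‖(u (x + h + h) - u (x + h)) - (u (x + h) - u x)‖ₑ ^ p ≤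
      C * ENNReal.ofReal (‖h‖ ^ (s * p)) *
        (ENNReal.ofReal τ⁻¹ * ENNReal.ofReal ((8 / (ρ - r)) ^ (n + s * p + 1)) * 
          (‖h‖ₑ * (∫⁻ x in ball (0 : EE n) ρ, ‖gradient u x‖ₑ ^ p) ^ (1 / p) * (M : ℝ≥0∞) ^ (p - 1)) +
         ENNReal.ofReal τ * ENNReal.ofReal (‖h‖ ^ (p - s * p)) * 
          ∫⁻ x in ball (0 : EE n) ρ, ‖gradient u x‖ₑ ^ p) := by
  obtain ⟨C1, hC1⟩ := second_diff (n := n) hp hs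
  obtain ⟨C2, hC2⟩ := energy hn hp hs hs1
  obtain ⟨C3, hC3⟩ := frac_term hn hp hs1
  have hp0 : 0 < p := by linarith
  have hp1 : 0 < p - 1 := by linarith
  set c1 := ENNReal.ofReal (2 ^ p + 1 / (p - 1)) with hc1
  have h2pt : (2:ℝ≥0∞) ^ p ≠ ⊤ := ENNReal.rpow_ne_top_of_nonneg hp0.le (by simp)
  set CC : ℝ≥0∞ := C1 * c1 * (3 * C2 + 2 ^ p * (2 * C3)) with hCC
  have hCCt : CC ≠ ⊤ := by
    apply ENNReal.mul_ne_top (ENNReal.mul_ne_top (by simp) (by simp [hc1]))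
    exact ENNReal.add_ne_top.mpr ⟨by finiteness, ENNReal.mul_ne_top h2pt (by finiteness)⟩
  refine ⟨CC.toNNReal, fun Ω u f m M Lu D hΩ hu hΩ2 hLu r ρ τ h hr hrρ hρ hh0 hh hτ hτ1 => ?_⟩
  rw [ENNReal.coe_toNNReal hCCt]
  set d := ρ - r with hd
  have hd0 : 0 < d := by linarith
  have hd2 : d ≤ 1/2 := by linarith
  have um := D.um
  have hJm := Jp_measurable p
  have hKm := KK_measurable (n := n) (n + s * p)
  have hballΩ : ball (0 : EE n) ρ ⊆ Ω := (ball_subset_ball (by linarith)).trans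
    (ball_subset_closedBall.trans hΩ2)
  have hhn : 0 < ‖h‖ := norm_pos_iff.mpr hh0
  obtain ⟨η, hηl, hη0, hη1, hηs, hηe⟩ := cutoff (n := n) (r := r) hd0
  set Z := ∫⁻ x in ball (0 : EE n) ρ, ‖gradient u x‖ₑ ^ p with hZ
  set a := (n:ℝ) + s * p with ha
  have ha0 : 0 < a := by positivity
  set t := r + 3 * d / 4 with ht
  set Λ := ENNReal.ofReal ((8 / d) ^ (a + 1)) with hΛ
  -- energy
  have hE := hC2 u f m M Lu D hLu h η _ t (d / 4) (by linarith) (by linarith) (by linarith) 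
    (by linarith) hηl hη0 hη1 (fun x hx => hηs x (by linarith))
  have hN : (∫⁻ x in ball (0 : EE n) t, ‖u (x + h) - u x‖ₑ ^ p) ^ (1 / p) ≤ ‖h‖ₑ * Z ^ (1 / p) := by
    have := diff_quot hΩ hu hp (r := t) (h := h) hballΩ (by linarith)
    refine (ENNReal.rpow_le_rpow this (by positivity : 0 ≤ 1 / p)).trans (le_of_eq ?_)
    rw [ENNReal.mul_rpow_of_nonneg _ _ (by positivity), ← ENNReal.rpow_mul, 
      mul_one_div_cancel hp0.ne', ENNReal.rpow_one]
  have hLam : 1 + (Real.toNNReal (4 / d) : ℝ≥0∞) + ENNReal.ofReal ((2 / (d / 4)) ^ a) ≤ 3 * Λ := by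
    have h8 : 1 ≤ 8 / d := by rw [le_div_iff₀ hd0]; linarith
    have i1 : (1 : ℝ≥0∞) ≤ Λ := by
      rw [hΛ, ENNReal.one_le_ofReal]; exact Real.one_le_rpow h8 (by positivity)
    have i2 : (Real.toNNReal (4 / d) : ℝ≥0∞) ≤ Λ := by
      apply ENNReal.ofReal_le_ofReal
      calc 4 / d ≤ 8 / d := by gcongr; norm_num
        _ = (8 / d) ^ (1:ℝ) := (Real.rpow_one _).symm
        _ ≤ _ := Real.rpow_le_rpow_of_exponent_le h8 (by linarith)
    have i3 : ENNReal.ofReal ((2 / (d / 4)) ^ a) ≤ Λ := by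
      apply ENNReal.ofReal_le_ofReal
      have : 2 / (d / 4) = 8 / d := by field_simp; norm_num
      rw [this]
      exact Real.rpow_le_rpow_of_exponent_le h8 (by linarith)
    calc _ ≤ Λ + Λ + Λ := by gcongr
      _ = _ := by ring
  have hE2 : ∫⁻ x in ball (0 : EE n) (r + ‖h‖), ∫⁻ ξ in ball (0 : EE n) ‖h‖,
      ENNReal.ofReal ((Jp p (u (x + h) - u (x + ξ + h)) - Jp p (u x - u (x + ξ))) *
        ((u (x + h) - u (x + ξ + h)) - (u x - u (x + ξ)))) * KK a ξ ≤ 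
      3 * C2 * Λ * (‖h‖ₑ * Z ^ (1 / p) * (M : ℝ≥0∞) ^ (p - 1)) := by
    refine le_trans ?_ (hE.trans ?_)
    · refine le_trans ?_ (lintegral_mono_set (ball_subset_ball (by linarith : r + ‖h‖ ≤ t)))
      apply setLIntegral_mono' measurableSet_ball
      intro x hx
      rw [mem_ball_zero_iff] at hx
      rw [hηe x (by linarith)]
      simp only [one_mul]
      refine le_trans (le_of_eq ?_) (shift_le (h := x) measurableSet_ball measurableSet_ball 
        (S := ball (0 : EE n) ‖h‖) (fun ξ hξ => ?_) _)
      · congr 1; funext ξ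
        rw [add_comm ξ x, sub_add_cancel_left, KK_neg]
      · rw [mem_ball_zero_iff] at *
        have := norm_add_le ξ x
        linarith
    · calc _ ≤ C2 * (3 * Λ) * ((‖h‖ₑ * Z ^ (1 / p)) * (M : ℝ≥0∞) ^ (p - 1)) := by gcongr
        _ = _ := by ring
  have hb := hC3 Ω u hΩ hu um (r + ‖h‖) ‖h‖ ρ hhn (by linarith) hballΩ
  have ha' : ∫⁻ x in ball (0 : EE n) (r + ‖h‖), ∫⁻ ξ in ball (0 : EE n) ‖h‖,
        ‖u (x + h) - u (x + ξ + h)‖ₑ ^ p * KK a ξ ≤ C3 * ENNReal.ofReal (‖h‖ ^ (p - s * p)) * Z := by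
    refine le_trans ?_ (hC3 Ω u hΩ hu um (r + 2 * ‖h‖) ‖h‖ ρ hhn (by linarith) hballΩ)
    refine le_trans (le_of_eq ?_) (shift_le (h := h) measurableSet_ball measurableSet_ball 
        (S := ball (0 : EE n) (r + ‖h‖)) (fun ξ hξ => ?_) _)
    · congr 1; funext x; congr 1; funext ξ
      rw [add_right_comm]
    · rw [mem_ball_zero_iff] at *
      have := norm_add_le ξ h
      linarith
  have h0 := hC1 (fun x => u (x + h) - u x) (by fun_prop) h hh0 r
  refine h0.trans ?_
  have hpt : ∀ x ξ : EE n, ‖(u (x + h) - u x) - (u (x + ξ + h) - u (x + ξ))‖ₑ ^ p * KK a ξ ≤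
      c1 * (ENNReal.ofReal τ⁻¹ * (ENNReal.ofReal ((Jp p (u (x + h) - u (x + ξ + h)) - Jp p (u x - u (x + ξ))) *
        ((u (x + h) - u (x + ξ + h)) - (u x - u (x + ξ)))) * KK a ξ) + ENNReal.ofReal τ * 2 ^ p *
        (‖u (x + h) - u (x + ξ + h)‖ₑ ^ p * KK a ξ + ‖u x - u (x + ξ)‖ₑ ^ p * KK a ξ)) := by
    intro x ξ
    have e : (u (x + h) - u x) - (u (x + ξ + h) - u (x + ξ)) = 
      (u (x + h) - u (x + ξ + h)) - (u x - u (x + ξ)) := by ring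
    rw [e]
    refine (mul_le_mul' (mono_enn hp _ _ hτ hτ1) le_rfl).trans (le_of_eq ?_)
    rw [← hc1]; ring
  have hprod : ∀ g : EE n → EE n → ℝ≥0∞, Measurable (Function.uncurry g) → 
      ∫⁻ x in ball (0 : EE n) (r + ‖h‖), ∫⁻ ξ in ball (0 : EE n) ‖h‖, g x ξ = 
      ∫⁻ z, g z.1 z.2 ∂((volume.restrict (ball (0 : EE n) (r + ‖h‖))).prod 
        (volume.restrict (ball (0 : EE n) ‖h‖))) := fun g hg => by 
    rw [lintegral_prod _ (by exact hg.aemeasurable)]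
  have hbig : ∫⁻ x in ball (0 : EE n) (r + ‖h‖), ∫⁻ ξ in ball (0 : EE n) ‖h‖,
      ‖(u (x + h) - u x) - (u (x + ξ + h) - u (x + ξ))‖ₑ ^ p * KK a ξ ≤
      c1 * (ENNReal.ofReal τ⁻¹ * (3 * C2 * Λ * (‖h‖ₑ * Z ^ (1 / p) * (M : ℝ≥0∞) ^ (p - 1))) + 
        ENNReal.ofReal τ * 2 ^ p * (C3 * ENNReal.ofReal (‖h‖ ^ (p - s * p)) * Z +
          C3 * ENNReal.ofReal (‖h‖ ^ (p - s * p)) * Z)) := by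
    refine (lintegral_mono (fun x => lintegral_mono (fun ξ => hpt x ξ))).trans ?_
    rw [hprod _ (by fun_prop)] at hE2 ha' hb ⊢
    rw [lintegral_const_mul' _ _ (by simp [hc1]), lintegral_add_left (by fun_prop),
      lintegral_const_mul' _ _ (by simp), lintegral_const_mul' _ _ (ENNReal.mul_ne_top (by simp) h2pt),
      lintegral_add_left (by fun_prop)]
    gcongr
  refine (mul_le_mul' le_rfl hbig).trans ?_
  set H := ENNReal.ofReal (‖h‖ ^ (p - s * p))
  set H2 := ENNReal.ofReal (‖h‖ ^ (s * p))
  set T1 := ENNReal.ofReal τ⁻¹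
  set T2 := ENNReal.ofReal τ
  set Y := ‖h‖ₑ * Z ^ (1 / p) * (M : ℝ≥0∞) ^ (p - 1)
  have : C1 * H2 * (c1 * (T1 * (3 * C2 * Λ * Y) + T2 * 2 ^ p * (C3 * H * Z + C3 * H * Z))) + 
    C1 * H2 * c1 * (T1 * (2 ^ p * (2 * C3)) * Λ * Y + T2 * (3 * C2) * H * Z)
    = CC * H2 * (T1 * Λ * Y + T2 * H * Z) := by rw [hCC]; ring
  rw [← this]
  exact le_self_add

end

section
open MeasureTheory Metric Set
open scoped ENNReal NNReal


lemma young_enn {p : ℝ} (hp : 1 < p) (z L M : ℝ≥0∞) :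
    L * z * M ^ (p - 1) ≤ z ^ p + L ^ (p / (p - 1)) * M ^ p := by
  have hp0 : 0 < p := by linarith
  have hp1 : 0 < p - 1 := by linarith
  set y := L ^ (1 / (p - 1)) * M with hy
  have e1 : y ^ (p - 1) = L * M ^ (p - 1) := by
    rw [hy, ENNReal.mul_rpow_of_nonneg _ _ hp1.le, ← ENNReal.rpow_mul, one_div_mul_cancel hp1.ne',
      ENNReal.rpow_one]
  have e2 : y ^ p = L ^ (p / (p - 1)) * M ^ p := by
    rw [hy, ENNReal.mul_rpow_of_nonneg _ _ hp0.le, ← ENNReal.rpow_mul]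
    congr 2; ring
  rw [← e2]
  have e3 : L * z * M ^ (p - 1) = z * y ^ (p - 1) := by rw [e1]; ring
  rw [e3]
  have e4 : ∀ x : ℝ≥0∞, x * x ^ (p - 1) = x ^ p := by
    intro x
    nth_rw 1 [← ENNReal.rpow_one x]
    rw [← ENNReal.rpow_add_of_nonneg _ _ (by norm_num) hp1.le]
    congr 1; ring
  rcases le_total z y with h | h
  · calc _ ≤ y * y ^ (p - 1) := by gcongr
      _ = y ^ p := e4 y
      _ ≤ _ := le_add_self
  · calc _ ≤ z * z ^ (p - 1) := by gcongr
      _ = z ^ p := e4 z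
      _ ≤ _ := le_self_add

/-- `L^p` norm on the ball of radius `r`. -/
def NN {n : ℕ} (p r : ℝ) (g : EE n → ℝ≥0∞) : ℝ≥0∞ := (∫⁻ x in ball (0 : EE n) r, g x ^ p) ^ (1 / p)

lemma key2 {n : ℕ} (hn : 1 ≤ n) {p s : ℝ} (hp : 1 < p) (hs : 0 < s) (hs1 : s < 1) (hsp : p - 1 < s * p) :
    ∃ γ > (0:ℝ), ∃ κ ≥ (0:ℝ), ∀ ε : ℝ≥0, 0 < ε → 
    ∃ A : ℝ≥0, ∀ (Ω : Set (EE n)) (u f : EE n → ℝ) (m : ℝ) (M Lu : ℝ≥0), Dat p s u f m M →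
      IsOpen Ω → ContDiffOn ℝ 1 u Ω → closedBall 0 2 ⊆ Ω →
      LipschitzOnWith Lu u (closedBall 0 2) →
      ∀ (r ρ : ℝ) (h : EE n), 1 ≤ r → r < ρ → ρ ≤ 3/2 → h ≠ 0 → ‖h‖ ≤ (ρ - r) / 8 →
      NN p r (fun x => ‖(u (x + h + h) - u (x + h)) - (u (x + h) - u x)‖ₑ) ≤
      ENNReal.ofReal (‖h‖ ^ (1 + γ)) *
        (ε * NN p ρ (fun x => ‖gradient u x‖ₑ) + A * ENNReal.ofReal ((8 / (ρ - r)) ^ κ) * M) := by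
  obtain ⟨C, hC⟩ := key1 hn hp hs hs1
  have hp0 : 0 < p := by linarith
  have hp1 : 0 < p - 1 := by linarith
  set β := (s * p + 1 - p) / 2 with hβ
  have hβ0 : 0 < β := by rw [hβ]; linarith
  set a := (n:ℝ) + s * p with ha
  have ha0 : 0 < a := by positivity
  refine ⟨β / p, by positivity, (a + 1) / (p - 1), by positivity, fun ε hε => ?_⟩
  set ε0 : ℝ≥0 := min 1 (ε ^ p / (2 * C + 1)) with hε0
  have hε0p : 0 < ε0 := lt_min one_pos (div_pos (NNReal.rpow_pos hε) (by positivity))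
  have hε01 : ε0 ≤ 1 := min_le_left _ _
  have hε0C : 2 * C * ε0 ≤ ε ^ p := by
    calc 2 * C * ε0 ≤ (2 * C + 1) * (ε ^ p / (2 * C + 1)) := by
          gcongr
          · exact le_self_add
          · exact min_le_right _ _
      _ = _ := by field_simp
  refine ⟨(C * ε0) ^ (1 / p) * (ε0⁻¹ * ε0⁻¹) ^ (1 / (p - 1)), 
    fun Ω u f m M Lu D hΩ hu hΩ2 hLu r ρ h hr hrρ hρ hh0 hh => ?_⟩
  have hhn : 0 < ‖h‖ := norm_pos_iff.mpr hh0
  have hh1 : ‖h‖ ≤ 1 := by linarith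
  have hd0 : 0 < ρ - r := by linarith
  have hτ : 0 < (ε0:ℝ) * ‖h‖ ^ β := by positivity
  have hτ1 : (ε0:ℝ) * ‖h‖ ^ β ≤ 1 := by
    have h1 : ‖h‖ ^ β ≤ 1 := Real.rpow_le_one hhn.le hh1 hβ0.le
    have h2 : (ε0:ℝ) ≤ 1 := by exact_mod_cast hε01
    calc _ ≤ (1:ℝ) * 1 := mul_le_mul h2 h1 (by positivity) (by norm_num)
      _ = 1 := by norm_num
  have key := hC Ω u f m M Lu D hΩ hu hΩ2 hLu r ρ _ h hr hrρ hρ hh0 hh hτ hτ1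
  set Z := ∫⁻ x in ball (0 : EE n) ρ, ‖gradient u x‖ₑ ^ p with hZ
  set z := Z ^ (1 / p) with hz
  have hzZ : Z = z ^ p := by rw [hz, ← ENNReal.rpow_mul, one_div_mul_cancel hp0.ne', ENNReal.rpow_one]
  have hzN : NN p ρ (fun x => ‖gradient u x‖ₑ) = z := rfl
  rw [hzN]
  rw [hzZ] at key
  set Λ := ENNReal.ofReal ((8 / (ρ - r)) ^ (a + 1)) with hΛ
  set H := ENNReal.ofReal (‖h‖ ^ (p + β)) with hH
  have r1 : ENNReal.ofReal (‖h‖ ^ (s * p)) * (ENNReal.ofReal ((ε0:ℝ) * ‖h‖ ^ β)⁻¹ * ‖h‖ₑ) = 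
      H * (ε0⁻¹ : ℝ≥0) := by
    rw [mul_inv, ENNReal.ofReal_mul (by positivity), ← NNReal.coe_inv, ENNReal.ofReal_coe_nnreal,
      ← Real.rpow_neg hhn.le, ← ofReal_norm, hH]
    have : ‖h‖ ^ (p + β) = ‖h‖ ^ (s * p) * (‖h‖ ^ (-β) * ‖h‖) := by
      nth_rw 4 [← Real.rpow_one ‖h‖]
      rw [← Real.rpow_add hhn, ← Real.rpow_add hhn]; congr 1; rw [hβ]; ring
    rw [this, ENNReal.ofReal_mul (by positivity), ENNReal.ofReal_mul (by positivity)]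
    ring
  have r2 : ENNReal.ofReal (‖h‖ ^ (s * p)) * (ENNReal.ofReal ((ε0:ℝ) * ‖h‖ ^ β) * 
      ENNReal.ofReal (‖h‖ ^ (p - s * p))) = H * ε0 := by
    rw [ENNReal.ofReal_mul (by positivity), ENNReal.ofReal_coe_nnreal, hH]
    have : ‖h‖ ^ (p + β) = ‖h‖ ^ (s * p) * (‖h‖ ^ β * ‖h‖ ^ (p - s * p)) := by
      rw [← Real.rpow_add hhn, ← Real.rpow_add hhn]; congr 1; ring
    rw [this, ENNReal.ofReal_mul (by positivity), ENNReal.ofReal_mul (by positivity)]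
    ring
  set L : ℝ≥0∞ := ((ε0⁻¹ * ε0⁻¹ : ℝ≥0) : ℝ≥0∞) * Λ with hL
  have hEE : ((ε0⁻¹ : ℝ≥0) : ℝ≥0∞) = ε0 * ((ε0⁻¹ * ε0⁻¹ : ℝ≥0) : ℝ≥0∞) := by
    rw [← ENNReal.coe_mul, ← mul_assoc, mul_inv_cancel₀ hε0p.ne', one_mul]
  have key3 : ∫⁻ x in ball (0 : EE n) r, ‖(u (x + h + h) - u (x + h)) - (u (x + h) - u x)‖ₑ ^ p ≤
      H * ((2 * C * ε0 : ℝ≥0) * z ^ p + (C * ε0 : ℝ≥0) * (L ^ (p / (p - 1)) * (M : ℝ≥0∞) ^ p)) := by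
    refine key.trans ?_
    have hy := young_enn hp z L M
    have e : C * ENNReal.ofReal (‖h‖ ^ (s * p)) *
        (ENNReal.ofReal ((ε0:ℝ) * ‖h‖ ^ β)⁻¹ * Λ * (‖h‖ₑ * z * (M : ℝ≥0∞) ^ (p - 1)) +
         ENNReal.ofReal ((ε0:ℝ) * ‖h‖ ^ β) * ENNReal.ofReal (‖h‖ ^ (p - s * p)) * z ^ p) =
        H * (C * ε0) * (L * z * (M : ℝ≥0∞) ^ (p - 1) + z ^ p) := by
      calc _ = C * ((ENNReal.ofReal (‖h‖ ^ (s * p)) * (ENNReal.ofReal ((ε0:ℝ) * ‖h‖ ^ β)⁻¹ * ‖h‖ₑ)) * 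
          (Λ * z * (M : ℝ≥0∞) ^ (p - 1)) + (ENNReal.ofReal (‖h‖ ^ (s * p)) * 
          (ENNReal.ofReal ((ε0:ℝ) * ‖h‖ ^ β) * ENNReal.ofReal (‖h‖ ^ (p - s * p)))) * z ^ p) := by ring
        _ = _ := by rw [r1, r2, hEE, hL]; ring
    rw [e]
    calc _ ≤ H * (C * ε0) * ((z ^ p + L ^ (p / (p - 1)) * (M : ℝ≥0∞) ^ p) + z ^ p) := by gcongr
      _ = _ := by push_cast; ring
  have hi : 0 ≤ 1 / p := by positivity
  unfold NN
  refine (ENNReal.rpow_le_rpow key3 hi).trans ?_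
  rw [ENNReal.mul_rpow_of_nonneg _ _ hi]
  have hH' : H ^ (1 / p) = ENNReal.ofReal (‖h‖ ^ (1 + β / p)) := by
    rw [hH, ENNReal.ofReal_rpow_of_nonneg (by positivity) hi, ← Real.rpow_mul hhn.le]
    congr 2; field_simp
  rw [hH']
  refine mul_le_mul' le_rfl ?_
  refine (ENNReal.rpow_add_le_add_rpow _ _ hi (by rw [div_le_one hp0]; linarith)).trans ?_
  refine add_le_add ?_ ?_
  · rw [ENNReal.mul_rpow_of_nonneg _ _ hi, ← ENNReal.rpow_mul, mul_one_div_cancel hp0.ne', ENNReal.rpow_one]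
    refine mul_le_mul' ?_ le_rfl
    calc _ ≤ (((ε ^ p : ℝ≥0)) : ℝ≥0∞) ^ (1 / p) := by
          apply ENNReal.rpow_le_rpow _ hi
          exact_mod_cast hε0C
      _ = ε := by
          rw [ENNReal.coe_rpow_of_nonneg _ hp0.le, ← ENNReal.rpow_mul, mul_one_div_cancel hp0.ne', ENNReal.rpow_one]
  · apply le_of_eq
    rw [ENNReal.mul_rpow_of_nonneg _ _ hi, ENNReal.mul_rpow_of_nonneg _ _ hi, ← ENNReal.rpow_mul, 
      ← ENNReal.rpow_mul, mul_one_div_cancel hp0.ne', ENNReal.rpow_one]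
    have e5 : p / (p - 1) * (1 / p) = 1 / (p - 1) := by field_simp
    have hi2 : 0 ≤ 1 / (p - 1) := by positivity
    rw [e5, hL, ENNReal.mul_rpow_of_nonneg _ _ hi2, hΛ, 
      ENNReal.ofReal_rpow_of_nonneg (by positivity) hi2, ← Real.rpow_mul (by positivity), mul_one_div,
      ENNReal.coe_mul ((C * ε0) ^ (1/p)), ENNReal.coe_rpow_of_nonneg _ hi, ENNReal.coe_rpow_of_nonneg _ hi2]
    ring

end

section
open MeasureTheory Metric Set Filter Topology
open scoped ENNReal NNReal


lemma NN_mono {n : ℕ} {p r : ℝ} (hp : 1 < p) {f g : EE n → ℝ≥0∞} (h : ∀ x ∈ ball (0 : EE n) r, f x ≤ g x) :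
    NN p r f ≤ NN p r g := by
  unfold NN
  apply ENNReal.rpow_le_rpow _ (by positivity)
  apply setLIntegral_mono' measurableSet_ball
  intro x hx
  exact ENNReal.rpow_le_rpow (h x hx) (by linarith)

lemma NN_add {n : ℕ} {p r : ℝ} (hp : 1 < p) {f g : EE n → ℝ≥0∞} (hf : Measurable f) (hg : Measurable g) :
    NN p r (fun x => f x + g x) ≤ NN p r f + NN p r g := 
  ENNReal.lintegral_Lp_add_le hf.aemeasurable hg.aemeasurable hp.le

lemma NN_const_mul {n : ℕ} {p r : ℝ} (hp : 1 < p) {f : EE n → ℝ≥0∞} (c : ℝ≥0∞) (hc : c ≠ ⊤) :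
    NN p r (fun x => c * f x) = c * NN p r f := by
  have hp0 : 0 < p := by linarith
  unfold NN
  simp only [ENNReal.mul_rpow_of_nonneg _ _ hp0.le]
  rw [lintegral_const_mul' _ _ (ENNReal.rpow_ne_top_of_nonneg hp0.le hc), 
    ENNReal.mul_rpow_of_nonneg _ _ (by positivity), ← ENNReal.rpow_mul, mul_one_div_cancel hp0.ne', 
    ENNReal.rpow_one]

lemma NN_pow {n : ℕ} {p r : ℝ} (hp : 1 < p) (f : EE n → ℝ≥0∞) :
    ∫⁻ x in ball (0 : EE n) r, f x ^ p = NN p r f ^ p := by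
  have hp0 : 0 < p := by linarith
  unfold NN
  rw [← ENNReal.rpow_mul, one_div_mul_cancel hp0.ne', ENNReal.rpow_one]

lemma NN_le {n : ℕ} {p r : ℝ} (hp : 1 < p) (f : EE n → ℝ≥0∞) {K : ℝ≥0∞}
    (h : ∫⁻ x in ball (0 : EE n) r, f x ^ p ≤ K ^ p) : NN p r f ≤ K := by
  have hp0 : 0 < p := by linarith
  unfold NN
  refine (ENNReal.rpow_le_rpow h (by positivity)).trans (le_of_eq ?_)
  rw [← ENNReal.rpow_mul, mul_one_div_cancel hp0.ne', ENNReal.rpow_one]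

lemma tele {n : ℕ} {p r γ h0 : ℝ} (hp : 1 < p) (hγ : 0 < γ) {u : EE n → ℝ} (um : Measurable u)
    {e : EE n} (hh0 : 0 < h0) (hh1 : h0 ≤ 1) {N0 Q : ℝ≥0∞}
    (hN : NN p r (fun x => ‖u (x + h0 • e) - u x‖ₑ) ≤ N0)
    (hS : ∀ c : ℝ, 0 < c → c ≤ h0 → NN p r (fun x => ‖(u (x + c • e + c • e) - u (x + c • e)) - 
      (u (x + c • e) - u x)‖ₑ) ≤ ENNReal.ofReal (c ^ (1 + γ)) * Q) (j : ℕ) :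
    2 ^ j * NN p r (fun x => ‖u (x + (h0 * (1/2) ^ j) • e) - u x‖ₑ) ≤ 
      N0 + ENNReal.ofReal (h0 * ∑ i ∈ Finset.range j, ((1/2 : ℝ) ^ γ) ^ i) * Q := by
  induction j with
  | zero => simpa using hN
  | succ j ih =>
    set c := h0 * (1/2) ^ (j+1) with hc
    have hc0 : 0 < c := by positivity
    have hcle : c ≤ h0 * (1/2) ^ j := by
      rw [hc, pow_succ]
      have : 0 < h0 * (1/2 : ℝ) ^ j := by positivity
      linarith
    have hpj : (1/2 : ℝ) ^ j ≤ 1 := pow_le_one₀ (by norm_num) (by norm_num)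
    have hch : c ≤ h0 := by nlinarith
    have h2c : h0 * (1/2) ^ j = c + c := by rw [hc, pow_succ]; ring
    have htri : 2 * NN p r (fun x => ‖u (x + c • e) - u x‖ₑ) ≤ 
        NN p r (fun x => ‖u (x + (h0 * (1/2) ^ j) • e) - u x‖ₑ) + 
        NN p r (fun x => ‖(u (x + c • e + c • e) - u (x + c • e)) - (u (x + c • e) - u x)‖ₑ) := by
      rw [← NN_const_mul hp 2 (by simp)]
      refine le_trans (NN_mono hp (fun x _ => ?_)) (NN_add hp (by fun_prop) (by fun_prop))
      rw [h2c, add_smul, ← add_assoc]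
      have e1 : (2 : ℝ≥0∞) = ‖(2:ℝ)‖ₑ := by rw [Real.enorm_eq_ofReal (by norm_num)]; norm_num
      generalize u (x + c • e + c • e) = A1
      generalize u (x + c • e) = A2
      rw [e1, ← enorm_mul]
      refine le_trans (le_of_eq ?_) enorm_sub_le
      congr 1; ring
    have hSc := hS c hc0 hch
    have hcp : 2 ^ j * ENNReal.ofReal (c ^ (1 + γ)) ≤ ENNReal.ofReal (h0 * ((1/2 : ℝ) ^ γ) ^ j) := by
      have e1 : (2 : ℝ≥0∞) ^ j = ENNReal.ofReal (2 ^ j) := by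
        rw [ENNReal.ofReal_pow (by norm_num)]; norm_num
      rw [e1, ← ENNReal.ofReal_mul (by positivity)]
      apply ENNReal.ofReal_le_ofReal
      rw [Real.rpow_add hc0, Real.rpow_one]
      have i1 : (2:ℝ) ^ j * c ≤ h0 := by
        have : (2:ℝ) ^ j * (1/2) ^ j = 1 := by rw [← mul_pow]; norm_num
        rw [hc, pow_succ]
        calc _ = h0 * ((2:ℝ) ^ j * (1/2) ^ j) * (1/2) := by ring
          _ ≤ h0 := by rw [this]; linarith
      have i2 : c ^ γ ≤ ((1/2 : ℝ) ^ γ) ^ j := by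
        rw [← Real.rpow_natCast, ← Real.rpow_mul (by norm_num), mul_comm γ, Real.rpow_mul (by norm_num),
          Real.rpow_natCast]
        apply Real.rpow_le_rpow hc0.le _ hγ.le
        refine hcle.trans ?_
        have : 0 < (1/2 : ℝ) ^ j := by positivity
        nlinarith
      calc _ = (2 ^ j * c) * c ^ γ := by ring
        _ ≤ _ := mul_le_mul i1 i2 (by positivity) hh0.le
    rw [Finset.sum_range_succ, mul_add, ENNReal.ofReal_add (by positivity) (by positivity), add_mul, ← add_assoc]
    calc _ = 2 ^ j * (2 * NN p r (fun x => ‖u (x + c • e) - u x‖ₑ)) := by rw [pow_succ]; ring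
      _ ≤ 2 ^ j * (NN p r (fun x => ‖u (x + (h0 * (1/2) ^ j) • e) - u x‖ₑ) + 
          ENNReal.ofReal (c ^ (1 + γ)) * Q) := by gcongr; exact htri.trans (by gcongr)
      _ = 2 ^ j * NN p r (fun x => ‖u (x + (h0 * (1/2) ^ j) • e) - u x‖ₑ) + 
          (2 ^ j * ENNReal.ofReal (c ^ (1 + γ))) * Q := by ring
      _ ≤ _ := by gcongr

lemma dir_deriv {n : ℕ} {p r γ h0 : ℝ} (hp : 1 < p) (hγ : 0 < γ) {u : EE n → ℝ} (um : Measurable u)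
    (hd : ∀ x ∈ ball (0 : EE n) r, DifferentiableAt ℝ u x)
    {e : EE n} (hh0 : 0 < h0) (hh1 : h0 ≤ 1) {N0 Q : ℝ≥0∞}
    (hN : NN p r (fun x => ‖u (x + h0 • e) - u x‖ₑ) ≤ N0)
    (hS : ∀ c : ℝ, 0 < c → c ≤ h0 → NN p r (fun x => ‖(u (x + c • e + c • e) - u (x + c • e)) - 
      (u (x + c • e) - u x)‖ₑ) ≤ ENNReal.ofReal (c ^ (1 + γ)) * Q) :
    NN p r (fun x => ‖fderiv ℝ u x e‖ₑ) ≤ 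
      ENNReal.ofReal h0⁻¹ * N0 + ENNReal.ofReal ((1 - (1/2 : ℝ) ^ γ)⁻¹) * Q := by
  have hp0 : 0 < p := by linarith
  set K := ENNReal.ofReal h0⁻¹ * N0 + ENNReal.ofReal ((1 - (1/2 : ℝ) ^ γ)⁻¹) * Q with hK
  set θ := (1/2 : ℝ) ^ γ with hθ
  have hθ0 : 0 < θ := by positivity
  have hθ1 : θ < 1 := Real.rpow_lt_one (by norm_num) (by norm_num) hγ
  have hbd : ∀ j : ℕ, NN p r (fun x => ENNReal.ofReal (h0 * (1/2) ^ j)⁻¹ * 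
      ‖u (x + (h0 * (1/2) ^ j) • e) - u x‖ₑ) ≤ K := by
    intro j
    rw [NN_const_mul hp _ ENNReal.ofReal_ne_top]
    have h1 := tele hp hγ um hh0 hh1 hN hS j
    have e1 : ENNReal.ofReal (h0 * (1/2) ^ j)⁻¹ = ENNReal.ofReal h0⁻¹ * 2 ^ j := by
      have : (h0 * (1/2 : ℝ) ^ j)⁻¹ = h0⁻¹ * 2 ^ j := by rw [mul_inv, ← inv_pow]; norm_num
      rw [this, ENNReal.ofReal_mul (by positivity), ENNReal.ofReal_pow (by norm_num)]; norm_num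
    rw [e1, mul_assoc]
    refine (mul_le_mul' le_rfl h1).trans ?_
    rw [mul_add, hK, ← mul_assoc, ← ENNReal.ofReal_mul (by positivity), ← mul_assoc, 
      inv_mul_cancel₀ hh0.ne', one_mul]
    gcongr
    rw [← tsum_geometric_of_lt_one hθ0.le hθ1]
    exact (summable_geometric_of_lt_one hθ0.le hθ1).sum_le_tsum _ (fun i _ => by positivity)
  have hlim : ∀ x ∈ ball (0 : EE n) r, Tendsto (fun j : ℕ => (ENNReal.ofReal (h0 * (1/2) ^ j)⁻¹ * 
      ‖u (x + (h0 * (1/2) ^ j) • e) - u x‖ₑ) ^ p) atTop (𝓝 (‖fderiv ℝ u x e‖ₑ ^ p)) := by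
    intro x hx
    have h1 := (hd x hx).hasFDerivAt.hasLineDerivAt e
    unfold HasLineDerivAt at h1
    rw [hasDerivAt_iff_tendsto_slope_zero] at h1
    have hc : Tendsto (fun j : ℕ => h0 * (1/2 : ℝ) ^ j) atTop (𝓝[≠] 0) := by
      apply tendsto_nhdsWithin_iff.mpr
      refine ⟨?_, Eventually.of_forall (fun j => ?_)⟩
      · have := (tendsto_pow_atTop_nhds_zero_of_lt_one (r := (1/2:ℝ)) (by norm_num) (by norm_num)).const_mul h0
        simpa using this
      · have : 0 < h0 * (1/2 : ℝ) ^ j := by positivity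
        exact this.ne'
    have h2 := ((h1.comp hc).enorm).ennrpow_const p
    refine h2.congr (fun j => ?_)
    have : 0 < h0 * (1/2 : ℝ) ^ j := by positivity
    simp only [Function.comp, zero_add, zero_smul, add_zero, smul_eq_mul]
    rw [enorm_mul, Real.enorm_eq_ofReal (by positivity)]
  apply NN_le hp
  calc _ = ∫⁻ x in ball (0 : EE n) r, liminf (fun j : ℕ => (ENNReal.ofReal (h0 * (1/2) ^ j)⁻¹ * 
      ‖u (x + (h0 * (1/2) ^ j) • e) - u x‖ₑ) ^ p) atTop := 
        setLIntegral_congr_fun measurableSet_ball (fun x hx => ((hlim x hx).liminf_eq).symm)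
    _ ≤ liminf (fun j : ℕ => ∫⁻ x in ball (0 : EE n) r, (ENNReal.ofReal (h0 * (1/2) ^ j)⁻¹ * 
      ‖u (x + (h0 * (1/2) ^ j) • e) - u x‖ₑ) ^ p) atTop := lintegral_liminf_le (fun j => by fun_prop)
    _ ≤ K ^ p := by
      refine liminf_le_of_le (by isBoundedDefault) (fun b hb => ?_)
      obtain ⟨j, hj⟩ := hb.exists
      refine hj.trans ?_
      rw [NN_pow hp]
      exact ENNReal.rpow_le_rpow (hbd j) hp0.le

end

section
open MeasureTheory Metric Set Filter Topology
open scoped ENNReal NNReal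


lemma grad_le {n : ℕ} (u : EE n → ℝ) (x : EE n) :
    ‖gradient u x‖ₑ ≤ ∑ i : Fin n, ‖fderiv ℝ u x (EuclideanSpace.single i 1)‖ₑ := by
  have h1 : ∀ i, inner ℝ (EuclideanSpace.single i (1:ℝ)) (gradient u x) = fderiv ℝ u x (EuclideanSpace.single i 1) := by
    intro i
    rw [real_inner_comm]
    unfold gradient
    simp
  have h2 := (EuclideanSpace.basisFun (Fin n) ℝ).sum_repr' (gradient u x)
  simp only [EuclideanSpace.basisFun_apply, h1] at h2
  rw [← h2]
  refine (enorm_sum_le _ _).trans (Finset.sum_le_sum (fun i _ => ?_))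
  rw [enorm_smul, ← ofReal_norm (EuclideanSpace.single i (1:ℝ))]
  simp

lemma NN_sum {n : ℕ} {p r : ℝ} (hp : 1 < p) {ι : Type*} (S : Finset ι) {f : ι → EE n → ℝ≥0∞}
    (hf : ∀ i, Measurable (f i)) :
    NN p r (fun x => ∑ i ∈ S, f i x) ≤ ∑ i ∈ S, NN p r (f i) := by
  classical
  have hp0 : 0 < p := by linarith
  induction S using Finset.induction_on with
  | empty => simp [NN, hp0]
  | insert i S hi ih =>
    simp only [Finset.sum_insert hi]
    refine (NN_add hp (hf i) (Finset.measurable_sum _ (fun i _ => hf i))).trans ?_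
    gcongr

lemma absorb {n : ℕ} (hn : 1 ≤ n) {p s : ℝ} (hp : 1 < p) (hs : 0 < s) (hs1 : s < 1) (hsp : p - 1 < s * p) :
    ∃ κ ≥ (0:ℝ), ∀ ε : ℝ≥0, 0 < ε → 
    ∃ A : ℝ≥0, ∀ (Ω : Set (EE n)) (u f : EE n → ℝ) (m : ℝ) (M Lu : ℝ≥0), Dat p s u f m M →
      IsOpen Ω → ContDiffOn ℝ 1 u Ω → closedBall 0 2 ⊆ Ω →
      LipschitzOnWith Lu u (closedBall 0 2) →
      ∀ (r ρ : ℝ), 1 ≤ r → r < ρ → ρ ≤ 3/2 → 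
      NN p r (fun x => ‖gradient u x‖ₑ) ≤
        ε * NN p ρ (fun x => ‖gradient u x‖ₑ) + A * ENNReal.ofReal ((8 / (ρ - r)) ^ κ) * M := by
  obtain ⟨γ, hγ, κ, hκ, hk⟩ := key2 hn hp hs hs1 hsp
  refine ⟨κ + 1, by linarith, fun ε hε => ?_⟩
  set cθ : ℝ≥0 := Real.toNNReal ((1 - (1/2 : ℝ) ^ γ)⁻¹) with hcθ
  have hnp : 0 < (n : ℝ≥0) := by exact_mod_cast hn
  set ε1 : ℝ≥0 := ε / (n * (cθ + 1)) with hε1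
  have hε1p : 0 < ε1 := by positivity
  obtain ⟨A, hA⟩ := hk ε1 hε1p
  refine ⟨n * (2 + cθ * A), fun Ω u f m M Lu D hΩ hu hΩ2 hLu r ρ hr hrρ hρ => ?_⟩
  have um := D.um
  set z := NN p ρ (fun x => ‖gradient u x‖ₑ) with hz
  have hd0 : 0 < ρ - r := by linarith
  set d := ρ - r with hd
  set Q := ε1 * z + A * ENNReal.ofReal ((8 / d) ^ κ) * M with hQ
  set Λ := ENNReal.ofReal ((8 / d) ^ (κ + 1)) with hΛ
  have h8 : 1 ≤ 8 / d := by rw [le_div_iff₀ hd0]; linarith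
  have hdir : ∀ i : Fin n, NN p r (fun x => ‖fderiv ℝ u x (EuclideanSpace.single i 1)‖ₑ) ≤ 
      ENNReal.ofReal (d / 8)⁻¹ * (2 * M) + cθ * Q := by
    intro i
    set e : EE n := EuclideanSpace.single i 1 with he
    have hen : ‖e‖ = 1 := by simp [he]
    have hnorm : ∀ c : ℝ, 0 < c → ‖c • e‖ = c := fun c hc => by
      rw [norm_smul, hen, mul_one, Real.norm_of_nonneg hc.le]
    refine dir_deriv hp hγ um ?_ (by positivity) (by linarith) ?_ ?_
    · intro x hx
      refine (hu.differentiableOn one_ne_zero).differentiableAt (hΩ.mem_nhds (hΩ2 ?_))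
      exact (ball_subset_ball (by linarith)).trans ball_subset_closedBall hx
    · have A1 := D.adm hp hs hr (h := (d / 8) • e) (by rw [hnorm _ (by positivity)]; linarith)
        (by rw [hnorm _ (by positivity)]; linarith)
      have A2 := D.adm hp hs hr (h := (0 : EE n)) (by simp) (by simp; linarith)
      have U1 := NN_le hp _ A1.U
      have U2 := NN_le hp _ A2.U
      simp only [add_zero] at U2
      rw [two_mul]
      refine le_trans (le_trans (NN_mono hp (fun x _ => ?_)) (NN_add hp 
        (f := fun x => ‖u (x + (d / 8) • e) - m‖ₑ) (g := fun x => ‖u x - m‖ₑ) (by fun_prop) (by fun_prop))) (add_le_add U1 U2)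
      have : u (x + (d / 8) • e) - u x = (u (x + (d / 8) • e) - m) - (u x - m) := by ring
      rw [this]; exact enorm_sub_le
    · intro c hc0 hc
      have := hA Ω u f m M Lu D hΩ hu hΩ2 hLu r ρ (c • e) hr hrρ hρ (by
        rw [← norm_pos_iff, hnorm c hc0]; exact hc0) (by rw [hnorm c hc0]; exact hc)
      rwa [hnorm c hc0] at this
  have hsum : NN p r (fun x => ‖gradient u x‖ₑ) ≤ n * (ENNReal.ofReal (d / 8)⁻¹ * (2 * M) + cθ * Q) := by
    refine (NN_mono hp (fun x _ => grad_le u x)).trans ?_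
    refine (NN_sum hp _ (fun i => (measurable_fderiv_apply_const ℝ u _).enorm)).trans ?_
    refine (Finset.sum_le_sum (fun i _ => hdir i)).trans (le_of_eq ?_)
    simp only [Finset.sum_const, Finset.card_univ, Fintype.card_fin, nsmul_eq_mul]
  refine hsum.trans ?_
  have i1 : ENNReal.ofReal (d / 8)⁻¹ ≤ Λ := by
    apply ENNReal.ofReal_le_ofReal
    rw [inv_div]
    nth_rw 1 [← Real.rpow_one (8 / d)]
    exact Real.rpow_le_rpow_of_exponent_le h8 (by linarith)
  have i2 : ENNReal.ofReal ((8 / d) ^ κ) ≤ Λ := 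
    ENNReal.ofReal_le_ofReal (Real.rpow_le_rpow_of_exponent_le h8 (by linarith))
  have i3 : (n : ℝ≥0∞) * (cθ * ε1) ≤ ε := by
    have : (n : ℝ≥0) * (cθ * ε1) ≤ ε := by
      calc (n : ℝ≥0) * (cθ * ε1) ≤ n * ((cθ + 1) * ε1) := by gcongr; exact le_self_add
        _ = ε := by rw [hε1]; field_simp
    exact_mod_cast this
  calc _ ≤ n * (Λ * (2 * M) + cθ * (ε1 * z + A * Λ * M)) := by rw [hQ]; gcongr
    _ = (n * (cθ * ε1)) * z + n * (2 + cθ * A) * Λ * M := by ring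
    _ ≤ ε * z + n * (2 + cθ * A) * Λ * M := by gcongr
    _ = _ := by push_cast; ring

lemma iter_aux {z : ℕ → ℝ≥0∞} {ε B K : ℝ≥0∞} (hB : B ≠ ⊤) (hz : ∀ k, z k ≤ K) (hK : K ≠ ⊤) (hε : ε < 1) 
    {θ : ℝ≥0∞} (hstep : ∀ k, ε ^ k * z k ≤ ε ^ (k + 1) * z (k + 1) + B * θ ^ k) (hθ : θ ≤ 2⁻¹) :
    z 0 ≤ 2 * B := by
  have h1 : ∀ k, z 0 ≤ ε ^ k * z k + B * ∑ i ∈ Finset.range k, θ ^ i := by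
    intro k
    induction k with
    | zero => simp
    | succ k ih =>
      refine ih.trans ?_
      rw [Finset.sum_range_succ, mul_add]
      calc _ ≤ (ε ^ (k + 1) * z (k + 1) + B * θ ^ k) + B * ∑ i ∈ Finset.range k, θ ^ i := by
            gcongr; exact hstep k
        _ = _ := by ring
  have h2 : ∀ k, ∑ i ∈ Finset.range k, θ ^ i ≤ 2 := by
    intro k
    calc _ ≤ ∑' i, θ ^ i := ENNReal.sum_le_tsum _
      _ ≤ ∑' i, (2⁻¹ : ℝ≥0∞) ^ i := ENNReal.tsum_le_tsum (fun i => by gcongr)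
      _ = 2 := by rw [ENNReal.tsum_geometric, ENNReal.one_sub_inv_two, inv_inv]
  have h3 : ∀ k, z 0 ≤ ε ^ k * K + 2 * B := by
    intro k
    refine (h1 k).trans ?_
    rw [mul_comm 2 B]
    gcongr
    · exact hz k
    · exact h2 k
  have h4 : Tendsto (fun k : ℕ => ε ^ k * K + 2 * B) atTop (𝓝 (0 * K + 2 * B)) := by
    apply Tendsto.add _ tendsto_const_nhds
    exact ENNReal.Tendsto.mul_const (ENNReal.tendsto_pow_atTop_nhds_zero_of_lt_one hε) (Or.inr hK)
  rw [zero_mul, zero_add] at h4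
  exact ge_of_tendsto' h4 h3

theorem unit_est {n : ℕ} (hn : 1 ≤ n) {p s : ℝ} (hp : 1 < p) (hs : 0 < s) (hs1 : s < 1) (hsp : p - 1 < s * p) :
    ∃ C : ℝ≥0, ∀ (Ω : Set (EE n)) (u f : EE n → ℝ) (m : ℝ) (M : ℝ≥0), Dat p s u f m M →
      IsOpen Ω → ContDiffOn ℝ 1 u Ω → closedBall 0 2 ⊆ Ω →
      NN p 1 (fun x => ‖gradient u x‖ₑ) ≤ C * M := by
  have hp0 : 0 < p := by linarith
  obtain ⟨κ, hκ, h⟩ := absorb hn hp hs hs1 hsp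
  set ε : ℝ≥0 := 2 ^ (-κ - 1) with hε
  have hεp : 0 < ε := NNReal.rpow_pos (by norm_num)
  obtain ⟨A, hA⟩ := h ε hεp
  refine ⟨2 * (A * 32 ^ κ), fun Ω u f m M D hΩ hu hΩ2 => ?_⟩
  obtain ⟨Lu, hLu⟩ : ∃ Lu, LipschitzOnWith Lu u (closedBall 0 2) := by
    exact (hu.mono hΩ2).exists_lipschitzOnWith one_ne_zero (convex_closedBall _ _) (isCompact_closedBall _ _)
  set R : ℕ → ℝ := fun k => 3/2 - (1/2) ^ (k+1) with hR
  have hRle : ∀ k, R k ≤ 3/2 := fun k => by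
    have : (0:ℝ) < (1/2) ^ (k+1) := by positivity
    simp only [hR]; linarith
  have hR1 : ∀ k, 1 ≤ R k := fun k => by
    have : (1/2 : ℝ) ^ k ≤ 1 := pow_le_one₀ (by norm_num) (by norm_num)
    simp only [hR]; rw [pow_succ]; linarith
  have hRd : ∀ k, R (k+1) - R k = (1/4) * (1/2) ^ k := fun k => by
    simp only [hR, pow_succ]; ring
  have hfin : NN p (3/2) (fun x => ‖gradient u x‖ₑ) ≠ ⊤ := by
    have hc : ContinuousOn (fderiv ℝ u) Ω := hu.continuousOn_fderiv_of_isOpen hΩ le_rfl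
    obtain ⟨c, hcb⟩ := (isCompact_closedBall (0 : EE n) 2).exists_bound_of_continuousOn (hc.mono hΩ2)
    unfold NN
    apply ENNReal.rpow_ne_top_of_nonneg (by positivity)
    apply ne_of_lt
    calc _ ≤ ∫⁻ x in ball (0 : EE n) (3/2), ENNReal.ofReal c ^ p := by
          apply setLIntegral_mono' measurableSet_ball
          intro x hx
          apply ENNReal.rpow_le_rpow _ hp0.le
          show ‖gradient u x‖ₑ ≤ _
          unfold gradient
          rw [LinearIsometryEquiv.enorm_map, ← ofReal_norm]
          exact ENNReal.ofReal_le_ofReal (hcb x (ball_subset_closedBall (ball_subset_ball (by norm_num) hx)))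
      _ < ⊤ := by
          rw [setLIntegral_const]
          exact ENNReal.mul_lt_top (ENNReal.rpow_lt_top_of_nonneg hp0.le (by simp)) measure_ball_lt_top
  have hε1 : (ε : ℝ≥0∞) < 1 := by
    have : ε < 1 := NNReal.rpow_lt_one_of_one_lt_of_neg (by norm_num) (by linarith)
    exact_mod_cast this
  have hεκ : ε * 2 ^ κ = 2⁻¹ := by
    rw [hε, ← NNReal.rpow_add (by norm_num)]
    have : -κ - 1 + κ = -1 := by ring
    rw [this, NNReal.rpow_neg_one]
  have := iter_aux (z := fun k => NN p (R k) (fun x => ‖gradient u x‖ₑ)) (ε := ε) 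
    (B := (A * 32 ^ κ : ℝ≥0) * M) (K := NN p (3/2) (fun x => ‖gradient u x‖ₑ)) (θ := ((ε * 2 ^ κ : ℝ≥0) : ℝ≥0∞))
    (by finiteness) ?_ hfin hε1 ?_ ?_
  · have h0 : R 0 = 1 := by simp only [hR]; norm_num
    beta_reduce at this
    rw [h0] at this
    refine this.trans (le_of_eq ?_)
    push_cast; ring
  · intro k
    unfold NN
    exact ENNReal.rpow_le_rpow (lintegral_mono_set (ball_subset_ball (hRle k))) (by positivity)
  · intro k
    have hk := hA Ω u f m M Lu D hΩ hu hΩ2 hLu (R k) (R (k+1)) (hR1 k) (by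
      have := hRd k
      have : (0:ℝ) < (1/4) * (1/2) ^ k := by positivity
      linarith) (hRle _)
    have e1 : ENNReal.ofReal ((8 / (R (k+1) - R k)) ^ κ) = (32 ^ κ : ℝ≥0) * ((2 ^ κ : ℝ≥0) : ℝ≥0∞) ^ k := by
      rw [hRd]
      have : (8:ℝ) / (1/4 * (1/2) ^ k) = 32 * 2 ^ k := by
        rw [one_div_pow]; field_simp; norm_num
      rw [this, Real.mul_rpow (by norm_num) (by positivity), ← Real.rpow_natCast 2, ← Real.rpow_mul (by norm_num),
        mul_comm (k:ℝ), Real.rpow_mul (by norm_num), Real.rpow_natCast]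
      rw [← ENNReal.coe_pow, ← ENNReal.coe_mul, ENNReal.ofReal]
      congr 1
      apply NNReal.coe_injective
      rw [Real.coe_toNNReal _ (by positivity)]
      push_cast; rfl
    rw [e1] at hk
    calc _ ≤ (ε : ℝ≥0∞) ^ k * _ := mul_le_mul' le_rfl hk
      _ = _ := by push_cast; rw [mul_pow]; ring
  · rw [hεκ]
    simp

end

section
open MeasureTheory Metric Set
open scoped ENNReal NNReal


lemma one_le_KK {n : ℕ} {a t : ℝ} (ha : 0 ≤ a) (z : EE n) (hz : z ≠ 0) (hzt : ‖z‖ ≤ t) :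
    1 ≤ ENNReal.ofReal (t ^ a) * KK a z := by
  have h0 : 0 < ‖z‖ := norm_pos_iff.mpr hz
  unfold KK
  have ht : 0 ≤ t := h0.le.trans hzt
  rw [← ENNReal.ofReal_mul (by positivity), Real.rpow_neg h0.le, ← div_eq_mul_inv, ENNReal.one_le_ofReal,
    one_le_div (by positivity)]
  exact Real.rpow_le_rpow h0.le hzt ha

lemma KK_le {n : ℕ} {a t : ℝ} (ha : 0 ≤ a) (ht : 0 < t) (z : EE n) (hz : t ≤ ‖z‖) :
    KK a z ≤ ENNReal.ofReal (t ^ (-a)) := by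
  unfold KK
  apply ENNReal.ofReal_le_ofReal
  rw [Real.rpow_neg (norm_nonneg _), Real.rpow_neg ht.le]
  exact inv_anti₀ (by positivity) (Real.rpow_le_rpow ht.le hz ha)

lemma poinc {n : ℕ} {p a : ℝ} (hp : 1 < p) (ha : 0 ≤ a) : ∃ C : ℝ≥0, ∀ u : EE n → ℝ, Measurable u →
    IntegrableOn u (ball 0 2) →
    ∫⁻ x in ball (0 : EE n) 2, ‖u x - ⨍ y in ball (0 : EE n) 2, u y‖ₑ ^ p ≤
      C * ∫⁻ x in ball (0 : EE n) 2, ∫⁻ y in ball (0 : EE n) 2, ‖u x - u y‖ₑ ^ p * KK a (x - y) := by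
  have hp0 : 0 < p := by linarith
  set V : ℝ≥0∞ := volume (ball (0 : EE n) 2) with hV
  have hV0 : V ≠ 0 := (measure_ball_pos volume _ (by norm_num)).ne'
  have hVt : V ≠ ⊤ := measure_ball_lt_top.ne
  have hct : V⁻¹ ^ p * (V ^ (p - 1) * ENNReal.ofReal (4 ^ a)) ≠ ⊤ := by
    have : V⁻¹ ≠ ⊤ := ENNReal.inv_ne_top.mpr hV0
    refine ENNReal.mul_ne_top (ENNReal.rpow_ne_top_of_nonneg hp0.le this)
      (ENNReal.mul_ne_top (ENNReal.rpow_ne_top_of_nonneg (by linarith) hVt) (by simp))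
  refine ⟨(V⁻¹ ^ p * (V ^ (p - 1) * ENNReal.ofReal (4 ^ a))).toNNReal, fun u um ui => ?_⟩
  rw [ENNReal.coe_toNNReal hct, ← lintegral_const_mul' _ _ hct]
  apply setLIntegral_mono' measurableSet_ball
  intro x hx
  have h1 : ‖u x - ⨍ y in ball (0 : EE n) 2, u y‖ₑ ≤ V⁻¹ * ∫⁻ y in ball (0 : EE n) 2, ‖u x - u y‖ₑ := by
    have hVr : volume.real (ball (0 : EE n) 2) ≠ 0 := by
      simp only [Measure.real]; exact (ENNReal.toReal_pos hV0 hVt).ne'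
    have : u x - ⨍ y in ball (0 : EE n) 2, u y = (volume.real (ball (0 : EE n) 2))⁻¹ • 
        ∫ y in ball (0 : EE n) 2, (u x - u y) := by
      have hci : IntegrableOn (fun _ : EE n => u x) (ball (0 : EE n) 2) := integrableOn_const hVt
      rw [integral_sub hci ui, setAverage_eq, setIntegral_const]
      simp only [smul_eq_mul]; field_simp
    rw [this, enorm_smul]
    refine mul_le_mul' (le_of_eq ?_) (enorm_integral_le_lintegral_enorm _)
    rw [Real.enorm_eq_ofReal (by positivity), ENNReal.ofReal_inv_of_pos (by positivity), Measure.real,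
      ENNReal.ofReal_toReal hVt]
  refine (ENNReal.rpow_le_rpow h1 hp0.le).trans ?_
  rw [ENNReal.mul_rpow_of_nonneg _ _ hp0.le, mul_assoc]
  refine mul_le_mul' le_rfl ?_
  refine (jensen_lint _ hp (by fun_prop)).trans ?_
  rw [Measure.restrict_apply_univ, mul_assoc]
  refine mul_le_mul' le_rfl ?_
  rw [← lintegral_const_mul' _ _ (by simp)]
  apply setLIntegral_mono' measurableSet_ball
  intro y hy
  by_cases hxy : x = y
  · subst hxy; simp [hp0]
  · calc ‖u x - u y‖ₑ ^ p = ‖u x - u y‖ₑ ^ p * 1 := by rw [mul_one]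
      _ ≤ ‖u x - u y‖ₑ ^ p * (ENNReal.ofReal (4 ^ a) * KK a (x - y)) := by
          refine mul_le_mul' le_rfl (one_le_KK ha _ (sub_ne_zero.mpr hxy) ?_)
          rw [mem_ball_zero_iff] at hx hy
          have := norm_sub_le x y
          linarith
      _ = _ := by ring

lemma mk_dat {n : ℕ} {p s : ℝ} (hp : 1 < p) (hs : 0 < s) : ∃ C : ℝ≥0,
    ∀ (u f : EE n → ℝ) (X : ℝ≥0), Measurable u → Measurable f → IntegrableOn u (ball 0 2) →
    (∫⁻ x in ball (0 : EE n) 2, ∫⁻ y in ball (0 : EE n) 2,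
      ‖u x - u y‖ₑ ^ p * KK (n + s * p) (x - y) ≤ (X : ℝ≥0∞) ^ p) →
    (∫⁻ x in (ball (0 : EE n) 2)ᶜ, ‖u x - ⨍ y in ball (0 : EE n) 2, u y‖ₑ ^ (p - 1) * KK (n + s * p) x
      ≤ (X : ℝ≥0∞) ^ (p - 1)) →
    (∫⁻ x in ball (0 : EE n) 2, ‖f x‖ₑ ^ (p / (p - 1)) ≤ (X : ℝ≥0∞) ^ p) →
    (∀ w : EE n → ℝ, (∃ L, LipschitzWith L w) → (∃ t < 2, ∀ x, t < ‖x‖ → w x = 0) →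
      ∫ x, ∫ y, Jp p (u x - u y) * (w x - w y) / dist x y ^ ((n:ℝ) + s * p) = ∫ x, f x * w x) →
    Dat p s u f (⨍ y in ball (0 : EE n) 2, u y) (C * X) := by
  have hp0 : 0 < p := by linarith
  have hp1 : 0 < p - 1 := by linarith
  have ha : 0 ≤ (n:ℝ) + s * p := by positivity
  obtain ⟨C0, hC0⟩ := poinc (n := n) hp ha
  set V : ℝ≥0 := (volume (ball (0 : EE n) 2)).toNNReal with hV
  have hVe : volume (ball (0 : EE n) 2) = V := (ENNReal.coe_toNNReal measure_ball_lt_top.ne).symm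
  set D : ℝ≥0 := C0 ^ (1 / p) with hD
  set K : ℝ≥0 := 1 + (((1/2:ℝ) ^ (-((n:ℝ) + s * p))).toNNReal * V ^ (1/p) * D ^ (p - 1)) with hK
  set C : ℝ≥0 := 1 + D + K ^ (1 / (p - 1)) with hC
  have c1 : (1:ℝ≥0) ≤ C := by rw [hC, add_assoc]; exact le_self_add
  have c2 : D ≤ C := by rw [hC]; exact le_add_self.trans le_self_add
  have c3 : K ^ (1 / (p - 1)) ≤ C := le_add_self
  refine ⟨C, fun u f X um fm ui hG hT hF heq => ?_⟩
  set m := ⨍ y in ball (0 : EE n) 2, u y with hm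
  have hXC : (X : ℝ≥0∞) ≤ (C * X : ℝ≥0) := by
    rw [ENNReal.coe_le_coe]; exact le_mul_of_one_le_left zero_le c1
  have hDX : ((D * X : ℝ≥0) : ℝ≥0∞) ≤ (C * X : ℝ≥0) := by
    rw [ENNReal.coe_le_coe]; gcongr
  have hU : ∫⁻ x in ball (0 : EE n) 2, ‖u x - m‖ₑ ^ p ≤ ((D * X : ℝ≥0) : ℝ≥0∞) ^ p := by
    refine (hC0 u um ui).trans ((mul_le_mul' le_rfl hG).trans (le_of_eq ?_))
    rw [← ENNReal.coe_rpow_of_nonneg _ hp0.le, ← ENNReal.coe_rpow_of_nonneg _ hp0.le, ← ENNReal.coe_mul,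
      NNReal.mul_rpow, hD, ← NNReal.rpow_mul, one_div_mul_cancel hp0.ne', NNReal.rpow_one]
  refine ⟨um, fm, hG.trans (ENNReal.rpow_le_rpow hXC hp0.le), hU.trans (ENNReal.rpow_le_rpow hDX hp0.le), ?_,
    hF.trans (ENNReal.rpow_le_rpow hXC hp0.le), heq⟩
  have hsub : (ball (0 : EE n) (1/2))ᶜ ⊆ (ball (0 : EE n) 2)ᶜ ∪ (ball (0 : EE n) 2 ∩ (ball (0 : EE n) (1/2))ᶜ) := by
    intro x hx
    by_cases h : x ∈ ball (0 : EE n) 2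
    · exact Or.inr ⟨h, hx⟩
    · exact Or.inl h
  have hhol := holder_pow (volume.restrict (ball (0 : EE n) 2)) hp (g := fun _ => 1) (k := fun x => ‖u x - m‖ₑ)
    aemeasurable_const (by fun_prop) hU
  simp only [one_mul, ENNReal.one_rpow, lintegral_one, Measure.restrict_apply_univ, hVe] at hhol
  have h2 : ∫⁻ x in ball (0 : EE n) 2 ∩ (ball (0 : EE n) (1/2))ᶜ, ‖u x - m‖ₑ ^ (p - 1) * KK (n + s * p) x ≤
      ENNReal.ofReal ((1/2:ℝ) ^ (-((n:ℝ) + s * p))) * (V ^ (1/p) * ((D * X : ℝ≥0) : ℝ≥0∞) ^ (p - 1)) := by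
    refine le_trans ?_ (mul_le_mul' le_rfl hhol)
    rw [← lintegral_const_mul' _ _ (by simp)]
    refine (setLIntegral_mono' (measurableSet_ball.inter measurableSet_ball.compl) (g := fun x => 
      ENNReal.ofReal ((1/2:ℝ) ^ (-((n:ℝ) + s * p))) * ‖u x - m‖ₑ ^ (p - 1)) ?_).trans (lintegral_mono_set inter_subset_left)
    rintro x ⟨_, hx⟩
    simp only [mem_compl_iff, mem_ball_zero_iff, not_lt] at hx
    rw [mul_comm]
    exact mul_le_mul' (KK_le ha (by norm_num) x hx) le_rfl
  calc _ ≤ _ := lintegral_mono_set hsub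
    _ ≤ _ := lintegral_union_le _ _ _
    _ ≤ _ := add_le_add hT h2
    _ = ((K * X ^ (p - 1) : ℝ≥0) : ℝ≥0∞) := by
        rw [← ENNReal.coe_rpow_of_nonneg _ hp1.le, ← ENNReal.coe_rpow_of_nonneg _ hp1.le, 
          ← ENNReal.coe_rpow_of_nonneg _ (by positivity), NNReal.mul_rpow, hK, ENNReal.ofReal]
        push_cast
        ring
    _ ≤ _ := by
        rw [← ENNReal.coe_rpow_of_nonneg _ hp1.le, ENNReal.coe_le_coe, NNReal.mul_rpow]
        gcongr
        calc K = (K ^ (1 / (p - 1))) ^ (p - 1) := by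
              rw [← NNReal.rpow_mul, one_div_mul_cancel hp1.ne', NNReal.rpow_one]
          _ ≤ _ := NNReal.rpow_le_rpow c3 hp1.le

end

section
open MeasureTheory Metric Set
open scoped ENNReal NNReal


lemma enorm_rpow_eq {q : ℝ} (hq : 0 ≤ q) (a : ℝ) : ENNReal.ofReal (|a| ^ q) = ‖a‖ₑ ^ q := by
  rw [Real.enorm_eq_ofReal_abs, ENNReal.ofReal_rpow_of_nonneg (abs_nonneg a) hq]

lemma ofReal_div_dist {n : ℕ} {q a : ℝ} (hq : 0 ≤ q) (x y : EE n) (c : ℝ) :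
    ENNReal.ofReal (|c| ^ q / dist x y ^ a) = ‖c‖ₑ ^ q * KK a (x - y) := by
  rw [← enorm_rpow_eq hq, div_eq_mul_inv, ENNReal.ofReal_mul (by positivity), dist_eq_norm, 
    ← Real.rpow_neg (norm_nonneg _)]
  rfl

lemma gagl_eq {n : ℕ} {s p : ℝ} (hp : 0 ≤ p) (D : Set (EE n)) (u : EE n → ℝ) :
    gagliardoE n s p D u = ∫⁻ x in D, ∫⁻ y in D, ‖u x - u y‖ₑ ^ p * KK (n + s * p) (x - y) := by
  unfold gagliardoE
  simp only [ofReal_div_dist hp]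

lemma int_affine {n : ℕ} (x₀ : EE n) {R : ℝ} (hR : 0 < R) (g : EE n → ℝ) :
    ∫ x, g x = R ^ (n:ℝ) * ∫ x, g (x₀ + R • x) := by
  rw [Measure.integral_comp_smul volume (fun x => g (x₀ + x)) R, integral_add_left_eq_self g x₀,
    finrank_euclideanSpace_fin, Real.rpow_natCast, abs_of_pos (by positivity), smul_eq_mul]
  field_simp

lemma gagl_lip {n : ℕ} (hn : 1 ≤ n) {p s : ℝ} (hp : 1 < p) (hs : 0 < s) (hs1 : s < 1) {φ : EE n → ℝ}
    {L : ℝ≥0} (hL : LipschitzWith L φ) {B : ℝ≥0} (hB : ∀ x, ‖φ x‖ₑ ≤ B) {S : Set (EE n)} (hS : MeasurableSet S)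
    (hSf : volume S ≠ ⊤) (h0 : ∀ x, x ∉ S → φ x = 0) : gagliardoE n s p Set.univ φ < ⊤ := by
  have hp0 : 0 < p := by linarith
  have hq : 0 < p - s * p := by nlinarith
  obtain ⟨C1, hC1⟩ := kernel_near hn hq
  obtain ⟨C2, hC2⟩ := kernel_far (n := n) (a := n + s * p) (by nlinarith)
  rw [gagl_eq hp0.le]
  simp only [Measure.restrict_univ]
  set b : Set (EE n) := ball 0 (1/2) with hb
  have hbm : MeasurableSet b := measurableSet_ball
  set K : EE n → ℝ≥0∞ := fun z => (L : ℝ≥0∞) ^ p * b.indicator (KK (n - (p - s * p))) z + 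
    (2 * B : ℝ≥0∞) ^ p * bᶜ.indicator (KK (n + s * p)) z with hK
  have hKm : Measurable K := by
    have := (KK_measurable (n := n) (n - (p - s * p))).indicator hbm
    have := (KK_measurable (n := n) (n + s * p)).indicator hbm.compl
    fun_prop
  have hKi : ∫⁻ z, K z < ⊤ := by
    rw [hK, lintegral_add_left (by
      have := (KK_measurable (n := n) (n - (p - s * p))).indicator hbm
      fun_prop), lintegral_const_mul' _ _ (by finiteness), lintegral_const_mul' _ _ (by finiteness),
      lintegral_indicator hbm, lintegral_indicator hbm.compl]
    have h1 : ∫⁻ z in b, KK (n - (p - s * p)) z < ⊤ := (hC1 (1/2) (by norm_num)).trans_lt (by finiteness)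
    have h2 : ∫⁻ z in bᶜ, KK (n + s * p) z < ⊤ := hC2.trans_lt (by finiteness)
    finiteness
  have hpt : ∀ x y, ‖φ x - φ y‖ₑ ^ p * KK (n + s * p) (x - y) ≤ K (x - y) := by
    intro x y
    by_cases hz : x - y ∈ b
    · rw [hK]; beta_reduce
      rw [indicator_of_mem hz]
      refine le_trans ?_ le_self_add
      have h1 : ‖φ x - φ y‖ₑ ≤ L * ‖x - y‖ₑ := by
        have := hL x y
        rwa [edist_eq_enorm_sub, edist_eq_enorm_sub] at this
      calc _ ≤ (L * ‖x - y‖ₑ) ^ p * KK (n + s * p) (x - y) := by gcongr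
        _ = L ^ p * (‖x - y‖ₑ ^ p * KK (n + s * p) (x - y)) := by
            rw [ENNReal.mul_rpow_of_nonneg _ _ hp0.le]; ring
        _ ≤ _ := by
            refine mul_le_mul' le_rfl ((pow_mul_KK hp0 _).trans (le_of_eq ?_))
            congr 1; ring
    · rw [hK]; beta_reduce
      rw [indicator_of_mem (show x - y ∈ bᶜ from hz)]
      refine le_trans ?_ le_add_self
      have h1 : ‖φ x - φ y‖ₑ ≤ 2 * B := by
        rw [two_mul]
        exact enorm_sub_le.trans (add_le_add (hB x) (hB y))
      gcongr
  have hpt2 : ∀ x y, ‖φ x - φ y‖ₑ ^ p * KK (n + s * p) (x - y) ≤ 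
      S.indicator 1 x * K (x - y) + S.indicator 1 y * K (x - y) := by
    intro x y
    by_cases hx : x ∈ S
    · rw [indicator_of_mem hx]; refine (hpt x y).trans ?_; simp
    · by_cases hy : y ∈ S
      · rw [indicator_of_mem hy]; refine (hpt x y).trans ?_; simp
      · rw [h0 x hx, h0 y hy]; simp [hp0]
  have hSm : Measurable (S.indicator (1 : EE n → ℝ≥0∞)) := measurable_one.indicator hS
  have e1 : ∀ x, ∫⁻ y, K (x - y) = ∫⁻ z, K z := fun x => lintegral_sub_left_eq_self K x
  have e2 : ∀ y, ∫⁻ x, K (x - y) = ∫⁻ z, K z := fun y => lintegral_sub_right_eq_self K y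
  calc _ ≤ ∫⁻ x, ∫⁻ y, (S.indicator 1 x * K (x - y) + S.indicator 1 y * K (x - y)) := 
        lintegral_mono fun x => lintegral_mono fun y => hpt2 x y
    _ = (∫⁻ x, ∫⁻ y, S.indicator 1 x * K (x - y)) + ∫⁻ x, ∫⁻ y, S.indicator 1 y * K (x - y) := by
        rw [← lintegral_add_left]
        · congr 1; ext x
          rw [lintegral_add_left (by fun_prop)]
        · exact Measurable.lintegral_prod_right' (f := fun z : EE n × EE n => S.indicator 1 z.1 * K (z.1 - z.2)) (by fun_prop)
    _ = (∫⁻ x, ∫⁻ y, S.indicator 1 x * K (x - y)) + ∫⁻ y, ∫⁻ x, S.indicator 1 y * K (x - y) := by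
        congr 1
        exact lintegral_lintegral_swap (by fun_prop)
    _ = 2 * (volume S * ∫⁻ z, K z) := by
        have a1 : ∀ x, ∫⁻ y, S.indicator 1 x * K (x - y) = S.indicator 1 x * ∫⁻ z, K z := fun x => by
          rw [lintegral_const_mul _ (by fun_prop), e1]
        have a2 : ∀ y, ∫⁻ x, S.indicator 1 y * K (x - y) = S.indicator 1 y * ∫⁻ z, K z := fun y => by
          rw [lintegral_const_mul _ (by fun_prop), e2]
        simp only [a1, a2]
        rw [lintegral_mul_const _ hSm, lintegral_indicator_one hS]; ring
    _ < ⊤ := by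
      have := lt_top_iff_ne_top.mpr hSf
      finiteness

lemma scaled_eq {n : ℕ} (hn : 1 ≤ n) {p s : ℝ} (hp : 1 < p) (hs : 0 < s) (hs1 : s < 1) {Ω : Set (EE n)}
    {u f : EE n → ℝ} (hu : IsLocalWeakSolution n p s Ω f u) {x₀ : EE n} {R : ℝ} (hR : 0 < R)
    (hΩ : closedBall x₀ (2 * R) ⊆ Ω) (w : EE n → ℝ) (hw : ∃ L, LipschitzWith L w) 
    (hw0 : ∃ t < 2, ∀ x, t < ‖x‖ → w x = 0) :
    ∫ x, ∫ y, Jp p (u (x₀ + R • x) - u (x₀ + R • y)) * (w x - w y) / dist x y ^ ((n:ℝ) + s * p) = 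
      ∫ x, R ^ (s * p) * f (x₀ + R • x) * w x := by
  have hp0 : 0 < p := by linarith
  obtain ⟨L, hL⟩ := hw
  obtain ⟨t, ht, hwt⟩ := hw0
  set φ : EE n → ℝ := fun x => w (R⁻¹ • (x - x₀)) with hφ
  have hφw : ∀ x, φ (x₀ + R • x) = w x := fun x => by
    simp only [hφ]; rw [add_sub_cancel_left, smul_smul, inv_mul_cancel₀ hR.ne', one_smul]
  have hφ0 : ∀ x, x ∉ closedBall x₀ (2 * R) → φ x = 0 := by
    intro x hx
    apply hwt
    rw [mem_closedBall, dist_eq_norm, not_le] at hx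
    rw [norm_smul, norm_inv, Real.norm_of_nonneg hR.le, inv_mul_eq_div, lt_div_iff₀ hR]
    nlinarith
  have hφL : LipschitzWith (L * ‖R⁻¹‖₊) φ := by
    refine hL.comp (LipschitzWith.of_dist_le_mul fun x y => ?_)
    rw [dist_smul₀, dist_sub_right]; rfl
  have hφc : Continuous φ := hφL.continuous
  obtain ⟨B, hB⟩ : ∃ B : ℝ≥0, ∀ x, ‖φ x‖ₑ ≤ B := by
    obtain ⟨c, hc⟩ := (isCompact_closedBall x₀ (2 * R)).exists_bound_of_continuousOn hφc.continuousOn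
    refine ⟨c.toNNReal, fun x => ?_⟩
    by_cases hx : x ∈ closedBall x₀ (2 * R)
    · rw [← ofReal_norm]; exact ENNReal.ofReal_le_ofReal (hc x hx)
    · rw [hφ0 x hx]; simp
  have hvol : volume (closedBall x₀ (2 * R)) < ⊤ := measure_closedBall_lt_top
  have h := hu.2.2.2 φ hφc.measurable ⟨closedBall x₀ (2 * R), isCompact_closedBall _ _, hΩ, 
    Filter.Eventually.of_forall hφ0⟩ ?_ (gagl_lip hn hp hs hs1 hφL hB measurableSet_closedBall hvol.ne hφ0)
  · have hr : ∫ x in Ω, f x * φ x = ∫ x, f x * φ x := by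
      apply setIntegral_eq_integral_of_forall_compl_eq_zero
      intro x hx
      rw [hφ0 x (fun h => hx (hΩ h)), mul_zero]
    rw [hr, int_affine x₀ hR (fun x => f x * φ x), int_affine x₀ hR] at h
    simp only [hφw] at h
    have hin : ∀ x, ∫ y, |u (x₀ + R • x) - u y| ^ (p - 2) * (u (x₀ + R • x) - u y) * (w x - φ y) / 
        dist (x₀ + R • x) y ^ ((n:ℝ) + s * p) = R ^ (-(s * p)) * 
        ∫ y, Jp p (u (x₀ + R • x) - u (x₀ + R • y)) * (w x - w y) / dist x y ^ ((n:ℝ) + s * p) := by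
      intro x
      rw [int_affine x₀ hR]
      simp only [hφw]
      have : ∀ y, |u (x₀ + R • x) - u (x₀ + R • y)| ^ (p - 2) * (u (x₀ + R • x) - u (x₀ + R • y)) * (w x - w y) / 
        dist (x₀ + R • x) (x₀ + R • y) ^ ((n:ℝ) + s * p) = R ^ (-((n:ℝ) + s * p)) * 
          (Jp p (u (x₀ + R • x) - u (x₀ + R • y)) * (w x - w y) / dist x y ^ ((n:ℝ) + s * p)) := by
        intro y
        rw [dist_add_left, dist_smul₀, Real.norm_of_nonneg hR.le, Real.mul_rpow hR.le dist_nonneg, Real.rpow_neg hR.le]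
        unfold Jp
        rw [mul_comm (R ^ ((n:ℝ) + s * p)), ← div_div]; ring
      simp only [this]
      rw [integral_const_mul, ← mul_assoc, ← Real.rpow_add hR]
      congr 2; ring
    simp only [hin] at h
    rw [integral_const_mul] at h
    have hRn : R ^ (n:ℝ) ≠ 0 := by positivity
    have h' := mul_left_cancel₀ hRn h
    simp only [mul_assoc]
    rw [integral_const_mul, ← h', ← mul_assoc, ← Real.rpow_add hR]
    simp
  · simp only [enorm_rpow_eq hp0.le]
    have : ∀ x, ‖φ x‖ₑ ^ p ≤ (closedBall x₀ (2 * R)).indicator (fun _ => (B : ℝ≥0∞) ^ p) x := by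
      intro x
      by_cases hx : x ∈ closedBall x₀ (2 * R)
      · rw [indicator_of_mem hx]; exact ENNReal.rpow_le_rpow (hB x) hp0.le
      · rw [hφ0 x hx]; simp [hp0]
    refine (lintegral_mono this).trans_lt ?_
    rw [lintegral_indicator measurableSet_closedBall, setLIntegral_const]
    finiteness

end

section
open MeasureTheory Metric Set
open scoped ENNReal NNReal


/-- Powers of the radius as extended nonnegative reals. -/
def ER (R t : ℝ) : ℝ≥0∞ := ENNReal.ofReal (R ^ t)

lemma ER_mul {R : ℝ} (hR : 0 < R) (a b : ℝ) : ER R a * ER R b = ER R (a + b) := by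
  unfold ER; rw [← ENNReal.ofReal_mul (by positivity), ← Real.rpow_add hR]

lemma ER_pow {R : ℝ} (hR : 0 < R) (a q : ℝ) : ER R a ^ q = ER R (a * q) := by
  unfold ER; rw [ENNReal.ofReal_rpow_of_pos (by positivity), ← Real.rpow_mul hR.le]

lemma ER_zero {R : ℝ} : ER R 0 = 1 := by simp [ER]

lemma ER_ne_top {R a : ℝ} : ER R a ≠ ⊤ := by simp [ER]

lemma lint_set {n : ℕ} (x₀ : EE n) {R : ℝ} (hR : 0 < R) {S S' : Set (EE n)} (hS : MeasurableSet S)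
    (hS' : MeasurableSet S') (h : ∀ x, x₀ + R • x ∈ S ↔ x ∈ S') (g : EE n → ℝ≥0∞) :
    ∫⁻ x in S', g (x₀ + R • x) = ER R (-n) * ∫⁻ x in S, g x := by
  rw [← lintegral_indicator hS, ← lintegral_indicator hS', ← lint_affine x₀ hR (S.indicator g), ← mul_assoc]
  change _ = ER R (-n) * ER R n * _
  rw [ER_mul hR, neg_add_cancel, ER_zero, one_mul]
  congr 1; ext x
  by_cases hx : x ∈ S'
  · rw [indicator_of_mem hx, indicator_of_mem ((h x).mpr hx)]
  · rw [indicator_of_notMem hx, indicator_of_notMem (fun hh => hx ((h x).mp hh))]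

lemma mem_ball_affine {n : ℕ} (x₀ : EE n) {R : ℝ} (hR : 0 < R) (c : ℝ) (x : EE n) :
    x₀ + R • x ∈ ball x₀ (c * R) ↔ x ∈ ball (0 : EE n) c := by
  rw [mem_ball, dist_self_add_left, norm_smul, Real.norm_of_nonneg hR.le, mem_ball_zero_iff, mul_comm]
  exact mul_lt_mul_iff_left₀ hR

lemma KK_smul {n : ℕ} {R : ℝ} (hR : 0 < R) (a : ℝ) (z : EE n) : KK a (R • z) = ER R (-a) * KK a z := by
  unfold KK ER
  rw [norm_smul, Real.norm_of_nonneg hR.le, Real.mul_rpow hR.le (norm_nonneg _), ENNReal.ofReal_mul (by positivity)]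

lemma avg_affine {n : ℕ} (x₀ : EE n) {R : ℝ} (hR : 0 < R) (u : EE n → ℝ) :
    ⨍ y in ball (0 : EE n) 2, u (x₀ + R • y) = ⨍ y in ball x₀ (2 * R), u y := by
  have hi : ∫ y in ball x₀ (2 * R), u y = R ^ (n:ℝ) * ∫ y in ball (0 : EE n) 2, u (x₀ + R • y) := by
    rw [← integral_indicator measurableSet_ball, ← integral_indicator measurableSet_ball, int_affine x₀ hR]
    congr 2; ext x
    by_cases hx : x ∈ ball (0 : EE n) 2
    · rw [indicator_of_mem hx, indicator_of_mem ((mem_ball_affine x₀ hR 2 x).mpr hx)]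
    · rw [indicator_of_notMem hx, indicator_of_notMem (fun hh => hx ((mem_ball_affine x₀ hR 2 x).mp hh))]
  have hv : volume.real (ball x₀ (2 * R)) = R ^ (n:ℝ) * volume.real (ball (0 : EE n) 2) := by
    rw [mul_comm 2 R, measureReal_def, Measure.addHaar_ball_mul_of_pos volume x₀ hR, ENNReal.toReal_mul,
      finrank_euclideanSpace_fin, ENNReal.toReal_ofReal (by positivity), Real.rpow_natCast, measureReal_def]
  have : R ^ (n:ℝ) ≠ 0 := by positivity
  rw [setAverage_eq, setAverage_eq, hi, hv, mul_inv, smul_eq_mul, smul_eq_mul]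
  field_simp

lemma grad_affine {n : ℕ} (x₀ : EE n) {R : ℝ} (hR : 0 < R) (u : EE n → ℝ) (x : EE n) :
    ‖gradient (fun y => u (x₀ + R • y)) x‖ₑ = ER R 1 * ‖gradient u (x₀ + R • x)‖ₑ := by
  have h : fderiv ℝ (fun y => u (x₀ + R • y)) x = R • fderiv ℝ u (x₀ + R • x) := by
    have := fderiv_comp_smul (f := fun y => u (x₀ + y)) (x := x) R
    rw [this, fderiv_comp_add_left]
  unfold gradient
  rw [LinearIsometryEquiv.enorm_map, LinearIsometryEquiv.enorm_map, h, enorm_smul, ER, Real.rpow_one,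
    Real.enorm_eq_ofReal hR.le]

lemma scaled_est {n : ℕ} (hn : 1 ≤ n) {p s : ℝ} (hp : 1 < p) (hs : 0 < s) (hs1 : s < 1) (hsp : p - 1 < s * p) :
    ∃ C : ℝ≥0, ∀ (Ω : Set (EE n)) (u f : EE n → ℝ), IsOpen Ω → Measurable f →
      IsLocalWeakSolution n p s Ω f u → ContDiffOn ℝ 1 u Ω → ∀ (x₀ : EE n) (R : ℝ), 0 < R →
      closedBall x₀ (2 * R) ⊆ Ω → ∀ Y : ℝ≥0∞, Y ≠ ⊤ → 
      ER R s * gagliardoE n s p (ball x₀ (2 * R)) u ^ (1 / p) ≤ Y → 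
      ER R ((n : ℝ) / p) * tailE n s p (fun x => u x - ⨍ y in ball x₀ (2 * R), u y) x₀ (2 * R) ≤ Y → 
      ER R (s * (p / (p - 1))) * (∫⁻ x in ball x₀ (2 * R), ‖f x‖ₑ ^ (p / (p - 1))) ^ (1 / p) ≤ Y → 
      (∫⁻ x in ball x₀ R, ‖gradient u x‖ₑ ^ p) ^ (1 / p) ≤ C * ER R (-1) * Y := by
  have hp0 : 0 < p := by linarith
  have hp1 : 0 < p - 1 := by linarith
  obtain ⟨C1, h1⟩ := mk_dat (n := n) hp hs
  obtain ⟨C2, h2⟩ := unit_est hn hp hs hs1 hsp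
  refine ⟨C2 * C1, fun Ω u f hΩ fm hu hC x₀ R hR hΩ2 Y hY hYG hYT hYF => ?_⟩
  have hX : ER R (-(n / p)) * Y ≠ ⊤ := ENNReal.mul_ne_top ER_ne_top hY
  set X : ℝ≥0 := (ER R (-(n / p)) * Y).toNNReal with hXd
  have hXe : (X : ℝ≥0∞) = ER R (-(n / p)) * Y := ENNReal.coe_toNNReal hX
  set m := ⨍ y in ball x₀ (2 * R), u y with hm
  have um := hu.1
  set v : EE n → ℝ := fun x => u (x₀ + R • x) with hv
  set g : EE n → ℝ := fun x => R ^ (s * p) * f (x₀ + R • x) with hg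
  set Ω' : Set (EE n) := (fun x => x₀ + R • x) ⁻¹' Ω with hΩ'
  have hsub : closedBall (0 : EE n) 2 ⊆ Ω' := by
    intro x hx
    apply hΩ2
    rw [mem_closedBall, dist_self_add_left, norm_smul, Real.norm_of_nonneg hR.le, mul_comm]
    rw [mem_closedBall_zero_iff] at hx
    gcongr
  have hCv : ContDiffOn ℝ 1 v Ω' := hC.comp (by fun_prop) (fun x hx => hx)
  have hO : IsOpen Ω' := hΩ.preimage (by fun_prop)
  have hvi : IntegrableOn v (ball 0 2) :=
    ((hCv.continuousOn.mono hsub).integrableOn_compact (isCompact_closedBall _ _)).mono_set ball_subset_closedBall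
  have hmm : ⨍ y in ball (0 : EE n) 2, v y = m := avg_affine x₀ hR u
  have D := h1 v g X (by fun_prop) (by fun_prop) hvi ?_ ?_ ?_ (scaled_eq hn hp hs hs1 hu hR hΩ2)
  · have h := h2 Ω' v g _ _ D hO hCv hsub
    unfold NN at h
    have hgr := lint_set x₀ hR measurableSet_ball measurableSet_ball (mem_ball_affine x₀ hR 1) (fun x => ‖gradient u x‖ₑ ^ p)
    rw [one_mul] at hgr
    have e : ∀ x, ‖gradient v x‖ₑ ^ p = ER R p * ‖gradient u (x₀ + R • x)‖ₑ ^ p := fun x => by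
      rw [hv, grad_affine x₀ hR, ENNReal.mul_rpow_of_nonneg _ _ hp0.le, ER_pow hR, one_mul]
    simp only [e] at h
    rw [lintegral_const_mul' _ _ ER_ne_top, hgr, ← mul_assoc, ER_mul hR, 
      ENNReal.mul_rpow_of_nonneg _ _ (by positivity), ER_pow hR] at h
    have h' := mul_le_mul' (le_refl (ER R (-((p + -n) * (1 / p))))) h
    rw [← mul_assoc, ER_mul hR, neg_add_cancel, ER_zero, one_mul] at h'
    refine h'.trans (le_of_eq ?_)
    push_cast
    rw [hXe]
    have : ER R (-1) = ER R (-((p + -n) * (1 / p))) * ER R (-(n/p)) := by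
      rw [ER_mul hR]; congr 1; field_simp; ring
    rw [this]; ring
  · have hin : ∀ x, ∫⁻ y in ball (0 : EE n) 2, ‖v x - v y‖ₑ ^ p * KK (n + s * p) (x - y) = 
        ER R (s * p) * ∫⁻ y in ball x₀ (2 * R), ‖u (x₀ + R • x) - u y‖ₑ ^ p * KK (n + s * p) (x₀ + R • x - y) := by
      intro x
      have := lint_set x₀ hR measurableSet_ball measurableSet_ball (mem_ball_affine x₀ hR 2) 
        (fun y => ‖u (x₀ + R • x) - u y‖ₑ ^ p * KK (n + s * p) (x₀ + R • x - y))
      have e : ∀ y, x₀ + R • x - (x₀ + R • y) = R • (x - y) := fun y => by rw [smul_sub]; abel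
      simp only [e, KK_smul hR] at this
      have e3 : s * p = (n + s * p) + (-n) := by ring
      nth_rw 2 [e3]
      rw [← ER_mul hR, mul_assoc, ← this, ← lintegral_const_mul' _ _ ER_ne_top]
      congr 1; ext y
      rw [mul_left_comm (_ ^ p), ← mul_assoc (ER R _), ER_mul hR, add_neg_cancel, ER_zero, one_mul]
    simp only [hin]
    rw [lintegral_const_mul' _ _ ER_ne_top, lint_set x₀ hR measurableSet_ball measurableSet_ball (mem_ball_affine x₀ hR 2) 
        (fun x => ∫⁻ y in ball x₀ (2 * R), ‖u x - u y‖ₑ ^ p * KK (n + s * p) (x - y)), ← gagl_eq hp0.le, hXe]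
    refine le_trans (le_of_eq ?_) (ENNReal.rpow_le_rpow (mul_le_mul' le_rfl hYG) hp0.le)
    rw [← mul_assoc, ← mul_assoc, ER_mul hR, ER_mul hR, ENNReal.mul_rpow_of_nonneg _ _ hp0.le, ER_pow hR, ← ENNReal.rpow_mul,
      one_div_mul_cancel hp0.ne', ENNReal.rpow_one]
    congr 2; field_simp; ring
  · rw [hmm]
    have := lint_set x₀ hR measurableSet_ball.compl measurableSet_ball.compl 
        (fun x => not_congr (mem_ball_affine x₀ hR 2 x)) 
        (fun y => ‖u y - m‖ₑ ^ (p - 1) * KK (n + s * p) (y - x₀))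
    simp only [add_sub_cancel_left, KK_smul hR] at this
    have e : ∀ x, ‖v x - m‖ₑ ^ (p - 1) * KK (n + s * p) x = 
        ER R (n + s * p) * (‖u (x₀ + R • x) - m‖ₑ ^ (p - 1) * (ER R (-(n + s * p)) * KK (n + s * p) x)) := fun x => by
      rw [mul_left_comm (_ ^ (p - 1)), ← mul_assoc (ER R _), ER_mul hR, add_neg_cancel, ER_zero, one_mul]
    simp only [e]
    rw [lintegral_const_mul' _ _ ER_ne_top, this, hXe]
    refine le_trans ?_ (ENNReal.rpow_le_rpow (mul_le_mul' le_rfl hYT) hp1.le)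
    unfold tailE
    simp only [ofReal_div_dist hp1.le]
    rw [← mul_assoc, ← mul_assoc, ER_mul hR, ER_mul hR, neg_add_cancel, ER_zero, one_mul, ← ENNReal.rpow_mul,
      one_div_mul_cancel hp1.ne', ENNReal.rpow_one]
    refine mul_le_mul' ?_ le_rfl
    unfold ER
    apply ENNReal.ofReal_le_ofReal
    have : (n:ℝ) + s * p + -n = s * p := by ring
    rw [this]
    exact Real.rpow_le_rpow hR.le (by linarith) (by positivity)
  · have e : ∀ x, ‖g x‖ₑ ^ (p / (p - 1)) = ER R (s * p * (p / (p - 1))) * ‖f (x₀ + R • x)‖ₑ ^ (p / (p - 1)) := fun x => by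
      rw [hg, enorm_mul, ENNReal.mul_rpow_of_nonneg _ _ (by positivity), Real.enorm_eq_ofReal (by positivity), ← ER_pow hR]
      rfl
    simp only [e]
    rw [lintegral_const_mul' _ _ ER_ne_top, lint_set x₀ hR measurableSet_ball measurableSet_ball (mem_ball_affine x₀ hR 2) 
        (fun x => ‖f x‖ₑ ^ (p / (p - 1))), hXe]
    refine le_trans (le_of_eq ?_) (ENNReal.rpow_le_rpow (mul_le_mul' le_rfl hYF) hp0.le)
    rw [← mul_assoc, ← mul_assoc, ER_mul hR, ER_mul hR, ENNReal.mul_rpow_of_nonneg _ _ hp0.le, ER_pow hR, ← ENNReal.rpow_mul,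
      one_div_mul_cancel hp0.ne', ENNReal.rpow_one]
    congr 2; field_simp; ring

end

theorem gradient_Lp_estimate (n : ℕ) (p s : ℝ) (hp : 1 < p)
    (hs₁ : 0 < s) (hs₂ : s < 1) (hsp : 1 < s * (p / (p - 1))) :
    ∃ c : ℝ, 0 < c ∧
      ∀ (Ω : Set (EuclideanSpace ℝ (Fin n))) (u f : EuclideanSpace ℝ (Fin n) → ℝ),
        IsOpen Ω → Bornology.IsBounded Ω →
        MemLploc n (p / (p - 1)) Ω f →
        IsLocalWeakSolution n p s Ω f u →
        ContDiffOn ℝ 1 u Ω →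
        ∀ (x₀ : EuclideanSpace ℝ (Fin n)) (R : ℝ), 0 < R →
          closedBall x₀ (2 * R) ⊆ Ω →
          (∫⁻ x in ball x₀ R, ENNReal.ofReal (‖gradient u x‖ ^ p)) ^ (1 / p) ≤
            ENNReal.ofReal (c / R) *
              (ENNReal.ofReal (R ^ s) * gagliardoE n s p (ball x₀ (2 * R)) u ^ (1 / p) +
                ENNReal.ofReal (R ^ ((n : ℝ) / p)) *
                  tailE n s p (fun x => u x - ⨍ y in ball x₀ (2 * R), u y) x₀ (2 * R) +
                ENNReal.ofReal (R ^ (s * (p / (p - 1)))) *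
                  ((∫⁻ x in ball x₀ (2 * R),
                      ENNReal.ofReal (|f x| ^ (p / (p - 1)))) ^ ((p - 1) / p)) ^
                    (1 / (p - 1))) := by
  have hp0 : 0 < p := by linarith
  have hp1 : 0 < p - 1 := by linarith
  have hsp2 : p - 1 < s * p := by
    rw [← mul_div_assoc, lt_div_iff₀ hp1] at hsp
    linarith
  rcases Nat.eq_zero_or_pos n with hn | hn
  · subst hn
    refine ⟨1, one_pos, fun Ω u f _ _ _ _ _ x₀ R _ _ => ?_⟩
    have h0 : ∀ x : EuclideanSpace ℝ (Fin 0), gradient u x = 0 := fun x => Subsingleton.elim _ _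
    have hz : (∫⁻ x in ball x₀ R, ENNReal.ofReal (‖gradient u x‖ ^ p)) ^ (1 / p) = 0 := by
      simp only [h0, norm_zero, Real.zero_rpow hp0.ne', ENNReal.ofReal_zero, lintegral_zero]
      exact ENNReal.zero_rpow_of_pos (by positivity)
    rw [hz]
    exact bot_le
  · obtain ⟨C, hC⟩ := scaled_est hn hp hs₁ hs₂ hsp2
    refine ⟨C + 1, by positivity, fun Ω u f hΩ _ hf hu hc x₀ R hR hΩ2 => ?_⟩
    set Y := (ENNReal.ofReal (R ^ s) * gagliardoE n s p (ball x₀ (2 * R)) u ^ (1 / p) +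
                ENNReal.ofReal (R ^ ((n : ℝ) / p)) *
                  tailE n s p (fun x => u x - ⨍ y in ball x₀ (2 * R), u y) x₀ (2 * R) +
                ENNReal.ofReal (R ^ (s * (p / (p - 1)))) *
                  ((∫⁻ x in ball x₀ (2 * R),
                      ENNReal.ofReal (|f x| ^ (p / (p - 1)))) ^ ((p - 1) / p)) ^
                    (1 / (p - 1))) with hYd
    have hcR : 0 < ((C : ℝ) + 1) / R := by positivity
    by_cases hY : Y = ⊤
    · rw [hY, ENNReal.mul_top (by simpa using hcR)]
      exact le_top
    · have h := hC Ω u f hΩ hf.1 hu hc x₀ R hR hΩ2 Y hY (le_self_add.trans le_self_add)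
        (le_add_self.trans le_self_add) ?_
      · have e : ∀ x, ENNReal.ofReal (‖gradient u x‖ ^ p) = ‖gradient u x‖ₑ ^ p := fun x => by
          rw [← ofReal_norm, ENNReal.ofReal_rpow_of_nonneg (norm_nonneg _) hp0.le]
        simp only [e]
        refine h.trans (mul_le_mul' ?_ le_rfl)
        have e2 : (C : ENNReal) = ENNReal.ofReal (C : ℝ) := (ENNReal.ofReal_coe_nnreal).symm
        unfold ER
        rw [e2, ← ENNReal.ofReal_mul (by positivity), Real.rpow_neg_one, ← div_eq_mul_inv]
        apply ENNReal.ofReal_le_ofReal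
        gcongr
        linarith
      · refine le_trans (le_of_eq ?_) le_add_self
        have hq : 0 ≤ p / (p - 1) := by positivity
        simp only [enorm_rpow_eq hq]
        rw [← ENNReal.rpow_mul]
        have e3 : (p - 1) / p * (1 / (p - 1)) = 1 / p := by field_simp
        rw [e3]
        rfl
end
end

section
/- For any γ>0 and all a,b∈ℝ one has C₁(|a|+|b|)^{γ−1}|b−a| ≤ |𝐛^γ − 𝐚^γ| ≤ C₂(|a|+|b|)^{γ−1}|b−a|, where C₁ = γ if γ∈(0,1] and C₁ = 2^{1−γ} if γ∈[1,∞), and C₂ = 2^{1−γ} if γ∈(0,1] and C₂ = γ if γ∈[1,∞). -/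
open MeasureTheory Metric Set
open scoped ENNReal

noncomputable section

theorem sgnPow_nn (γ : ℝ) (hγ : 0 < γ) (x : ℝ) (hx : 0 ≤ x) : sgnPow γ x = x ^ γ := by
  unfold sgnPow
  rcases hx.eq_or_lt with h | h
  · subst h; simp [hγ.ne']
  · rw [abs_of_pos h, Real.rpow_sub_one h.ne']; field_simp

theorem sgnPow_neg' (γ x : ℝ) : sgnPow γ (-x) = - sgnPow γ x := by
  unfold sgnPow; simp

/-- Bernoulli in homogeneous form. -/
theorem bern_ge (γ : ℝ) (hγ : 1 ≤ γ) (x y : ℝ) (hx : 0 < x) (hy : 0 ≤ y) :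
    x ^ γ - y ^ γ ≤ γ * x ^ (γ - 1) * (x - y) := by
  have h := one_add_mul_self_le_rpow_one_add (s := y / x - 1)
    (by have : 0 ≤ y / x := by positivity
        linarith) hγ
  rw [add_sub_cancel, Real.div_rpow hy hx.le, le_div_iff₀ (by positivity)] at h
  have e : x ^ γ = x ^ (γ - 1) * x := by rw [Real.rpow_sub_one hx.ne']; field_simp
  have e2 : (1 + γ * (y / x - 1)) * x ^ γ = x ^ γ - γ * x ^ (γ - 1) * (x - y) := by
    rw [e]; field_simp; ring
  linarith

theorem bern_le (γ : ℝ) (hγ0 : 0 < γ) (hγ : γ ≤ 1) (x y : ℝ) (hx : 0 < x) (hy : 0 ≤ y) :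
    γ * x ^ (γ - 1) * (x - y) ≤ x ^ γ - y ^ γ := by
  have h := rpow_one_add_le_one_add_mul_self (s := y / x - 1)
    (by have : 0 ≤ y / x := by positivity
        linarith) hγ0.le hγ
  rw [add_sub_cancel, Real.div_rpow hy hx.le, div_le_iff₀ (by positivity)] at h
  have e : x ^ γ = x ^ (γ - 1) * x := by rw [Real.rpow_sub_one hx.ne']; field_simp
  have e2 : (1 + γ * (y / x - 1)) * x ^ γ = x ^ γ - γ * x ^ (γ - 1) * (x - y) := by
    rw [e]; field_simp; ring
  linarith

theorem pow_split (γ x : ℝ) (hx : 0 < x) : x ^ γ = x ^ (γ - 1) * x := by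
  rw [Real.rpow_sub_one hx.ne']; field_simp

theorem half_pow (γ s : ℝ) (hs : 0 < s) :
    (2 : ℝ) ^ (1 - γ) * s ^ (γ - 1) = (s / 2) ^ (γ - 1) := by
  rw [Real.div_rpow hs.le (by norm_num), show 1 - γ = -(γ - 1) by ring,
    Real.rpow_neg (by norm_num)]
  field_simp

theorem core (γ : ℝ) (hγ : 0 < γ) (x y : ℝ) (hx : 0 < x) (hy : 0 ≤ y) (hyx : y ≤ x) :
    ((if γ ≤ 1 then γ else (2 : ℝ) ^ (1 - γ)) * (y + x) ^ (γ - 1) * (x - y) ≤ x ^ γ - y ^ γ ∧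
      x ^ γ - y ^ γ ≤ (if γ ≤ 1 then (2 : ℝ) ^ (1 - γ) else γ) * (y + x) ^ (γ - 1) * (x - y)) ∧
    ((if γ ≤ 1 then γ else (2 : ℝ) ^ (1 - γ)) * (y + x) ^ (γ - 1) * (x + y) ≤ x ^ γ + y ^ γ ∧
      x ^ γ + y ^ γ ≤ (if γ ≤ 1 then (2 : ℝ) ^ (1 - γ) else γ) * (y + x) ^ (γ - 1) * (x + y)) := by
  have hs : 0 < y + x := by linarith
  have hd : 0 ≤ x - y := by linarith
  have ex := pow_split γ x hx
  have es := pow_split γ (y + x) hs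
  have em := pow_split γ ((y + x) / 2) (by positivity)
  have hh := half_pow γ (y + x) hs
  have hpos : 0 < (y + x) ^ γ := by positivity
  split_ifs with h
  · have hmul : x ^ γ - y ^ γ ≤ x ^ (γ - 1) * (x - y) := by
      rcases hy.eq_or_lt with h0 | h0
      · subst h0; simp [hγ.ne', ex]
      · have := Real.rpow_le_rpow_of_nonpos h0 hyx (by linarith : γ - 1 ≤ 0)
        have ey := pow_split γ y h0
        nlinarith
    have b := bern_le γ hγ h x y hx hy
    have m1 := Real.rpow_le_rpow_of_nonpos hx (by linarith : x ≤ y + x) (by linarith : γ - 1 ≤ 0)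
    have m2 := Real.rpow_le_rpow_of_nonpos (by linarith : 0 < (y + x) / 2)
      (by linarith : (y + x) / 2 ≤ x) (by linarith : γ - 1 ≤ 0)
    refine ⟨⟨le_trans (by gcongr) b, ?_⟩, ?_, ?_⟩
    · rw [hh]; exact hmul.trans (by gcongr)
    · have := Real.rpow_add_le_add_rpow hy hx.le hγ.le h
      rw [mul_assoc, add_comm x y, ← es]
      nlinarith
    · have c := (Real.concaveOn_rpow hγ.le h).2 (mem_Ici.2 hx.le) (mem_Ici.2 hy)
        (by norm_num : (0:ℝ) ≤ 1/2) (by norm_num : (0:ℝ) ≤ 1/2) (by norm_num)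
      simp only [smul_eq_mul] at c
      rw [show 1/2*x+1/2*y = (y+x)/2 by ring] at c
      rw [hh]
      nlinarith
  · have h1 : 1 ≤ γ := by linarith
    have hmul : x ^ (γ - 1) * (x - y) ≤ x ^ γ - y ^ γ := by
      rcases hy.eq_or_lt with h0 | h0
      · subst h0; simp [hγ.ne', ex]
      · have := Real.rpow_le_rpow h0.le hyx (by linarith : 0 ≤ γ - 1)
        have ey := pow_split γ y h0
        nlinarith
    have b := bern_ge γ h1 x y hx hy
    have m1 := Real.rpow_le_rpow hx.le (by linarith : x ≤ y + x) (by linarith : 0 ≤ γ - 1)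
    have m2 := Real.rpow_le_rpow (by linarith : 0 ≤ (y + x) / 2)
      (by linarith : (y + x) / 2 ≤ x) (by linarith : 0 ≤ γ - 1)
    refine ⟨⟨?_, b.trans (by gcongr)⟩, ?_, ?_⟩
    · rw [hh]; exact le_trans (by gcongr) hmul
    · have c := (convexOn_rpow h1).2 (mem_Ici.2 hx.le) (mem_Ici.2 hy)
        (by norm_num : (0:ℝ) ≤ 1/2) (by norm_num : (0:ℝ) ≤ 1/2) (by norm_num)
      simp only [smul_eq_mul] at c
      rw [show 1/2*x+1/2*y = (y+x)/2 by ring] at c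
      rw [hh]
      nlinarith
    · have := Real.add_rpow_le_rpow_add hy hx.le h1
      rw [mul_assoc, add_comm x y, ← es]
      nlinarith

theorem half_case (γ : ℝ) (hγ : 0 < γ) (a b : ℝ) (hab : |a| ≤ |b|) (hb : 0 ≤ b) :
    (if γ ≤ 1 then γ else (2 : ℝ) ^ (1 - γ)) * (|a| + |b|) ^ (γ - 1) * |b - a| ≤
        |sgnPow γ b - sgnPow γ a| ∧
      |sgnPow γ b - sgnPow γ a| ≤
        (if γ ≤ 1 then (2 : ℝ) ^ (1 - γ) else γ) * (|a| + |b|) ^ (γ - 1) * |b - a| := by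
  rcases hb.eq_or_lt with h | h
  · subst h
    have : a = 0 := by simpa using hab
    subst this; simp
  rw [abs_of_pos h] at hab ⊢
  obtain ⟨c1, c2⟩ := core γ hγ b |a| h (abs_nonneg a) hab
  have hp := Real.rpow_le_rpow (abs_nonneg a) hab hγ.le
  rcases le_total 0 a with ha | ha
  · rw [abs_of_nonneg ha] at *
    rw [sgnPow_nn γ hγ b hb, sgnPow_nn γ hγ a ha, abs_of_nonneg (by linarith : 0 ≤ b - a),
      abs_of_nonneg (by linarith : 0 ≤ b ^ γ - a ^ γ)]
    exact c1
  · obtain ⟨y, rfl⟩ : ∃ y, a = -y := ⟨-a, by simp⟩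
    have hy : 0 ≤ y := by linarith
    rw [abs_neg, abs_of_nonneg hy] at *
    have : 0 ≤ b ^ γ + y ^ γ := by positivity
    rw [sgnPow_neg', sgnPow_nn γ hγ b hb, sgnPow_nn γ hγ y hy, sub_neg_eq_add, sub_neg_eq_add,
      abs_of_nonneg (by linarith : 0 ≤ b + y), abs_of_nonneg this]
    exact c2

theorem half_case2 (γ : ℝ) (hγ : 0 < γ) (a b : ℝ) (hab : |a| ≤ |b|) :
    (if γ ≤ 1 then γ else (2 : ℝ) ^ (1 - γ)) * (|a| + |b|) ^ (γ - 1) * |b - a| ≤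
        |sgnPow γ b - sgnPow γ a| ∧
      |sgnPow γ b - sgnPow γ a| ≤
        (if γ ≤ 1 then (2 : ℝ) ^ (1 - γ) else γ) * (|a| + |b|) ^ (γ - 1) * |b - a| := by
  rcases le_total 0 b with h | h
  · exact half_case γ hγ a b hab h
  · have := half_case γ hγ (-a) (-b) (by simpa using hab) (by linarith)
    rw [sgnPow_neg', sgnPow_neg', abs_neg, abs_neg, neg_sub_neg, neg_sub_neg, abs_sub_comm a b,
      abs_sub_comm (sgnPow γ a)] at this
    exact this

theorem sgnPow_diff_bounds (γ : ℝ) (hγ : 0 < γ) (a b : ℝ) :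
    (if γ ≤ 1 then γ else (2 : ℝ) ^ (1 - γ)) * (|a| + |b|) ^ (γ - 1) * |b - a| ≤
        |sgnPow γ b - sgnPow γ a| ∧
      |sgnPow γ b - sgnPow γ a| ≤
        (if γ ≤ 1 then (2 : ℝ) ^ (1 - γ) else γ) * (|a| + |b|) ^ (γ - 1) * |b - a| := by
  rcases le_total |a| |b| with h | h
  · exact half_case2 γ hγ a b h
  · have := half_case2 γ hγ b a h
    rw [abs_sub_comm a b, abs_sub_comm (sgnPow γ a), add_comm |b|] at this
    exact this
end
end

section
/- Let n∈ℕ, γ∈[1,∞), K>0 and α∈[γ,∞). Then for all a,b∈ℝⁿ with |a| ≥ K one has |a|^γ ≤ 2^γ |a−b|^γ + 2^{α−1} K^{γ−α} |b|^α. -/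
open MeasureTheory Metric Set
open scoped ENNReal

noncomputable section

theorem norm_rpow_le_superlevel (n : ℕ) (γ K α : ℝ) (hγ : 1 ≤ γ) (hK : 0 < K) (hα : γ ≤ α)
    (a b : EuclideanSpace ℝ (Fin n)) (ha : K ≤ ‖a‖) :
    ‖a‖ ^ γ ≤ (2 : ℝ) ^ γ * ‖a - b‖ ^ γ + (2 : ℝ) ^ (α - 1) * K ^ (γ - α) * ‖b‖ ^ α := by
  have hA : 0 < ‖a‖ := lt_of_lt_of_le hK ha
  have htri : ‖a‖ ≤ ‖a - b‖ + ‖b‖ := by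
    simpa using norm_add_le (a - b) b
  have hD := norm_nonneg (a - b)
  have hB := norm_nonneg b
  rcases le_total (2 * ‖b‖) ‖a‖ with h | h
  · have h1 : ‖a‖ ^ γ ≤ (2 * ‖a - b‖) ^ γ :=
      Real.rpow_le_rpow hA.le (by linarith) (by linarith)
    rw [Real.mul_rpow (by norm_num) hD] at h1
    have h2 : 0 ≤ (2 : ℝ) ^ (α - 1) * K ^ (γ - α) * ‖b‖ ^ α := by positivity
    linarith
  · have hBp : 0 < ‖b‖ := by linarith
    have h1 : ‖a‖ ^ γ ≤ (‖a - b‖ + ‖b‖) ^ γ :=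
      Real.rpow_le_rpow hA.le htri (by linarith)
    have h2 : (‖a - b‖ + ‖b‖) ^ γ ≤ 2 ^ (γ - 1) * (‖a - b‖ ^ γ + ‖b‖ ^ γ) := by
      have := NNReal.rpow_add_le_mul_rpow_add_rpow ‖a - b‖₊ ‖b‖₊ hγ
      exact_mod_cast this
    have h3 : (2 : ℝ) ^ (γ - 1) ≤ 2 ^ γ :=
      Real.rpow_le_rpow_of_exponent_le (by norm_num) (by linarith)
    have h4 : (2 : ℝ) ^ (γ - 1) * ‖b‖ ^ γ ≤ 2 ^ (α - 1) * K ^ (γ - α) * ‖b‖ ^ α := by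
      have h5 : K ^ (α - γ) ≤ 2 ^ (α - γ) * ‖b‖ ^ (α - γ) := by
        rw [← Real.mul_rpow (by norm_num) hB]
        exact Real.rpow_le_rpow hK.le (by linarith) (by linarith)
      have e1 : (2 : ℝ) ^ (α - 1) = 2 ^ (γ - 1) * 2 ^ (α - γ) := by
        rw [← Real.rpow_add (by norm_num)]; congr 1; ring
      have e2 : ‖b‖ ^ α = ‖b‖ ^ γ * ‖b‖ ^ (α - γ) := by
        rw [← Real.rpow_add hBp]; congr 1; ring
      have e3 : K ^ (γ - α) * K ^ (α - γ) = 1 := by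
        rw [← Real.rpow_add hK]; simp
      rw [e1, e2]
      calc (2 : ℝ) ^ (γ - 1) * ‖b‖ ^ γ
          = 2 ^ (γ - 1) * ‖b‖ ^ γ * (K ^ (γ - α) * K ^ (α - γ)) := by rw [e3, mul_one]
        _ ≤ 2 ^ (γ - 1) * ‖b‖ ^ γ * (K ^ (γ - α) * (2 ^ (α - γ) * ‖b‖ ^ (α - γ))) := by
            gcongr
        _ = _ := by ring
    have h6 : (2 : ℝ) ^ (γ - 1) * ‖a - b‖ ^ γ ≤ 2 ^ γ * ‖a - b‖ ^ γ := by gcongr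
    linarith
end
end
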